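/- arXiv:2406.06268 — 3 statements merged into one kernel-verified Lean document; each statement's English description precedes it below -/
import Mathlib

section
/- Let m₁ ≥ 1 and m₂ ≥ 0 be integers, n = m₁ + m₂ + 1, ρ = (m₁ + 2m₂)/2, and let ν_c be the measure |c(λ)|^{−2} dλ on ℝ, where c(λ) = 2^{ρ−iλ} Γ((m₁+m₂+1)/2) Γ(iλ) / ( Γ((ρ+iλ)/2) Γ((m₁+2)/4 + iλ/2) ). Let σ > 0 and u_σ(λ) = |λ|^{−σ}. Then there exist constants C₁, C₂ > 0 (depending on m₁, m₂, σ) such that the non-increasing rearrangement u_σ* of u_σ with respect to ν_c satisfies C₁ t^{−σ/3} ≤ u_σ*(t) ≤ C₂ t^{−σ/3} for 0 < t ≤ 1, and C₁ t^{−σ/n} ≤ u_σ*(t) ≤ C₂ t^{−σ/n} for t > 1. -/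
open MeasureTheory Set ENNReal

/-- The half-sum of positive roots `ρ = (m₁ + 2m₂)/2`. -/
noncomputable def ρ₀ (m₁ m₂ : ℕ) : ℝ := ((m₁ : ℝ) + 2 * m₂) / 2

/-- The Harish-Chandra `c`-function. -/
noncomputable def cHC (m₁ m₂ : ℕ) (lam : ℝ) : ℂ :=
  (2 : ℂ) ^ ((ρ₀ m₁ m₂ : ℂ) - Complex.I * lam) *
      Complex.Gamma (((m₁ : ℂ) + m₂ + 1) / 2) * Complex.Gamma (Complex.I * lam) /
    (Complex.Gamma (((ρ₀ m₁ m₂ : ℂ) + Complex.I * lam) / 2) *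
      Complex.Gamma (((m₁ : ℂ) + 2) / 4 + Complex.I * lam / 2))

/-- The Plancherel density `|c(λ)|⁻²`. -/
noncomputable def densHC (m₁ m₂ : ℕ) (lam : ℝ) : ℝ := ‖cHC m₁ m₂ lam‖ ^ (-2 : ℤ)

/-- The Plancherel measure `ν_c = |c(λ)|⁻² dλ` on `ℝ`. -/
noncomputable def νc (m₁ m₂ : ℕ) : Measure ℝ :=
  volume.withDensity (fun lam => ENNReal.ofReal (densHC m₁ m₂ lam))

/-- The non-increasing rearrangement of `f` with respect to `μ`:
`f*(t) = inf {α : μ({x : |f x| > α}) ≤ t}`. -/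
noncomputable def rearr {X : Type*} [MeasurableSpace X] (μ : Measure X)
    (f : X → ℝ) (t : ℝ) : ℝ≥0∞ :=
  sInf {α : ℝ≥0∞ | μ {x | α < ENNReal.ofReal |f x|} ≤ ENNReal.ofReal t}

/-! Writing `Γ` as an Euler limit exhibits `u ↦ log (|Γ(u + iy)|² / Γ(u)²)` as a limit of finite
sums of the concave functions `u ↦ log ((u + j)² / ((u + j)² + y²))`, so it is concave on `(0, ∞)`
for every `y`. Its increment from `u` to `u + 1` is `log (1 + y² / u²)` by the functional equation,
so concavity bounds its increments over `[u, u + s]` for `0 ≤ s ≤ 1` and gives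
`|Γ(b + iy)|² / |Γ(a + iy)|² ≍ (1 + y²) ^ (b - a)` uniformly in `y`. With the duplication formula
for `Γ(iλ)` this becomes `|c(λ)|⁻² ≍ λ² (1 + |λ|) ^ (n - 3)`.

The function `F(r) = r³ (1 + r) ^ (n - 3)` has derivative `r² (1 + r) ^ (n - 3)` times the factor
`(3 + n r) / (1 + r)`, which lies between `min 3 n` and `max 3 n`; hence `ν_c {0 < |λ| < r} ≍ F(r)`.
The superlevel sets of `u_σ` are exactly these punctured intervals, so `u_σ*(t) ≍ T ^ (-σ)` whenever
`F(T) ≍ t`, that is for `T = t ^ (1 / 3)` when `t ≤ 1` and for `T = t ^ (1 / n)` when `t > 1`.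
-/

open Filter Topology Asymptotics

/-- The broken power law `r ^ a * (1 + r) ^ (b - a)`, a smooth model of the function equal to
`r ^ a` for `r ≤ 1` and to `r ^ b` for `r ≥ 1`. -/
noncomputable def brokenPow (a b r : ℝ) : ℝ := r ^ a * (1 + r) ^ (b - a)

section BrokenPow

variable {a b r : ℝ}

theorem brokenPow_pos (hr : 0 < r) : 0 < brokenPow a b r := by
  unfold brokenPow; positivity

theorem brokenPow_nonneg (hr : 0 ≤ r) : 0 ≤ brokenPow a b r := by
  unfold brokenPow; positivity

theorem brokenPow_inv (hr : 0 < r) : brokenPow a b r⁻¹ = (brokenPow b a r)⁻¹ := by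
  have h : 1 + r⁻¹ = (1 + r) * r⁻¹ := by field_simp; ring
  rw [brokenPow, brokenPow, h, Real.mul_rpow (by positivity) (by positivity), mul_left_comm,
    ← Real.rpow_add (by positivity), add_sub_cancel, Real.inv_rpow hr.le, mul_inv,
    ← Real.rpow_neg (by positivity : 0 ≤ 1 + r), neg_sub, mul_comm]

theorem one_add_rpow_le_two_rpow_abs (hr₀ : 0 ≤ r) (hr₁ : r ≤ 1) (s : ℝ) :
    (1 + r) ^ s ≤ 2 ^ |s| :=
  calc (1 + r) ^ s ≤ (1 + r) ^ |s| := Real.rpow_le_rpow_of_exponent_le (by linarith) (le_abs_self s)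
    _ ≤ 2 ^ |s| := by gcongr; linarith

theorem brokenPow_le_of_le_one (hr₀ : 0 < r) (hr₁ : r ≤ 1) :
    brokenPow a b r ≤ 2 ^ |b - a| * r ^ a := by
  rw [brokenPow, mul_comm]
  gcongr
  exact one_add_rpow_le_two_rpow_abs hr₀.le hr₁ _

theorem rpow_le_brokenPow_of_le_one (hr₀ : 0 < r) (hr₁ : r ≤ 1) :
    r ^ a ≤ 2 ^ |b - a| * brokenPow a b r := by
  have h := one_add_rpow_le_two_rpow_abs hr₀.le hr₁ (a - b)
  calc r ^ a = (1 + r) ^ (a - b) * brokenPow a b r := by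
        rw [brokenPow, mul_left_comm, ← Real.rpow_add (by positivity)]; simp
    _ ≤ 2 ^ |b - a| * brokenPow a b r := by
        rw [abs_sub_comm]
        gcongr
        exact (brokenPow_pos hr₀).le

theorem brokenPow_le_of_one_le (hr : 1 ≤ r) : brokenPow a b r ≤ 2 ^ |b - a| * r ^ b := by
  have hr₀ : 0 < r := by positivity
  have h := rpow_le_brokenPow_of_le_one (a := b) (b := a) (inv_pos.2 hr₀) (inv_le_one_of_one_le₀ hr)
  rwa [brokenPow_inv hr₀, Real.inv_rpow hr₀.le, abs_sub_comm, ← div_eq_mul_inv,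
    le_div_iff₀ (brokenPow_pos hr₀), inv_mul_le_iff₀ (by positivity), mul_comm] at h

theorem rpow_le_brokenPow_of_one_le (hr : 1 ≤ r) : r ^ b ≤ 2 ^ |b - a| * brokenPow a b r := by
  have hr₀ : 0 < r := by positivity
  have h := brokenPow_le_of_le_one (a := b) (b := a) (inv_pos.2 hr₀) (inv_le_one_of_one_le₀ hr)
  rwa [brokenPow_inv hr₀, Real.inv_rpow hr₀.le, abs_sub_comm, ← div_eq_mul_inv,
    le_div_iff₀ (by positivity), inv_mul_le_iff₀ (brokenPow_pos hr₀), mul_comm] at h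

theorem rpow_min_mul_brokenPow_le {K : ℝ} (hK : 1 ≤ K) (hr : 0 < r) :
    K ^ min a b * brokenPow a b r ≤ brokenPow a b (K * r) := by
  have hK₀ : 0 < K := by positivity
  suffices h : K ^ (min a b - a) * (1 + r) ^ (b - a) ≤ (1 + K * r) ^ (b - a) by
    calc K ^ min a b * brokenPow a b r
        = K ^ a * r ^ a * (K ^ (min a b - a) * (1 + r) ^ (b - a)) := by
          rw [Real.rpow_sub hK₀, brokenPow]; field_simp
      _ ≤ K ^ a * r ^ a * (1 + K * r) ^ (b - a) := by gcongr
      _ = brokenPow a b (K * r) := by rw [brokenPow, Real.mul_rpow hK₀.le hr.le]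
  rcases le_total a b with hab | hba
  · rw [min_eq_left hab, sub_self, Real.rpow_zero, one_mul]
    have : r ≤ K * r := le_mul_of_one_le_left hr.le hK
    exact Real.rpow_le_rpow (by positivity) (by linarith) (by linarith)
  · rw [min_eq_right hba, ← Real.mul_rpow hK₀.le (by positivity)]
    exact Real.rpow_le_rpow_of_nonpos (by positivity) (by linarith) (by linarith)

theorem continuousOn_brokenPow (ha : 0 ≤ a) : ContinuousOn (brokenPow a b) (Ici 0) := by
  unfold brokenPow
  refine (continuousOn_id.rpow_const fun _ _ => Or.inr ha).mul
    ((continuousOn_const.add continuousOn_id).rpow_const fun x hx => Or.inl ?_)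
  exact (add_pos_of_pos_of_nonneg one_pos hx).ne'

theorem hasDerivAt_brokenPow (hr : 0 < r) :
    HasDerivAt (brokenPow a b) ((a + b * r) / (1 + r) * brokenPow (a - 1) (b - 1) r) r := by
  have h₁ : 0 < 1 + r := by positivity
  have h : HasDerivAt (fun x => x ^ a * (1 + x) ^ (b - a)) _ r :=
    (Real.hasDerivAt_rpow_const (.inl hr.ne')).mul
      (((hasDerivAt_id r).const_add 1).rpow_const (.inl h₁.ne'))
  refine h.congr_deriv ?_
  simp only [id_eq, brokenPow]
  rw [Real.rpow_sub_one hr.ne', Real.rpow_sub_one h₁.ne', sub_sub_sub_cancel_right]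
  field_simp
  ring

theorem brokenPow_zero (ha : a ≠ 0) : brokenPow a b 0 = 0 := by
  simp [brokenPow, Real.zero_rpow ha]

theorem lintegral_deriv_brokenPow (ha : 0 < a) (hb : 0 < b) (hr : 0 < r) :
    ∫⁻ x in Ioo 0 r, ENNReal.ofReal ((a + b * x) / (1 + x) * brokenPow (a - 1) (b - 1) x) =
      ENNReal.ofReal (brokenPow a b r) := by
  have hcont : ContinuousOn (brokenPow a b) (Icc 0 r) :=
    (continuousOn_brokenPow ha.le).mono Icc_subset_Ici_self
  have hderiv : ∀ x ∈ Ioo 0 r, HasDerivAt (brokenPow a b) _ x := fun x hx =>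
    hasDerivAt_brokenPow hx.1
  have hpos : ∀ x ∈ Ioo 0 r, 0 ≤ (a + b * x) / (1 + x) * brokenPow (a - 1) (b - 1) x :=
    fun x hx => by
      have := hx.1
      have := (brokenPow_pos (a := a - 1) (b := b - 1) hx.1)
      positivity
  have hint := intervalIntegral.integrableOn_deriv_of_nonneg hcont hderiv hpos
  rw [← ofReal_integral_eq_lintegral_ofReal (hint.mono_set Ioo_subset_Ioc_self)
      (ae_restrict_of_forall_mem measurableSet_Ioo hpos), ← integral_Ioc_eq_integral_Ioo,
    ← intervalIntegral.integral_of_le hr.le,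
    intervalIntegral.integral_eq_sub_of_hasDerivAt_of_le hr.le hcont hderiv
      ((intervalIntegrable_iff_integrableOn_Ioc_of_le hr.le).2 hint), brokenPow_zero ha.ne',
    sub_zero]

theorem ofReal_brokenPow_div_max_le_lintegral (ha : 0 < a) (hb : 0 < b) (hr : 0 < r) :
    ENNReal.ofReal (brokenPow a b r / max a b) ≤
      ∫⁻ x in Ioo 0 r, ENNReal.ofReal (brokenPow (a - 1) (b - 1) x) := by
  have hmax : 0 < max a b := lt_max_of_lt_left ha
  rw [ENNReal.ofReal_div_of_pos hmax]
  refine ENNReal.div_le_of_le_mul' ?_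
  rw [← lintegral_deriv_brokenPow ha hb hr, ← lintegral_const_mul' _ _ ofReal_ne_top]
  refine setLIntegral_mono' measurableSet_Ioo fun x hx => ?_
  have hx₀ : 0 < x := hx.1
  have hw : 0 ≤ brokenPow (a - 1) (b - 1) x := brokenPow_nonneg hx₀.le
  rw [← ENNReal.ofReal_mul hmax.le]
  gcongr
  rw [div_le_iff₀ (by positivity), mul_one_add]
  gcongr <;> simp

theorem lintegral_brokenPow_le_ofReal_div_min (ha : 0 < a) (hb : 0 < b) (hr : 0 < r) :
    ∫⁻ x in Ioo 0 r, ENNReal.ofReal (brokenPow (a - 1) (b - 1) x) ≤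
      ENNReal.ofReal (brokenPow a b r / min a b) := by
  have hmin : 0 < min a b := lt_min ha hb
  rw [ENNReal.ofReal_div_of_pos hmin]
  refine (ENNReal.le_div_iff_mul_le (.inl (by simpa using hmin)) (.inl ofReal_ne_top)).2 ?_
  rw [mul_comm, ← lintegral_deriv_brokenPow ha hb hr, ← lintegral_const_mul' _ _ ofReal_ne_top]
  refine setLIntegral_mono' measurableSet_Ioo fun x hx => ?_
  have hx₀ : 0 < x := hx.1
  have hw : 0 ≤ brokenPow (a - 1) (b - 1) x := brokenPow_nonneg hx₀.le
  rw [← ENNReal.ofReal_mul hmin.le]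
  gcongr
  rw [le_div_iff₀ (by positivity), mul_one_add]
  gcongr <;> simp

end BrokenPow

theorem setLIntegral_abs_preimage_comp_abs {s : Set ℝ} (hs : MeasurableSet s) (hs₀ : s ⊆ Ioi 0)
    (g : ℝ → ℝ≥0∞) : ∫⁻ x in abs ⁻¹' s, g |x| = 2 * ∫⁻ x in s, g x := by
  have hunion : abs ⁻¹' s = s ∪ Neg.neg ⁻¹' s := by
    ext x
    rcases le_or_gt x 0 with hx | hx
    · have : x ∉ s := fun h => hx.not_gt (hs₀ h)
      simp [abs_of_nonpos hx, this]
    · have : -x ∉ s := fun h => by linarith [mem_Ioi.1 (hs₀ h)]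
      simp [abs_of_pos hx, this]
  have hdisj : Disjoint s (Neg.neg ⁻¹' s) := disjoint_left.2 fun x hx hx' => by
    linarith [mem_Ioi.1 (hs₀ hx), mem_Ioi.1 (hs₀ hx')]
  have hpos : ∫⁻ x in s, g |x| = ∫⁻ x in s, g x :=
    setLIntegral_congr_fun hs fun x hx => by simp [abs_of_pos (mem_Ioi.1 (hs₀ hx))]
  rw [hunion, lintegral_union (hs.preimage measurable_neg) hdisj, two_mul, ← hpos,
    ← (Measure.measurePreserving_neg volume).setLIntegral_comp_preimage_emb
      measurableEmbedding_neg _ s]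
  simp only [abs_neg]

theorem exists_setLIntegral_ofReal_le_of_isBigO {X : Type*} [MeasurableSpace X] {μ : Measure X}
    {f g : X → ℝ} (hg : 0 ≤ᵐ[μ] g) (h : f =O[ae μ] g) :
    ∃ C : ℝ, 0 < C ∧ ∀ s, ∫⁻ x in s, ENNReal.ofReal (f x) ∂μ ≤
      ENNReal.ofReal C * ∫⁻ x in s, ENNReal.ofReal (g x) ∂μ := by
  obtain ⟨C, hC, hfg⟩ := h.exists_pos
  refine ⟨C, hC, fun s => ?_⟩
  rw [← lintegral_const_mul' _ _ ofReal_ne_top]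
  refine lintegral_mono_ae (ae_restrict_of_ae ?_)
  filter_upwards [hfg.bound, hg] with x hx hgx
  rw [Real.norm_of_nonneg hgx] at hx
  rw [← ENNReal.ofReal_mul hC.le]
  exact ENNReal.ofReal_le_ofReal ((le_abs_self _).trans hx)

theorem exists_withDensity_abs_preimage_Ioo_bounds {a b : ℝ} (ha : 0 < a) (hb : 0 < b) {f : ℝ → ℝ}
    (hf : 0 ≤ᵐ[volume] f) (hfΘ : f =Θ[ae volume] fun x => brokenPow (a - 1) (b - 1) |x|) :
    ∃ c C : ℝ, 0 < c ∧ 0 < C ∧ ∀ r, 0 < r →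
      ENNReal.ofReal (c * brokenPow a b r) ≤
        volume.withDensity (fun x => ENNReal.ofReal (f x)) (abs ⁻¹' Ioo 0 r) ∧
      volume.withDensity (fun x => ENNReal.ofReal (f x)) (abs ⁻¹' Ioo 0 r) ≤
        ENNReal.ofReal (C * brokenPow a b r) := by
  obtain ⟨C, hC, hle⟩ := exists_setLIntegral_ofReal_le_of_isBigO
    (.of_forall fun x => brokenPow_nonneg (abs_nonneg x)) hfΘ.1
  obtain ⟨c, hc, hge⟩ := exists_setLIntegral_ofReal_le_of_isBigO hf hfΘ.2
  have : 0 < min a b := lt_min ha hb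
  have : 0 < max a b := lt_max_of_lt_left ha
  refine ⟨2 / max a b / c, C * (2 / min a b), by positivity, by positivity, fun r hr => ?_⟩
  have hI := setLIntegral_abs_preimage_comp_abs (measurableSet_Ioo (a := 0) (b := r))
    Ioo_subset_Ioi_self fun x => ENNReal.ofReal (brokenPow (a - 1) (b - 1) x)
  have htwo (m : ℝ) : 2 * ENNReal.ofReal (brokenPow a b r / m) =
      ENNReal.ofReal (2 / m * brokenPow a b r) := by
    rw [← ENNReal.ofReal_ofNat, ← ENNReal.ofReal_mul two_pos.le]
    ring_nf
  rw [withDensity_apply _ (measurableSet_Ioo.preimage continuous_abs.measurable)]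
  constructor
  · rw [div_mul_eq_mul_div, ENNReal.ofReal_div_of_pos hc]
    refine ENNReal.div_le_of_le_mul' ((hge _).trans' ?_)
    rw [hI, ← htwo]
    gcongr
    exact ofReal_brokenPow_div_max_le_lintegral ha hb hr
  · rw [mul_assoc, ENNReal.ofReal_mul hC.le, ← htwo]
    refine (hle _).trans ?_
    rw [hI]
    gcongr
    exact lintegral_brokenPow_le_ofReal_div_min ha hb hr

theorem rearr_le_ofReal {X : Type*} [MeasurableSpace X] {μ : Measure X} {f : X → ℝ} {t α : ℝ}
    (hα : 0 ≤ α) (h : μ {x | α < |f x|} ≤ ENNReal.ofReal t) : rearr μ f t ≤ ENNReal.ofReal α :=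
  sInf_le (by simpa only [mem_ofPred_eq, ENNReal.ofReal_lt_ofReal_iff_of_nonneg hα] using h)

theorem ofReal_le_rearr {X : Type*} [MeasurableSpace X] {μ : Measure X} {f : X → ℝ} {t α : ℝ}
    (h : ENNReal.ofReal t < μ {x | α < |f x|}) : ENNReal.ofReal α ≤ rearr μ f t := by
  refine le_sInf fun β hβ => ?_
  by_contra! hlt
  refine (h.trans_le (measure_mono fun x hx => ?_)).not_ge hβ
  exact hlt.trans_le (ENNReal.ofReal_le_ofReal (le_of_lt hx))

theorem setOf_rpow_neg_lt_abs_rpow_neg {σ r : ℝ} (hσ : 0 < σ) (hr : 0 < r) :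
    {x : ℝ | r ^ (-σ) < |(|x| ^ (-σ))|} = abs ⁻¹' Ioo 0 r := by
  ext x
  simp only [mem_ofPred_eq, mem_preimage, mem_Ioo, Real.abs_rpow_of_nonneg (abs_nonneg x), abs_abs]
  rcases (abs_nonneg x).eq_or_lt' with hx | hx
  · simp [hx, Real.zero_rpow (neg_ne_zero.2 hσ.ne'), (Real.rpow_pos_of_pos hr _).le]
  · simp [hx, Real.rpow_lt_rpow_iff_of_neg hr hx (neg_lt_zero.2 hσ)]

section Rearrangement

variable {μ : Measure ℝ} {a b c C σ : ℝ}

theorem exists_rearr_abs_rpow_neg_bounds_of_comparable (ha : 0 < a) (hb : 0 < b) (hc : 0 < c)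
    (hC : 0 < C) (hσ : 0 < σ)
    (hμ : ∀ r, 0 < r → ENNReal.ofReal (c * brokenPow a b r) ≤ μ (abs ⁻¹' Ioo 0 r) ∧
      μ (abs ⁻¹' Ioo 0 r) ≤ ENNReal.ofReal (C * brokenPow a b r)) (M : ℝ) :
    ∃ K, 0 < K ∧ ∀ t T, 0 < t → 0 < T → brokenPow a b T ≤ M * t → t ≤ M * brokenPow a b T →
      ENNReal.ofReal ((K * T) ^ (-σ)) ≤ rearr μ (fun x => |x| ^ (-σ)) t ∧
      rearr μ (fun x => |x| ^ (-σ)) t ≤ ENNReal.ofReal ((K⁻¹ * T) ^ (-σ)) := by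
  have hmin : 0 < min a b := lt_min ha hb
  obtain ⟨K, hK, hKC, hKc⟩ : ∃ K : ℝ, 1 ≤ K ∧ C * M ≤ K ^ min a b ∧ M / c < K ^ min a b :=
    ((eventually_ge_atTop 1).and (((tendsto_rpow_atTop hmin).eventually_ge_atTop _).and
      ((tendsto_rpow_atTop hmin).eventually_gt_atTop _))).exists
  have hK₀ : 0 < K := by positivity
  refine ⟨K, hK₀, fun t T ht hT hFt htF => ⟨ofReal_le_rearr ?_, rearr_le_ofReal (by positivity) ?_⟩⟩
  · rw [setOf_rpow_neg_lt_abs_rpow_neg hσ (by positivity)]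
    have hF : 0 < brokenPow a b T := brokenPow_pos hT
    have htK : t < c * brokenPow a b (K * T) :=
      calc t ≤ M * brokenPow a b T := htF
        _ < c * K ^ min a b * brokenPow a b T := by gcongr; exact (div_lt_iff₀' hc).1 hKc
        _ ≤ c * brokenPow a b (K * T) := by
          rw [mul_assoc]; gcongr; exact rpow_min_mul_brokenPow_le hK hT
    exact ((ENNReal.ofReal_lt_ofReal_iff (ht.trans htK)).2 htK).trans_le (hμ _ (by positivity)).1
  · rw [setOf_rpow_neg_lt_abs_rpow_neg hσ (by positivity)]
    refine (hμ _ (by positivity)).2.trans (ENNReal.ofReal_le_ofReal ?_)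
    have hKF : K ^ min a b * brokenPow a b (K⁻¹ * T) ≤ M * t :=
      (rpow_min_mul_brokenPow_le hK (by positivity)).trans (by rwa [mul_inv_cancel_left₀ hK₀.ne'])
    refine le_of_mul_le_mul_left ?_ (by positivity : 0 < K ^ min a b)
    calc K ^ min a b * (C * brokenPow a b (K⁻¹ * T))
        = C * (K ^ min a b * brokenPow a b (K⁻¹ * T)) := mul_left_comm _ _ _
      _ ≤ C * (M * t) := by gcongr
      _ = C * M * t := (mul_assoc _ _ _).symm
      _ ≤ K ^ min a b * t := by gcongr

theorem exists_rearr_abs_rpow_neg_bounds (ha : 0 < a) (hb : 0 < b) (hc : 0 < c) (hC : 0 < C)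
    (hσ : 0 < σ)
    (hμ : ∀ r, 0 < r → ENNReal.ofReal (c * brokenPow a b r) ≤ μ (abs ⁻¹' Ioo 0 r) ∧
      μ (abs ⁻¹' Ioo 0 r) ≤ ENNReal.ofReal (C * brokenPow a b r)) :
    ∃ C₁ C₂ : ℝ, 0 < C₁ ∧ 0 < C₂ ∧
      (∀ t, 0 < t → t ≤ 1 →
        ENNReal.ofReal (C₁ * t ^ (-(σ / a))) ≤ rearr μ (fun x => |x| ^ (-σ)) t ∧
        rearr μ (fun x => |x| ^ (-σ)) t ≤ ENNReal.ofReal (C₂ * t ^ (-(σ / a)))) ∧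
      (∀ t, 1 < t →
        ENNReal.ofReal (C₁ * t ^ (-(σ / b))) ≤ rearr μ (fun x => |x| ^ (-σ)) t ∧
        rearr μ (fun x => |x| ^ (-σ)) t ≤ ENNReal.ofReal (C₂ * t ^ (-(σ / b)))) := by
  obtain ⟨K, hK, h⟩ :=
    exists_rearr_abs_rpow_neg_bounds_of_comparable ha hb hc hC hσ hμ (2 ^ |b - a|)
  have mul_root_rpow {L t p : ℝ} (hL : 0 < L) (ht : 0 < t) :
      (L * t ^ p⁻¹) ^ (-σ) = L ^ (-σ) * t ^ (-(σ / p)) := by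
    rw [Real.mul_rpow hL.le (by positivity), ← Real.rpow_mul ht.le]
    ring_nf
  refine ⟨K ^ (-σ), K⁻¹ ^ (-σ), by positivity, by positivity, fun t ht ht₁ => ?_, fun t ht₁ => ?_⟩
  · have hT : 0 < t ^ a⁻¹ := by positivity
    have hT₁ : t ^ a⁻¹ ≤ 1 := Real.rpow_le_one ht.le ht₁ (by positivity)
    have hle := brokenPow_le_of_le_one (a := a) (b := b) hT hT₁
    have hge := rpow_le_brokenPow_of_le_one (a := a) (b := b) hT hT₁
    rw [Real.rpow_inv_rpow ht.le ha.ne'] at hle hge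
    rw [← mul_root_rpow hK ht, ← mul_root_rpow (inv_pos.2 hK) ht]
    exact h t _ ht hT hle hge
  · have ht : 0 < t := by positivity
    have hT₁ : 1 ≤ t ^ b⁻¹ := Real.one_le_rpow ht₁.le (by positivity)
    have hle := brokenPow_le_of_one_le (a := a) (b := b) hT₁
    have hge := rpow_le_brokenPow_of_one_le (a := a) (b := b) hT₁
    rw [Real.rpow_inv_rpow ht.le hb.ne'] at hle hge
    rw [← mul_root_rpow hK ht, ← mul_root_rpow (inv_pos.2 hK) ht]
    exact h t _ ht (by positivity) hle hge

end Rearrangement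

section GammaVerticalLine

theorem concaveOn_of_tendsto {E ι : Type*} [AddCommMonoid E] [Module ℝ E] {l : Filter ι} [l.NeBot]
    {s : Set E} {F : ι → E → ℝ} {f : E → ℝ} (hF : ∀ i, ConcaveOn ℝ s (F i))
    (h : ∀ x ∈ s, Tendsto (fun i => F i x) l (𝓝 (f x))) : ConcaveOn ℝ s f := by
  obtain ⟨i⟩ := l.nonempty_of_neBot
  have hs := (hF i).1
  refine ⟨hs, fun x hx y hy p q hp hq hpq => ?_⟩
  exact le_of_tendsto_of_tendsto' (((h x hx).const_smul p).add ((h y hy).const_smul q))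
    (h _ (hs hx hy hp hq hpq)) fun i => (hF i).2 hx hy hp hq hpq

theorem hasDerivAt_log_sq_div {u : ℝ} (hu : 0 < u) (y : ℝ) :
    HasDerivAt (fun u => Real.log (u ^ 2 / (u ^ 2 + y ^ 2)))
      (2 * y ^ 2 / (u * (u ^ 2 + y ^ 2))) u := by
  have hsq : HasDerivAt (fun u : ℝ => u ^ 2) (2 * u) u := by simpa using hasDerivAt_pow 2 u
  have hdiv : HasDerivAt (fun u : ℝ => u ^ 2 / (u ^ 2 + y ^ 2)) _ u :=
    hsq.div (hsq.add_const _) (by positivity)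
  refine (hdiv.log (by positivity)).congr_deriv ?_
  field_simp
  ring

theorem concaveOn_log_sq_div (y : ℝ) :
    ConcaveOn ℝ (Ioi 0) fun u => Real.log (u ^ 2 / (u ^ 2 + y ^ 2)) := by
  have hderiv := fun u (hu : u ∈ Ioi (0 : ℝ)) => hasDerivAt_log_sq_div hu y
  refine AntitoneOn.concaveOn_of_deriv (convex_Ioi 0)
    (fun u hu => (hderiv u hu).continuousAt.continuousWithinAt) ?_ ?_ <;> rw [interior_Ioi]
  · exact fun u hu => (hderiv u hu).differentiableAt.differentiableWithinAt
  · intro u (hu : 0 < u) v (hv : 0 < v) huv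
    rw [(hderiv u hu).deriv, (hderiv v hv).deriv]
    gcongr

/-- The squared modulus `|Γ(a + iy)|²` of the Gamma function along the vertical line of abscissa
`a`, as a function of `y`. -/
noncomputable def sqNormGamma (a y : ℝ) : ℝ := ‖Complex.Gamma (a + y * Complex.I)‖ ^ 2

theorem sqNormGamma_pos {a : ℝ} (ha : 0 < a) (y : ℝ) : 0 < sqNormGamma a y := by
  have : Complex.Gamma (a + y * Complex.I) ≠ 0 :=
    Complex.Gamma_ne_zero_of_re_pos (by simpa using ha)
  unfold sqNormGamma
  positivity

theorem sq_norm_add_mul_I (a y : ℝ) : ‖(a + y * Complex.I : ℂ)‖ ^ 2 = a ^ 2 + y ^ 2 := by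
  rw [Complex.sq_norm, Complex.normSq_add_mul_I]

theorem sqNormGamma_add_one {a y : ℝ} (h : a ≠ 0 ∨ y ≠ 0) :
    sqNormGamma (a + 1) y = (a ^ 2 + y ^ 2) * sqNormGamma a y := by
  have hne : (a + y * Complex.I : ℂ) ≠ 0 := by simpa [Complex.ext_iff, or_iff_not_imp_left] using h
  rw [sqNormGamma, sqNormGamma, ← sq_norm_add_mul_I, ← mul_pow, ← norm_mul,
    ← Complex.Gamma_add_one _ hne]
  push_cast
  ring_nf

theorem tendsto_prod_sq_div_sqNormGamma {u : ℝ} (hu : 0 < u) (y : ℝ) :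
    Tendsto (fun n : ℕ => ∏ j ∈ Finset.range (n + 1), (u + j) ^ 2 / ((u + j) ^ 2 + y ^ 2)) atTop
      (𝓝 (sqNormGamma u y / Real.Gamma u ^ 2)) := by
  have hlim := ((Complex.GammaSeq_tendsto_Gamma (u + y * Complex.I)).norm.pow 2).div
    ((Real.GammaSeq_tendsto_Gamma u).pow 2) (pow_ne_zero 2 (Real.Gamma_pos_of_pos hu).ne')
  refine hlim.congr' ?_
  filter_upwards [eventually_gt_atTop 0] with n hn
  have hn₀ : (0 : ℝ) < n := by exact_mod_cast hn
  have hcpow : ‖(n : ℂ) ^ (u + y * Complex.I : ℂ)‖ = (n : ℝ) ^ u := by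
    simpa using Complex.norm_cpow_eq_rpow_re_of_pos hn₀ (u + y * Complex.I)
  have hfactor (j : ℕ) : ‖(u + y * Complex.I + j : ℂ)‖ ^ 2 = (u + j) ^ 2 + y ^ 2 := by
    rw [← sq_norm_add_mul_I]
    push_cast
    ring_nf
  have hprod : ∏ j ∈ Finset.range (n + 1), ((u + j) ^ 2 + y ^ 2) ≠ 0 :=
    Finset.prod_ne_zero_iff.2 fun j _ => by positivity
  have hprod' : ∏ j ∈ Finset.range (n + 1), (u + j) ^ 2 ≠ 0 :=
    Finset.prod_ne_zero_iff.2 fun j _ => by positivity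
  simp only [Complex.GammaSeq, Real.GammaSeq, Pi.div_apply, norm_div, norm_mul,
    norm_prod, hcpow, RCLike.norm_natCast, div_pow, mul_pow, ← Finset.prod_pow, hfactor,
    Finset.prod_div_distrib]
  field_simp

theorem concaveOn_log_sqNormGamma_div (y : ℝ) :
    ConcaveOn ℝ (Ioi 0) fun u => Real.log (sqNormGamma u y / Real.Gamma u ^ 2) := by
  have hsum (n : ℕ) : ConcaveOn ℝ (Ioi 0)
      (∑ j ∈ Finset.range n, fun u : ℝ => Real.log ((u + j) ^ 2 / ((u + j) ^ 2 + y ^ 2))) := by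
    refine Finset.sum_induction _ (ConcaveOn ℝ (Ioi 0)) (fun _ _ => ConcaveOn.add)
      (concaveOn_const 0 (convex_Ioi 0)) fun j _ => ?_
    exact ((concaveOn_log_sq_div y).translate_left (j : ℝ)).subset
      (fun u (hu : 0 < u) => show 0 < j + u by positivity) (convex_Ioi 0)
  refine concaveOn_of_tendsto (fun n => hsum (n + 1)) (l := atTop) fun u (hu : 0 < u) => ?_
  have hpos : 0 < sqNormGamma u y / Real.Gamma u ^ 2 :=
    div_pos (sqNormGamma_pos hu y) (pow_pos (Real.Gamma_pos_of_pos hu) 2)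
  refine ((tendsto_prod_sq_div_sqNormGamma hu y).log hpos.ne').congr fun n => ?_
  rw [Finset.sum_apply, Real.log_prod fun j _ => by positivity]

theorem log_sqNormGamma_div_add_one {u : ℝ} (hu : 0 < u) (y : ℝ) :
    Real.log (sqNormGamma (u + 1) y / Real.Gamma (u + 1) ^ 2) =
      Real.log (sqNormGamma u y / Real.Gamma u ^ 2) + Real.log (1 + y ^ 2 / u ^ 2) := by
  have := Real.Gamma_pos_of_pos hu
  have hG := sqNormGamma_pos hu y
  rw [← Real.log_mul (by positivity) (by positivity), sqNormGamma_add_one (.inl hu.ne'),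
    Real.Gamma_add_one hu.ne']
  congr 1
  field_simp

theorem log_sqNormGamma_div_add_mul_log_le {u : ℝ} (hu : 0 < u) {s : ℝ} (hs₀ : 0 ≤ s) (hs₁ : s ≤ 1)
    (y : ℝ) :
    Real.log (sqNormGamma u y / Real.Gamma u ^ 2) + s * Real.log (1 + y ^ 2 / u ^ 2) ≤
      Real.log (sqNormGamma (u + s) y / Real.Gamma (u + s) ^ 2) := by
  have h := (concaveOn_log_sqNormGamma_div y).2 (mem_Ioi.2 hu)
    (mem_Ioi.2 (by positivity : 0 < u + 1)) (sub_nonneg.2 hs₁) hs₀ (sub_add_cancel 1 s)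
  simp only [smul_eq_mul, log_sqNormGamma_div_add_one hu] at h
  have hpt : (1 - s) * u + s * (u + 1) = u + s := by ring
  rw [hpt] at h
  linarith

theorem one_add_sq_div_rpow_le {u : ℝ} (hu : 0 < u) {s : ℝ} (hs₀ : 0 ≤ s) (hs₁ : s ≤ 1) (y : ℝ) :
    (1 + y ^ 2 / u ^ 2) ^ s ≤
      (Real.Gamma u / Real.Gamma (u + s)) ^ 2 * (sqNormGamma (u + s) y / sqNormGamma u y) := by
  have hus : 0 < u + s := by positivity
  have := Real.Gamma_pos_of_pos hu
  have := Real.Gamma_pos_of_pos hus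
  have hG := sqNormGamma_pos hu y
  have hGs := sqNormGamma_pos hus y
  have h := log_sqNormGamma_div_add_mul_log_le hu hs₀ hs₁ y
  rw [← Real.log_rpow (by positivity), ← Real.log_mul (by positivity) (by positivity),
    Real.log_le_log_iff (by positivity) (by positivity), mul_comm,
    ← le_div_iff₀ (by positivity)] at h
  exact h.trans_eq (by field_simp)

theorem sqNormGamma_mul_sqNormGamma_add_half (a y : ℝ) :
    sqNormGamma a y * sqNormGamma (a + 1 / 2) y =
      (2 ^ (1 - 2 * a)) ^ 2 * Real.pi * sqNormGamma (2 * a) (2 * y) := by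
  have hhalf : (a + y * Complex.I + 1 / 2 : ℂ) = (a + 1 / 2 : ℝ) + y * Complex.I := by
    push_cast
    ring
  have hdouble : (2 * (a + y * Complex.I) : ℂ) = (2 * a : ℝ) + (2 * y : ℝ) * Complex.I := by
    push_cast
    ring
  have hcpow : ‖(2 : ℂ) ^ (1 - ((2 * a : ℝ) + (2 * y : ℝ) * Complex.I) : ℂ)‖ =
      (2 : ℝ) ^ (1 - 2 * a) := by
    simpa using
      Complex.norm_cpow_eq_rpow_re_of_pos two_pos (1 - ((2 * a : ℝ) + (2 * y : ℝ) * Complex.I))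
  have hpi : ‖((√Real.pi : ℝ) : ℂ)‖ ^ 2 = Real.pi := by
    rw [Complex.norm_real, Real.norm_eq_abs, sq_abs, Real.sq_sqrt Real.pi_pos.le]
  have hdup := congrArg (fun z => ‖z‖ ^ 2) (Complex.Gamma_mul_Gamma_add_half (a + y * Complex.I))
  simp only [hhalf, hdouble, norm_mul, mul_pow, hcpow, hpi] at hdup
  simp only [sqNormGamma]
  linear_combination hdup

theorem inv_sqNormGamma_zero (y : ℝ) : (sqNormGamma 0 y)⁻¹ = y ^ 2 / sqNormGamma 1 y := by
  rcases eq_or_ne y 0 with rfl | hy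
  · -- `Γ` takes the junk value `0` at its pole `0`, and `0⁻¹ = 0`
    simp [sqNormGamma]
  · rw [← zero_add (1 : ℝ), sqNormGamma_add_one (.inr hy)]
    field_simp
    simp

theorem isTheta_one_add_sq_div {u : ℝ} (hu : u ≠ 0) :
    (fun y : ℝ => 1 + y ^ 2 / u ^ 2) =Θ[⊤] fun y => 1 + y ^ 2 := by
  have hu₂ : 0 < u ^ 2 := by positivity
  constructor
  · refine isBigO_top.2 ⟨1 + 1 / u ^ 2, fun y => ?_⟩
    rw [Real.norm_of_nonneg (by positivity), Real.norm_of_nonneg (by positivity)]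
    have : 0 ≤ 1 / u ^ 2 + y ^ 2 := by positivity
    linear_combination this
  · refine isBigO_top.2 ⟨1 + u ^ 2, fun y => ?_⟩
    rw [Real.norm_of_nonneg (by positivity), Real.norm_of_nonneg (by positivity)]
    have : 0 ≤ u ^ 2 + y ^ 2 / u ^ 2 := by positivity
    have hy : u ^ 2 * (y ^ 2 / u ^ 2) = y ^ 2 := mul_div_cancel₀ _ hu₂.ne'
    linear_combination this - hy

theorem isBigO_sqNormGamma_add_div {u : ℝ} (hu : 0 < u) {s : ℝ} (hs₀ : 0 ≤ s) (hs₁ : s ≤ 1) :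
    (fun y : ℝ => (1 + y ^ 2) ^ s) =O[⊤] fun y => sqNormGamma (u + s) y / sqNormGamma u y := by
  have hu₂ : (fun y : ℝ => (1 + y ^ 2) ^ s) =Θ[⊤] fun y => (1 + y ^ 2 / u ^ 2) ^ s :=
    (isTheta_one_add_sq_div hu.ne').symm.rpow
      (.of_forall fun y => (by positivity : 0 ≤ 1 + y ^ 2))
      (.of_forall fun y => (by positivity : 0 ≤ 1 + y ^ 2 / u ^ 2))
  refine hu₂.isBigO.trans
    (isBigO_top.2 ⟨(Real.Gamma u / Real.Gamma (u + s)) ^ 2, fun y => ?_⟩)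
  have := sqNormGamma_pos hu y
  have := sqNormGamma_pos (by positivity : 0 < u + s) y
  rw [Real.norm_of_nonneg (by positivity), Real.norm_of_nonneg (by positivity)]
  exact one_add_sq_div_rpow_le hu hs₀ hs₁ y

theorem isTheta_sqNormGamma_add_one_div {u : ℝ} (hu : 0 < u) :
    (fun y => sqNormGamma (u + 1) y / sqNormGamma u y) =Θ[⊤] fun y => 1 + y ^ 2 :=
  calc (fun y => sqNormGamma (u + 1) y / sqNormGamma u y)
      = fun y => u ^ 2 * (1 + y ^ 2 / u ^ 2) := by
        funext y
        have := sqNormGamma_pos hu y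
        rw [sqNormGamma_add_one (.inl hu.ne')]
        field_simp
    _ =Θ[⊤] fun y => 1 + y ^ 2 :=
        (isTheta_one_add_sq_div hu.ne').const_mul_left (pow_ne_zero 2 hu.ne')

theorem isTheta_sqNormGamma_add_div {u : ℝ} (hu : 0 < u) {s : ℝ} (hs₀ : 0 ≤ s) (hs₁ : s ≤ 1) :
    (fun y => sqNormGamma (u + s) y / sqNormGamma u y) =Θ[⊤] fun y => (1 + y ^ 2) ^ s := by
  have hus : 0 < u + s := by positivity
  have hinv := (isBigO_sqNormGamma_add_div hus (sub_nonneg.2 hs₁) (by linarith)).inv_rev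
    (.of_forall fun y h => absurd h (by positivity))
  refine ⟨((isTheta_sqNormGamma_add_one_div hu).isBigO.mul hinv).congr (fun y => ?_) fun y => ?_,
    isBigO_sqNormGamma_add_div hu hs₀ hs₁⟩
  · have := sqNormGamma_pos (by positivity : 0 < u + 1) y
    rw [inv_div, add_add_sub_cancel, mul_comm, div_mul_div_cancel₀ this.ne']
  · rw [← Real.rpow_neg (by positivity), neg_sub, Real.rpow_sub_one (by positivity)]
    field_simp

theorem isTheta_sqNormGamma_add_natCast_mul_div {u : ℝ} (hu : 0 < u) {s : ℝ} (hs₀ : 0 ≤ s)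
    (hs₁ : s ≤ 1) (n : ℕ) :
    (fun y => sqNormGamma (u + n * s) y / sqNormGamma u y) =Θ[⊤]
      fun y => (1 + y ^ 2) ^ (n * s) := by
  induction n with
  | zero =>
    simp only [Nat.cast_zero, zero_mul, add_zero, Real.rpow_zero,
      div_self (sqNormGamma_pos hu _).ne']
    exact isTheta_rfl
  | succ n ih =>
    have hns : 0 < u + n * s := by positivity
    simp only [Nat.cast_succ, add_one_mul, ← add_assoc]
    calc (fun y => sqNormGamma (u + n * s + s) y / sqNormGamma u y)
        = fun y => sqNormGamma (u + n * s + s) y / sqNormGamma (u + n * s) y *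
            (sqNormGamma (u + n * s) y / sqNormGamma u y) :=
          funext fun y => (div_mul_div_cancel₀ (sqNormGamma_pos hns y).ne').symm
      _ =Θ[⊤] fun y => (1 + y ^ 2) ^ s * (1 + y ^ 2) ^ (n * s) :=
          (isTheta_sqNormGamma_add_div hns hs₀ hs₁).mul ih
      _ = fun y => (1 + y ^ 2) ^ (n * s + s) :=
          funext fun y => by rw [add_comm _ s, Real.rpow_add (by positivity)]

theorem isTheta_sqNormGamma_div {a b : ℝ} (ha : 0 < a) (hb : 0 < b) :
    (fun y => sqNormGamma b y / sqNormGamma a y) =Θ[⊤] fun y => (1 + y ^ 2) ^ (b - a) := by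
  wlog hab : a ≤ b generalizing a b
  · have hinv (y : ℝ) : (1 + y ^ 2) ^ (b - a) = ((1 + y ^ 2) ^ (a - b))⁻¹ := by
      rw [← Real.rpow_neg (by positivity), neg_sub]
    simpa only [inv_div, hinv] using (this hb ha (le_of_not_ge hab)).inv
  obtain ⟨n, hn⟩ := exists_nat_gt (b - a)
  have hn₀ : (0 : ℝ) < n := (sub_nonneg.2 hab).trans_lt hn
  have hns : n * ((b - a) / n) = b - a := mul_div_cancel₀ _ hn₀.ne'
  simpa only [hns, add_sub_cancel] using isTheta_sqNormGamma_add_natCast_mul_div ha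
    (div_nonneg (sub_nonneg.2 hab) hn₀.le) ((div_le_one hn₀).2 hn.le) n

end GammaVerticalLine

section PlancherelDensity

theorem densHC_eq_const_mul_sqNormGamma (m₁ m₂ : ℕ) (lam : ℝ) :
    densHC m₁ m₂ lam = ((2 ^ ρ₀ m₁ m₂) ^ 2 * sqNormGamma ((m₁ + m₂ + 1) / 2) 0)⁻¹ *
      (sqNormGamma (ρ₀ m₁ m₂ / 2) (lam / 2) * sqNormGamma ((m₁ + 2) / 4) (lam / 2) *
        (sqNormGamma 0 lam)⁻¹) := by
  have hcpow : ‖(2 : ℂ) ^ ((ρ₀ m₁ m₂ : ℂ) - Complex.I * lam)‖ = 2 ^ ρ₀ m₁ m₂ := by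
    simpa using Complex.norm_cpow_eq_rpow_re_of_pos two_pos ((ρ₀ m₁ m₂ : ℂ) - Complex.I * lam)
  have hρ : ((ρ₀ m₁ m₂ / 2 : ℝ) + (lam / 2 : ℝ) * Complex.I : ℂ) =
      (ρ₀ m₁ m₂ + Complex.I * lam) / 2 := by
    push_cast
    ring
  have hm : (((m₁ + 2) / 4 : ℝ) + (lam / 2 : ℝ) * Complex.I : ℂ) =
      (m₁ + 2) / 4 + Complex.I * lam / 2 := by
    push_cast
    ring
  have hn : (((m₁ + m₂ + 1) / 2 : ℝ) + (0 : ℝ) * Complex.I : ℂ) = (m₁ + m₂ + 1) / 2 := by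
    push_cast
    ring
  have hlam : ((0 : ℝ) + lam * Complex.I : ℂ) = Complex.I * lam := by
    push_cast
    ring
  simp only [densHC, cHC, sqNormGamma, hρ, hm, hn, hlam, norm_div, norm_mul, hcpow]
  rw [zpow_neg, ← inv_zpow, inv_div]
  norm_cast
  simp only [mul_pow, div_eq_mul_inv, mul_inv]
  ring

theorem densHC_eq_const_mul_sq_mul_sqNormGamma_div (m₁ m₂ : ℕ) (lam : ℝ) :
    densHC m₁ m₂ lam = ((2 ^ ρ₀ m₁ m₂) ^ 2 * sqNormGamma ((m₁ + m₂ + 1) / 2) 0)⁻¹ * Real.pi *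
      (lam ^ 2 * (sqNormGamma (ρ₀ m₁ m₂ / 2) (lam / 2) / sqNormGamma (1 / 2) (lam / 2) *
        (sqNormGamma ((m₁ + 2) / 4) (lam / 2) / sqNormGamma 1 (lam / 2)))) := by
  have hdup : sqNormGamma (1 / 2) (lam / 2) * sqNormGamma 1 (lam / 2) =
      Real.pi * sqNormGamma 1 lam := by
    have h := sqNormGamma_mul_sqNormGamma_add_half (1 / 2) (lam / 2)
    norm_num at h ⊢
    rwa [mul_div_cancel₀ lam two_ne_zero] at h
  have h₁ := sqNormGamma_pos one_pos lam
  rw [densHC_eq_const_mul_sqNormGamma, inv_sqNormGamma_zero, div_mul_div_comm, hdup]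
  field_simp

theorem isTheta_one_add_sq_one_add_abs_sq :
    (fun x : ℝ => 1 + x ^ 2) =Θ[⊤] fun x => (1 + |x|) ^ 2 := by
  constructor
  · refine isBigO_top.2 ⟨1, fun x => ?_⟩
    rw [Real.norm_of_nonneg (by positivity), Real.norm_of_nonneg (by positivity)]
    nlinarith [sq_abs x, abs_nonneg x]
  · refine isBigO_top.2 ⟨2, fun x => ?_⟩
    rw [Real.norm_of_nonneg (by positivity), Real.norm_of_nonneg (by positivity)]
    nlinarith [sq_abs x, sq_nonneg (1 - |x|)]

theorem isTheta_sqNormGamma_half_div {a b : ℝ} (ha : 0 < a) (hb : 0 < b) :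
    (fun x => sqNormGamma b (x / 2) / sqNormGamma a (x / 2)) =Θ[⊤]
      fun x => (1 + |x|) ^ (2 * (b - a)) := by
  have hhalf : (fun x : ℝ => 1 + (x / 2) ^ 2) =Θ[⊤] fun x => (1 + |x|) ^ 2 := by
    simpa only [div_pow] using
      (isTheta_one_add_sq_div two_ne_zero).trans isTheta_one_add_sq_one_add_abs_sq
  have hΓ := isTheta_sqNormGamma_div ha hb
  calc (fun x => sqNormGamma b (x / 2) / sqNormGamma a (x / 2))
      =Θ[⊤] fun x => (1 + (x / 2) ^ 2) ^ (b - a) :=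
        ⟨hΓ.1.comp_tendsto tendsto_top, hΓ.2.comp_tendsto tendsto_top⟩
    _ =Θ[⊤] fun x => ((1 + |x|) ^ 2) ^ (b - a) :=
        hhalf.rpow (.of_forall fun x => (by positivity : 0 ≤ 1 + (x / 2) ^ 2))
          (.of_forall fun x => (by positivity : 0 ≤ (1 + |x|) ^ 2))
    _ = fun x => (1 + |x|) ^ (2 * (b - a)) :=
        funext fun x => (Real.rpow_natCast_mul (by positivity) 2 (b - a)).symm

theorem isTheta_densHC {m₁ m₂ : ℕ} (hm : 0 < m₁ + m₂) :
    densHC m₁ m₂ =Θ[⊤] fun lam => brokenPow 2 (m₁ + m₂) |lam| := by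
  have hρ : 0 < ρ₀ m₁ m₂ / 2 := by
    have hm' : (0 : ℝ) < m₁ + m₂ := by exact_mod_cast hm
    unfold ρ₀
    linarith [(Nat.cast_nonneg m₂ : (0 : ℝ) ≤ m₂)]
  have hK : ((2 ^ ρ₀ m₁ m₂) ^ 2 * sqNormGamma ((m₁ + m₂ + 1) / 2) 0)⁻¹ * Real.pi ≠ 0 := by
    have := sqNormGamma_pos (by positivity : (0 : ℝ) < (m₁ + m₂ + 1) / 2) 0
    positivity
  have hexp : 2 * (ρ₀ m₁ m₂ / 2 - 1 / 2) + 2 * (((m₁ : ℝ) + 2) / 4 - 1) = m₁ + m₂ - 2 := by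
    unfold ρ₀
    ring
  calc densHC m₁ m₂
      =Θ[⊤] fun lam => lam ^ 2 *
        (sqNormGamma (ρ₀ m₁ m₂ / 2) (lam / 2) / sqNormGamma (1 / 2) (lam / 2) *
          (sqNormGamma ((m₁ + 2) / 4) (lam / 2) / sqNormGamma 1 (lam / 2))) := by
        rw [funext (densHC_eq_const_mul_sq_mul_sqNormGamma_div m₁ m₂), isTheta_const_mul_left hK]
        exact isTheta_rfl
    _ =Θ[⊤] fun lam => lam ^ 2 * ((1 + |lam|) ^ (2 * (ρ₀ m₁ m₂ / 2 - 1 / 2)) *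
          (1 + |lam|) ^ (2 * (((m₁ : ℝ) + 2) / 4 - 1))) :=
        isTheta_rfl.mul ((isTheta_sqNormGamma_half_div one_half_pos hρ).mul
          (isTheta_sqNormGamma_half_div one_pos (by positivity)))
    _ = fun lam => brokenPow 2 (m₁ + m₂) |lam| := by
        funext lam
        rw [← Real.rpow_add (by positivity), hexp, brokenPow, Real.rpow_two, sq_abs]

end PlancherelDensity

theorem stmt13_general (m₁ m₂ : ℕ) (hm : 0 < m₁ + m₂) (n : ℕ) (hn : n = m₁ + m₂ + 1)
    (σ : ℝ) (hσ : 0 < σ) :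
    ∃ C₁ C₂ : ℝ, 0 < C₁ ∧ 0 < C₂ ∧
      (∀ t : ℝ, 0 < t → t ≤ 1 →
        ENNReal.ofReal (C₁ * t ^ (-(σ / 3))) ≤ rearr (νc m₁ m₂) (fun lam => |lam| ^ (-σ)) t ∧
        rearr (νc m₁ m₂) (fun lam => |lam| ^ (-σ)) t ≤ ENNReal.ofReal (C₂ * t ^ (-(σ / 3)))) ∧
      (∀ t : ℝ, 1 < t →
        ENNReal.ofReal (C₁ * t ^ (-(σ / n))) ≤ rearr (νc m₁ m₂) (fun lam => |lam| ^ (-σ)) t ∧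
        rearr (νc m₁ m₂) (fun lam => |lam| ^ (-σ)) t ≤ ENNReal.ofReal (C₂ * t ^ (-(σ / n)))) := by
  have hn₀ : (0 : ℝ) < n := by rw [hn]; positivity
  have hnonneg : 0 ≤ densHC m₁ m₂ := fun lam => by unfold densHC; positivity
  have hΘ : densHC m₁ m₂ =Θ[ae volume] fun lam => brokenPow (3 - 1) (n - 1) |lam| := by
    convert (isTheta_densHC hm).mono le_top using 4
    · norm_num
    · rw [hn]; push_cast; ring
  obtain ⟨c, C, hc, hC, hν⟩ :=
    exists_withDensity_abs_preimage_Ioo_bounds three_pos hn₀ (.of_forall hnonneg) hΘ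
  exact exists_rearr_abs_rpow_neg_bounds three_pos hn₀ hc hC hσ hν

/-- rearrangement of the weight `u_σ(λ) = |λ|^{-σ}` with respect to the
Plancherel measure `|c(λ)|⁻² dλ`: it is `≍ t^{-σ/3}` for `t ≤ 1` and `≍ t^{-σ/n}` for
`t > 1`, where `n = m₁ + m₂ + 1`. -/
theorem stmt13 (m₁ m₂ : ℕ) (hm₁ : 1 ≤ m₁) (n : ℕ) (hn : n = m₁ + m₂ + 1)
    (σ : ℝ) (hσ : 0 < σ) :
    ∃ C₁ C₂ : ℝ, 0 < C₁ ∧ 0 < C₂ ∧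
      (∀ t : ℝ, 0 < t → t ≤ 1 →
        ENNReal.ofReal (C₁ * t ^ (-(σ / 3))) ≤ rearr (νc m₁ m₂) (fun lam => |lam| ^ (-σ)) t ∧
        rearr (νc m₁ m₂) (fun lam => |lam| ^ (-σ)) t ≤ ENNReal.ofReal (C₂ * t ^ (-(σ / 3)))) ∧
      (∀ t : ℝ, 1 < t →
        ENNReal.ofReal (C₁ * t ^ (-(σ / n))) ≤ rearr (νc m₁ m₂) (fun lam => |lam| ^ (-σ)) t ∧
        rearr (νc m₁ m₂) (fun lam => |lam| ^ (-σ)) t ≤ ENNReal.ofReal (C₂ * t ^ (-(σ / n)))) :=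
  stmt13_general m₁ m₂ (by omega) n hn σ hσ
end

section
/- Let N ≥ 1 be an integer, 1 < p ≤ q < ∞ with p' = p/(p−1), and let σ, κ ∈ ℝ. There exists a constant C > 0 such that ( ∫_{ℝ^N} |𝓕f(ξ)|^q |ξ|^{−qσ} dξ )^{1/q} ≤ C ( ∫_{ℝ^N} |f(x)|^p |x|^{pκ} dx )^{1/p} for all f ∈ C_c^∞(ℝ^N), if and only if κ − σ = N(1 − 1/p − 1/q), 0 ≤ σ < N/q, and 0 ≤ κ < N/p'. -/
open MeasureTheory Set ENNReal

/-- The Fourier transform `𝓕f(ξ) = ∫ f(x) e^{-i⟨ξ,x⟩} dx` on `ℝ^N`. -/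
noncomputable def FT {N : ℕ} (f : EuclideanSpace ℝ (Fin N) → ℂ)
    (ξ : EuclideanSpace ℝ (Fin N)) : ℂ :=
  ∫ x, f x * Complex.exp (-(Complex.I * ((inner ℝ ξ x : ℝ) : ℂ)))

/-!
For sufficiency, let `g` be a dual function and cut both `f` and `g` into layers according to their
size. For `|u| ≤ 1_A` the trivial `L¹ → L^∞` bound and Plancherel's theorem give
`∫_B |𝓕u| ≤ min(|A||B|, c (|A||B|)^{1/2})`, so `∫ |𝓕f| |g|` is controlled by the distribution
functions of `f` and `g` alone. The minimum decays geometrically away from `|A||B| ≈ 1` relative to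
the power `(|A||B|)^ρ`, where `ρ = 1/p + κ/N` lies strictly between `1/2` and `1`; hence a dyadic
decomposition and Young's inequality on `ℤ` bound the bilinear form by Lorentz quasinorms of `f`
and `g`, and these are at most the power-weighted norms because among the sets of given measure the
balls about the origin minimise `∫ |x|^a`. The remaining case `ρ = 1/2` forces `p = q = 2` and
`κ = σ = 0`, which is Plancherel's theorem.

For necessity, the inequality is applied to a fixed bump function `f` with `𝓕f(0) ≠ 0`: dilations
give the scaling relation, modulations move `𝓕f` to infinity and give `0 ≤ σ`, translations move `f`
to infinity and give `0 ≤ κ`, and integrability of `|ξ|^{-qσ}` at the origin gives `σ < N/q`.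
-/

/-! ### Discrete inequalities -/

section DiscreteYoung

variable {ι G : Type*}

lemma tsum_rpow_one_div_le_of_le (b : ι → ℝ≥0∞) {s t : ℝ} (hs : 0 < s) (hst : s ≤ t) :
    (∑' k, b k ^ t) ^ (1 / t) ≤ (∑' k, b k ^ s) ^ (1 / s) := by
  have ht : 0 < t := hs.trans_le hst
  set S := (∑' k, b k ^ s) ^ (1 / s) with hS
  have hSs : ∑' k, b k ^ s = S ^ s := by
    rw [hS, ← ENNReal.rpow_mul, one_div_mul_cancel hs.ne', ENNReal.rpow_one]
  have hb (k) : b k ≤ S := by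
    rw [hS, one_div, ENNReal.le_rpow_inv_iff hs]
    exact ENNReal.le_tsum k
  have hsplit (x : ℝ≥0∞) : x ^ t = x ^ s * x ^ (t - s) := by
    rw [← ENNReal.rpow_add_of_nonneg _ _ hs.le (sub_nonneg.2 hst), add_sub_cancel]
  rw [one_div t, ENNReal.rpow_inv_le_iff ht]
  calc ∑' k, b k ^ t = ∑' k, b k ^ s * b k ^ (t - s) := by simp only [hsplit]
    _ ≤ ∑' k, b k ^ s * S ^ (t - s) := by gcongr with k; exact hb k
    _ = S ^ t := by rw [ENNReal.tsum_mul_right, hSs, ← hsplit]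

lemma tsum_mul_le_Lp_mul_Lq {p q : ℝ} (hpq : p.HolderConjugate q) (a b : ι → ℝ≥0∞) :
    ∑' k, a k * b k ≤ (∑' k, a k ^ p) ^ (1 / p) * (∑' k, b k ^ q) ^ (1 / q) := by
  let : MeasurableSpace ι := ⊤
  simpa only [lintegral_count, Pi.mul_apply] using
    ENNReal.lintegral_mul_le_Lp_mul_Lq Measure.count hpq
      (measurable_from_top (f := a)).aemeasurable (measurable_from_top (f := b)).aemeasurable

lemma tsum_tsum_add_mul_mul_le [AddCommGroup G] {p p' s : ℝ} (hp : p.HolderConjugate p')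
    (hs : 0 < s) (hsp : s ≤ p') (ψ a b : G → ℝ≥0∞) :
    ∑' k, ∑' j, ψ (k + j) * (a k * b j) ≤
      (∑' n, ψ n) * ((∑' k, a k ^ p) ^ (1 / p) * (∑' j, b j ^ s) ^ (1 / s)) := by
  have hfibre (n : G) :
      ∑' k, a k * b (n - k) ≤ (∑' k, a k ^ p) ^ (1 / p) * (∑' j, b j ^ s) ^ (1 / s) :=
    calc ∑' k, a k * b (n - k)
        ≤ (∑' k, a k ^ p) ^ (1 / p) * (∑' k, b (n - k) ^ p') ^ (1 / p') :=
          tsum_mul_le_Lp_mul_Lq hp a fun k => b (n - k)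
      _ = (∑' k, a k ^ p) ^ (1 / p) * (∑' j, b j ^ p') ^ (1 / p') := by
          rw [← (Equiv.subLeft n).tsum_eq fun j => b j ^ p']
          simp only [Equiv.subLeft_apply]
      _ ≤ _ := by gcongr; exact tsum_rpow_one_div_le_of_le b hs hsp
  calc ∑' k, ∑' j, ψ (k + j) * (a k * b j)
      = ∑' k, ∑' n, ψ n * (a k * b (n - k)) := by
        congr 1 with k
        rw [← (Equiv.addLeft k).tsum_eq fun n => ψ n * (a k * b (n - k))]
        simp
    _ = ∑' n, ψ n * ∑' k, a k * b (n - k) := by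
        rw [ENNReal.tsum_comm]
        simp only [ENNReal.tsum_mul_left]
    _ ≤ _ := by
        rw [← ENNReal.tsum_mul_right]
        gcongr with n
        exact hfibre n

end DiscreteYoung

section PowersOfTwo

lemma two_zpow_ne_zero (k : ℤ) : (2 : ℝ≥0∞) ^ k ≠ 0 :=
  (ENNReal.zpow_pos two_ne_zero ofNat_ne_top k).ne'

lemma two_zpow_ne_top (k : ℤ) : (2 : ℝ≥0∞) ^ k ≠ ∞ :=
  ENNReal.zpow_ne_top two_ne_zero ofNat_ne_top k

lemma two_zpow_rpow_mul_two_zpow_rpow (k : ℤ) (x y : ℝ) :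
    ((2 : ℝ≥0∞) ^ k) ^ x * (2 ^ k) ^ y = (2 ^ k) ^ (x + y) :=
  (ENNReal.rpow_add x y (two_zpow_ne_zero k) (two_zpow_ne_top k)).symm

lemma tsum_two_zpow_rpow_lt_top {x : ℝ} (hx : x < 0) :
    ∑' n : ℕ, ((2 : ℝ≥0∞) ^ (n : ℤ)) ^ x < ∞ := by
  have hpow (n : ℕ) : ((2 : ℝ≥0∞) ^ (n : ℤ)) ^ x = (2 ^ x) ^ n := by
    rw [zpow_natCast, ← ENNReal.rpow_natCast, ← ENNReal.rpow_natCast, ← ENNReal.rpow_mul,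
      ← ENNReal.rpow_mul, mul_comm]
  simp only [hpow]
  rw [ENNReal.tsum_geometric, ENNReal.inv_lt_top, tsub_pos_iff_lt]
  exact ENNReal.rpow_lt_one_of_one_lt_of_neg one_lt_two hx

lemma tsum_min_mul_rpow_two_zpow_lt_top {c : ℝ≥0∞} (hc : c ≠ ∞) {θ ρ : ℝ} (hθ : 0 ≤ θ)
    (hθρ : θ < ρ) (hρ : ρ < 1) :
    ∑' n : ℤ, min (4 * 2 ^ n) (c * (4 * 2 ^ n) ^ θ) * ((2 : ℝ≥0∞) ^ n) ^ (-ρ) < ∞ := by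
  have hlarge (n : ℤ) : min (4 * 2 ^ n) (c * (4 * 2 ^ n) ^ θ) * ((2 : ℝ≥0∞) ^ n) ^ (-ρ) ≤
      c * 4 ^ θ * (2 ^ n) ^ (θ - ρ) := by
    refine (mul_le_mul_left (min_le_right _ _) _).trans_eq ?_
    rw [ENNReal.mul_rpow_of_nonneg _ _ hθ, sub_eq_add_neg, ← two_zpow_rpow_mul_two_zpow_rpow]
    ring
  have hsmall (n : ℤ) : min (4 * 2 ^ n) (c * (4 * 2 ^ n) ^ θ) * ((2 : ℝ≥0∞) ^ n) ^ (-ρ) ≤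
      4 * (2 ^ n) ^ (1 - ρ) := by
    refine (mul_le_mul_left (min_le_left _ _) _).trans_eq ?_
    rw [sub_eq_add_neg, ← two_zpow_rpow_mul_two_zpow_rpow, ENNReal.rpow_one]
    ring
  have hneg (n : ℕ) : ((2 : ℝ≥0∞) ^ (-(n : ℤ))) ^ (1 - ρ) = (2 ^ (n : ℤ)) ^ (ρ - 1) := by
    rw [ENNReal.zpow_neg, ENNReal.inv_rpow, ← ENNReal.rpow_neg, neg_sub]
  have hsum := tsum_of_nat_of_neg_add_one (f := fun n : ℤ =>
    min (4 * 2 ^ n) (c * (4 * 2 ^ n) ^ θ) * ((2 : ℝ≥0∞) ^ n) ^ (-ρ)) ENNReal.summable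
    ENNReal.summable
  rw [hsum]
  refine ENNReal.add_lt_top.2 ⟨?_, ?_⟩
  · refine (ENNReal.tsum_le_tsum fun n : ℕ => hlarge n).trans_lt ?_
    rw [ENNReal.tsum_mul_left]
    exact ENNReal.mul_lt_top
      (ENNReal.mul_lt_top hc.lt_top (ENNReal.rpow_lt_top_of_nonneg hθ ofNat_ne_top))
      (tsum_two_zpow_rpow_lt_top (sub_neg.2 hθρ))
  · refine (ENNReal.tsum_le_tsum fun n : ℕ => hsmall _).trans_lt ?_
    rw [ENNReal.tsum_mul_left]
    refine ENNReal.mul_lt_top ofNat_lt_top (lt_of_le_of_lt ?_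
      (tsum_two_zpow_rpow_lt_top (sub_neg.2 hρ)))
    simp only [← hneg]
    exact ENNReal.tsum_comp_le_tsum_of_injective (add_left_injective 1)
      fun n : ℕ => ((2 : ℝ≥0∞) ^ (-(n : ℤ))) ^ (1 - ρ)

end PowersOfTwo

/-! ### Sublevel sets of power weights -/

section PowerWeight

variable {E : Type*} [NormedAddCommGroup E] [MeasurableSpace E] {μ : Measure E}

lemma ofReal_rpow_mul_sub_measure_ball_le_setLIntegral [OpensMeasurableSpace E] {a R : ℝ}
    (ha : 0 ≤ a) (hR : 0 ≤ R) (S : Set E) :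
    ENNReal.ofReal (R ^ a) * (μ S - μ (Metric.ball 0 R)) ≤
      ∫⁻ x in S, ENNReal.ofReal (‖x‖ ^ a) ∂μ := by
  let T : Set E := {x | ENNReal.ofReal (R ^ a) ≤ ENNReal.ofReal (‖x‖ ^ a)}
  have hT : MeasurableSet T := measurableSet_le measurable_const (by fun_prop)
  have hfar : S \ Metric.ball 0 R ⊆ T := by
    intro x hx
    have hRx : R ≤ ‖x‖ := by simpa using hx.2
    exact ENNReal.ofReal_le_ofReal (by gcongr)
  have hμ : μ S - μ (Metric.ball 0 R) ≤ μ.restrict S T := by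
    rw [tsub_le_iff_right, Measure.restrict_apply hT]
    calc μ S ≤ μ (S \ Metric.ball 0 R) + μ (Metric.ball 0 R) :=
          (measure_mono (subset_sdiff_union S _)).trans (measure_union_le _ _)
      _ ≤ μ (T ∩ S) + μ (Metric.ball 0 R) := by gcongr; exact subset_inter hfar sdiff_subset
  exact (mul_le_mul_right hμ _).trans (mul_meas_ge_le_lintegral (by fun_prop) _)

variable [NormedSpace ℝ E] [FiniteDimensional ℝ E] [Nontrivial E] [BorelSpace E]

lemma measure_ball_rpow_div_finrank (μ : Measure E) [μ.IsAddHaarMeasure] {a R : ℝ} (ha : 0 ≤ a)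
    (hR : 0 ≤ R) :
    μ (Metric.ball 0 R) ^ (a / Module.finrank ℝ E) =
      ENNReal.ofReal (R ^ a) * μ (Metric.ball 0 1) ^ (a / Module.finrank ℝ E) := by
  have hd : (Module.finrank ℝ E : ℝ) ≠ 0 := by exact_mod_cast Module.finrank_pos.ne'
  rw [Measure.addHaar_ball μ 0 hR, ENNReal.mul_rpow_of_nonneg _ _ (by positivity),
    ENNReal.ofReal_rpow_of_nonneg (by positivity) (by positivity), ← Real.rpow_natCast,
    ← Real.rpow_mul hR, mul_div_cancel₀ _ hd]

lemma exists_measure_ball_zero_eq (μ : Measure E) [μ.IsAddHaarMeasure] {m : ℝ≥0∞} (hm : m ≠ ∞) :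
    ∃ R : ℝ, 0 ≤ R ∧ μ (Metric.ball 0 R) = m := by
  have hv₀ : μ (Metric.ball 0 1) ≠ 0 := (Metric.measure_ball_pos μ 0 one_pos).ne'
  have hvtop : μ (Metric.ball 0 1) ≠ ∞ := measure_ball_lt_top.ne
  refine ⟨(m / μ (Metric.ball 0 1)).toReal ^ (1 / Module.finrank ℝ E : ℝ), by positivity, ?_⟩
  rw [Measure.addHaar_ball μ 0 (by positivity), one_div,
    Real.rpow_inv_natCast_pow toReal_nonneg Module.finrank_pos.ne',
    ENNReal.ofReal_toReal (ENNReal.div_ne_top hm hv₀), ENNReal.div_mul_cancel hv₀ hvtop]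

-- The bathtub principle: up to a constant, balls about the origin minimise the weighted measure
-- among the sets of a given measure.
lemma exists_measure_rpow_le_mul_setLIntegral_norm_rpow (μ : Measure E) [μ.IsAddHaarMeasure]
    {a : ℝ} (ha : 0 ≤ a) :
    ∃ C : ℝ≥0∞, C ≠ ∞ ∧ ∀ S : Set E, μ S ^ (1 + a / Module.finrank ℝ E) ≤
      C * ∫⁻ x in S, ENNReal.ofReal (‖x‖ ^ a) ∂μ := by
  set d : ℝ := (Module.finrank ℝ E : ℝ)
  set v := μ (Metric.ball 0 1)
  have hvtop : v ≠ ∞ := measure_ball_lt_top.ne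
  have had : 0 ≤ a / d := by positivity
  have hC₀ : 2 ^ (1 + a / d) * v ^ (a / d) ≠ 0 := by
    have hv₀ : 0 < v := Metric.measure_ball_pos μ 0 one_pos
    exact mul_ne_zero (ENNReal.rpow_pos two_pos ofNat_ne_top).ne' (ENNReal.rpow_pos hv₀ hvtop).ne'
  refine ⟨2 ^ (1 + a / d) * v ^ (a / d), ENNReal.mul_ne_top
    (ENNReal.rpow_ne_top_of_nonneg (by positivity) ofNat_ne_top)
    (ENNReal.rpow_ne_top_of_nonneg had hvtop), fun S => ?_⟩
  rcases eq_or_ne (μ S) ∞ with hS | hS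
  · have hint := ofReal_rpow_mul_sub_measure_ball_le_setLIntegral (μ := μ) ha zero_le_one S
    rw [hS, ENNReal.top_sub hvtop, Real.one_rpow, ENNReal.ofReal_one, one_mul, top_le_iff] at hint
    rw [hint, ENNReal.mul_top hC₀]
    exact le_top
  have hhalf : μ S / 2 ≠ ∞ := ENNReal.div_ne_top hS two_ne_zero
  obtain ⟨R, hR, hball⟩ := exists_measure_ball_zero_eq μ hhalf
  have hsplit (x : ℝ≥0∞) : x ^ (1 + a / d) = x ^ (a / d) * x := by
    rw [add_comm, ENNReal.rpow_add_of_nonneg _ _ had zero_le_one, ENNReal.rpow_one]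
  calc μ S ^ (1 + a / d) = 2 ^ (1 + a / d) * (μ S / 2) ^ (1 + a / d) := by
        rw [← ENNReal.mul_rpow_of_nonneg _ _ (by positivity),
          ENNReal.mul_div_cancel two_ne_zero ofNat_ne_top]
    _ = 2 ^ (1 + a / d) * v ^ (a / d) * (ENNReal.ofReal (R ^ a) * (μ S - μ (Metric.ball 0 R))) := by
        rw [hsplit (μ S / 2), hball, ENNReal.sub_half hS]
        nth_rewrite 1 [← hball]
        rw [measure_ball_rpow_div_finrank μ ha hR]
        ring
    _ ≤ _ := by
        gcongr
        exact ofReal_rpow_mul_sub_measure_ball_le_setLIntegral ha hR S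

end PowerWeight

/-! ### Dyadic decomposition of bilinear forms -/

section Dyadic

variable {α β : Type*} {m : α → ℝ≥0∞} {n : β → ℝ≥0∞}

/-- The set where `m` lies between two consecutive powers of two. -/
def dyadicLevel (m : α → ℝ≥0∞) (k : ℤ) : Set α := m ⁻¹' Ico (2 ^ k) (2 ^ (k + 1))

lemma pairwise_disjoint_dyadicLevel (m : α → ℝ≥0∞) :
    Pairwise (Function.onFun Disjoint (dyadicLevel m)) := by
  have hmono : Monotone fun k : ℤ => (2 : ℝ≥0∞) ^ k := ENNReal.monotone_zpow one_le_two
  exact hmono.pairwise_disjoint_on_Ico_succ.mono fun _ _ h => h.preimage m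

lemma mul_le_of_mem_dyadicLevel {k j : ℤ} {x : α} {y : β} (hx : x ∈ dyadicLevel m k)
    (hy : y ∈ dyadicLevel n j) : m x * n y ≤ 4 * 2 ^ (k + j) :=
  calc m x * n y ≤ 2 ^ (k + 1) * 2 ^ (j + 1) := mul_le_mul' hx.2.le hy.2.le
    _ = 4 * 2 ^ (k + j) := by
        simp only [ENNReal.zpow_add two_ne_zero ofNat_ne_top, zpow_one]
        ring

variable [MeasurableSpace α] [MeasurableSpace β] {μ : Measure α} {ν : Measure β}

lemma measurableSet_dyadicLevel (hm : Measurable m) (k : ℤ) : MeasurableSet (dyadicLevel m k) :=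
  hm measurableSet_Ico

lemma tsum_setLIntegral_dyadicLevel_le (hm : Measurable m) (F : α → ℝ≥0∞) :
    ∑' k, ∫⁻ x in dyadicLevel m k, F x ∂μ ≤ ∫⁻ x, F x ∂μ := by
  rw [← lintegral_iUnion (measurableSet_dyadicLevel hm) (pairwise_disjoint_dyadicLevel m)]
  exact setLIntegral_le_lintegral _ _

lemma lintegral_eq_tsum_setLIntegral_dyadicLevel (hm : Measurable m) (hmtop : ∀ᵐ x ∂μ, m x ≠ ∞)
    {F : α → ℝ≥0∞} (hF : ∀ x, m x = 0 → F x = 0) :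
    ∫⁻ x, F x ∂μ = ∑' k, ∫⁻ x in dyadicLevel m k, F x ∂μ := by
  rw [← lintegral_iUnion (measurableSet_dyadicLevel hm) (pairwise_disjoint_dyadicLevel m),
    ← lintegral_indicator (MeasurableSet.iUnion (measurableSet_dyadicLevel hm))]
  refine lintegral_congr_ae ?_
  filter_upwards [hmtop] with x hx
  by_cases h₀ : m x = 0
  · rw [hF x h₀, indicator_apply_eq_zero.2 fun _ => hF x h₀]
  · obtain ⟨k, hk⟩ := ENNReal.exists_mem_Ico_zpow h₀ hx one_lt_two ofNat_ne_top
    rw [indicator_of_mem (mem_iUnion.2 ⟨k, hk⟩)]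

lemma lintegral_lintegral_le_tsum_dyadicLevel {K : ℝ≥0∞ → ℝ≥0∞} (hK : Monotone K) (hK₀ : K 0 = 0)
    (hm : Measurable m) (hmtop : ∀ᵐ x ∂μ, m x ≠ ∞) (hn : Measurable n)
    (hntop : ∀ᵐ y ∂ν, n y ≠ ∞) :
    ∫⁻ x, ∫⁻ y, K (m x * n y) ∂ν ∂μ ≤
      ∑' k, ∑' j, K (4 * 2 ^ (k + j)) * (μ (dyadicLevel m k) * ν (dyadicLevel n j)) := by
  have hinner (k : ℤ) : ∀ x ∈ dyadicLevel m k,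
      ∫⁻ y, K (m x * n y) ∂ν ≤ ∑' j, K (4 * 2 ^ (k + j)) * ν (dyadicLevel n j) := by
    intro x hx
    rw [lintegral_eq_tsum_setLIntegral_dyadicLevel hn hntop fun y hy => by rw [hy, mul_zero, hK₀]]
    refine ENNReal.tsum_le_tsum fun j => ?_
    rw [← setLIntegral_const]
    exact setLIntegral_mono' (measurableSet_dyadicLevel hn j) fun y hy =>
      hK (mul_le_of_mem_dyadicLevel hx hy)
  rw [lintegral_eq_tsum_setLIntegral_dyadicLevel hm hmtop fun x hx => by
    simp only [hx, zero_mul, hK₀, lintegral_zero]]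
  refine ENNReal.tsum_le_tsum fun k => ?_
  refine (setLIntegral_mono' (measurableSet_dyadicLevel hm k) (hinner k)).trans_eq ?_
  rw [setLIntegral_const, ← ENNReal.tsum_mul_right]
  refine tsum_congr fun j => ?_
  rw [mul_assoc, mul_comm (ν _)]

end Dyadic

section Lorentz

/-- The Lorentz quasinorm `L^{1/ρ, p}`, up to a constant factor, as a functional of the
distribution function `m` of a function. -/
noncomputable def lorentzNorm (p ρ : ℝ) (m : ℝ → ℝ≥0∞) : ℝ≥0∞ :=
  (∫⁻ s in Ioi (0 : ℝ), m s ^ (p * ρ) * ENNReal.ofReal (s ^ (p - 1))) ^ (1 / p)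

lemma exists_volume_rpow_le_mul_setLIntegral {p : ℝ} (hp : 1 ≤ p) :
    ∃ C : ℝ≥0∞, C ≠ ∞ ∧ ∀ S : Set ℝ, MeasurableSet S → volume.restrict (Ioi 0) S ^ p ≤
      C * ∫⁻ s in S, ENNReal.ofReal (s ^ (p - 1)) ∂volume.restrict (Ioi 0) := by
  obtain ⟨C, hC, h⟩ :=
    exists_measure_rpow_le_mul_setLIntegral_norm_rpow (volume : Measure ℝ) (sub_nonneg.2 hp)
  refine ⟨C, hC, fun S hS => ?_⟩
  rw [Measure.restrict_restrict hS, Measure.restrict_apply hS]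
  have hbath := h (S ∩ Ioi 0)
  rw [Module.finrank_self, Nat.cast_one, div_one, add_sub_cancel] at hbath
  refine hbath.trans_eq (congrArg (C * ·) ?_)
  exact setLIntegral_congr_fun (hS.inter measurableSet_Ioi) fun s hs => by
    simp only [Real.norm_eq_abs, abs_of_pos (mem_Ioi.1 hs.2)]

lemma exists_tsum_dyadicLevel_le_mul_lorentzNorm {p ρ : ℝ} (hp : 1 ≤ p) (hρ : 0 ≤ ρ) :
    ∃ C : ℝ≥0∞, C ≠ ∞ ∧ ∀ m : ℝ → ℝ≥0∞, Measurable m →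
      (∑' k, (volume.restrict (Ioi 0) (dyadicLevel m k) * (2 ^ k) ^ ρ) ^ p) ^ (1 / p) ≤
        C * lorentzNorm p ρ m := by
  obtain ⟨C, hC, hbath⟩ := exists_volume_rpow_le_mul_setLIntegral hp
  have hp₀ : 0 ≤ 1 / p := by positivity
  refine ⟨C ^ (1 / p), ENNReal.rpow_ne_top_of_nonneg hp₀ hC, fun m hm => ?_⟩
  rw [lorentzNorm, ← ENNReal.mul_rpow_of_nonneg _ _ hp₀]
  gcongr
  set w : ℝ → ℝ≥0∞ := fun s => ENNReal.ofReal (s ^ (p - 1))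
  have hlevel (k : ℤ) : (volume.restrict (Ioi 0) (dyadicLevel m k) * (2 ^ k) ^ ρ) ^ p ≤
      C * ∫⁻ s in dyadicLevel m k, m s ^ (p * ρ) * w s ∂volume.restrict (Ioi 0) :=
    calc (volume.restrict (Ioi 0) (dyadicLevel m k) * (2 ^ k) ^ ρ) ^ p
        = (2 ^ k) ^ (p * ρ) * volume.restrict (Ioi 0) (dyadicLevel m k) ^ p := by
          rw [ENNReal.mul_rpow_of_nonneg _ _ (by linarith), ← ENNReal.rpow_mul, mul_comm,
            mul_comm p]
      _ ≤ (2 ^ k) ^ (p * ρ) * (C * ∫⁻ s in dyadicLevel m k, w s ∂volume.restrict (Ioi 0)) := by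
          gcongr
          exact hbath _ (measurableSet_dyadicLevel hm k)
      _ = C * ∫⁻ s in dyadicLevel m k, (2 ^ k) ^ (p * ρ) * w s ∂volume.restrict (Ioi 0) := by
          rw [lintegral_const_mul _ (by fun_prop)]
          ring
      _ ≤ _ := by
          refine mul_le_mul_right ?_ C
          refine setLIntegral_mono' (measurableSet_dyadicLevel hm k) fun s hs => ?_
          gcongr
          exact hs.1
  refine (ENNReal.tsum_le_tsum hlevel).trans ?_
  rw [ENNReal.tsum_mul_left]
  gcongr
  exact tsum_setLIntegral_dyadicLevel_le hm _

lemma exists_lintegral_lintegral_le_mul_lorentzNorm {p p' s ρ : ℝ} (hp : p.HolderConjugate p')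
    (hs : 1 ≤ s) (hsp : s ≤ p') (hρ : 0 ≤ ρ) {K : ℝ≥0∞ → ℝ≥0∞} (hK : Monotone K) (hK₀ : K 0 = 0)
    (hKsum : ∑' n : ℤ, K (4 * 2 ^ n) * (2 ^ n) ^ (-ρ) < ∞) :
    ∃ C : ℝ≥0∞, C ≠ ∞ ∧ ∀ m n : ℝ → ℝ≥0∞, Measurable m → (∀ x, 0 < x → m x ≠ ∞) →
      Measurable n → (∀ y, 0 < y → n y ≠ ∞) →
      ∫⁻ x in Ioi (0 : ℝ), ∫⁻ y in Ioi (0 : ℝ), K (m x * n y) ≤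
        C * (lorentzNorm p ρ m * lorentzNorm s ρ n) := by
  obtain ⟨C₁, hC₁, h₁⟩ := exists_tsum_dyadicLevel_le_mul_lorentzNorm hp.lt.le hρ
  obtain ⟨C₂, hC₂, h₂⟩ := exists_tsum_dyadicLevel_le_mul_lorentzNorm hs hρ
  set ψ : ℤ → ℝ≥0∞ := fun n => K (4 * 2 ^ n) * (2 ^ n) ^ (-ρ) with hψ
  refine ⟨(∑' n, ψ n) * (C₁ * C₂), ENNReal.mul_ne_top hKsum.ne (ENNReal.mul_ne_top hC₁ hC₂),
    fun m n hm hmtop hn hntop => ?_⟩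
  set a : ℤ → ℝ≥0∞ := fun k => volume.restrict (Ioi 0) (dyadicLevel m k)
  set b : ℤ → ℝ≥0∞ := fun k => volume.restrict (Ioi 0) (dyadicLevel n k)
  have hweight (k j : ℤ) : K (4 * 2 ^ (k + j)) * (a k * b j) =
      ψ (k + j) * (a k * (2 ^ k) ^ ρ * (b j * (2 ^ j) ^ ρ)) := by
    have hcancel : ((2 : ℝ≥0∞) ^ (k + j)) ^ (-ρ) * ((2 ^ k) ^ ρ * (2 ^ j) ^ ρ) = 1 := by
      rw [← ENNReal.mul_rpow_of_nonneg _ _ hρ, ← ENNReal.zpow_add two_ne_zero ofNat_ne_top,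
        two_zpow_rpow_mul_two_zpow_rpow, neg_add_cancel, ENNReal.rpow_zero]
    calc K (4 * 2 ^ (k + j)) * (a k * b j)
        = K (4 * 2 ^ (k + j)) * (a k * b j) *
            ((2 ^ (k + j)) ^ (-ρ) * ((2 ^ k) ^ ρ * (2 ^ j) ^ ρ)) := by rw [hcancel, mul_one]
      _ = _ := by rw [hψ]; ring
  calc ∫⁻ x in Ioi (0 : ℝ), ∫⁻ y in Ioi (0 : ℝ), K (m x * n y)
      ≤ ∑' k, ∑' j, K (4 * 2 ^ (k + j)) * (a k * b j) :=
        lintegral_lintegral_le_tsum_dyadicLevel hK hK₀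
          hm (ae_restrict_of_forall_mem measurableSet_Ioi hmtop)
          hn (ae_restrict_of_forall_mem measurableSet_Ioi hntop)
    _ = ∑' k, ∑' j, ψ (k + j) * (a k * (2 ^ k) ^ ρ * (b j * (2 ^ j) ^ ρ)) := by simp only [hweight]
    _ ≤ _ := tsum_tsum_add_mul_mul_le hp (by linarith) hsp _ _ _
    _ ≤ (∑' n, ψ n) * (C₁ * lorentzNorm p ρ m * (C₂ * lorentzNorm s ρ n)) := by
        gcongr
        exacts [h₁ m hm, h₂ n hn]
    _ = _ := by ring

end Lorentz

/-! ### Power-weighted norms and distribution functions -/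

/-- The norm `‖|x| ^ κ f‖_p` of the weighted space in which Pitt's inequality is set. -/
noncomputable def powerWeightedNorm {E F : Type*} [NormedAddCommGroup E] [MeasurableSpace E]
    [NormedAddCommGroup F] (p κ : ℝ) (f : E → F) (μ : Measure E := by volume_tac) : ℝ≥0∞ :=
  (∫⁻ x, ‖f x‖ₑ ^ p * ENNReal.ofReal (‖x‖ ^ (p * κ)) ∂μ) ^ (1 / p)

/-- The distribution function of `f`, giving the measure of the set where `‖f‖` exceeds `s`. -/
def distributionFunction {α F : Type*} [MeasurableSpace α] [NormedAddCommGroup F] (f : α → F)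
    (s : ℝ) (μ : Measure α := by volume_tac) : ℝ≥0∞ :=
  μ {x | s < ‖f x‖}

section PowerWeightedNorm

variable {E : Type*} [NormedAddCommGroup E] {p κ : ℝ}

lemma enorm_mul_norm_rpow_rpow (hp : 0 ≤ p) (a : ℝ) (x : E) :
    ‖a * ‖x‖ ^ κ‖ₑ ^ p = ‖a‖ₑ ^ p * ENNReal.ofReal (‖x‖ ^ (p * κ)) := by
  have hx : 0 ≤ ‖x‖ ^ κ := by positivity
  rw [enorm_mul, ENNReal.mul_rpow_of_nonneg _ _ hp, Real.enorm_of_nonneg hx,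
    ENNReal.ofReal_rpow_of_nonneg hx hp, ← Real.rpow_mul (norm_nonneg _), mul_comm κ]

lemma powerWeightedNorm_eq_lintegral {F : Type*} [NormedAddCommGroup F] [MeasurableSpace E]
    {μ : Measure E} (hp : 0 ≤ p) (f : E → F) :
    powerWeightedNorm p κ f μ = (∫⁻ x, ‖‖f x‖ * ‖x‖ ^ κ‖ₑ ^ p ∂μ) ^ (1 / p) := by
  simp only [powerWeightedNorm, enorm_mul_norm_rpow_rpow hp, enorm_norm]

end PowerWeightedNorm

section DistributionFunction

variable {α F : Type*} [MeasurableSpace α] [NormedAddCommGroup F] {μ : Measure α} {f : α → F}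

lemma antitone_distributionFunction : Antitone fun s => distributionFunction f s μ :=
  fun _ _ hst => measure_mono fun _ hx => hst.trans_lt hx

lemma measurable_distributionFunction : Measurable fun s => distributionFunction f s μ :=
  antitone_distributionFunction.measurable

lemma distributionFunction_ne_top_of_integrable (hf : Integrable f μ) {s : ℝ} (hs : 0 < s) :
    distributionFunction f s μ ≠ ∞ :=
  (hf.measure_norm_gt_lt_top hs).ne

lemma distributionFunction_ne_top_of_measure_support (hf : μ (Function.support f) ≠ ∞) {s : ℝ}
    (hs : 0 < s) : distributionFunction f s μ ≠ ∞ := by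
  refine ne_top_of_le_ne_top hf (measure_mono fun x hx => ?_)
  exact norm_pos_iff.1 (hs.trans hx)

lemma lintegral_enorm_rpow_mul_eq_lintegral_setLIntegral {w : α → ℝ≥0∞} (hw : Measurable w)
    (hf : Measurable fun x => ‖f x‖) {p : ℝ} (hp : 0 < p) :
    ∫⁻ x, ‖f x‖ₑ ^ p * w x ∂μ =
      ENNReal.ofReal p * ∫⁻ s in Ioi (0 : ℝ), (∫⁻ x in {x | s < ‖f x‖}, w x ∂μ) *
        ENNReal.ofReal (s ^ (p - 1)) := by
  have hlayer := lintegral_rpow_eq_lintegral_meas_lt_mul (μ.withDensity w)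
    (.of_forall fun x => norm_nonneg (f x)) hf.aemeasurable hp
  simp only [withDensity_apply w (measurableSet_lt measurable_const hf)] at hlayer
  rw [← hlayer, lintegral_withDensity_eq_lintegral_mul _ hw (by fun_prop)]
  refine lintegral_congr fun x => ?_
  rw [Pi.mul_apply, mul_comm, ← ENNReal.ofReal_rpow_of_nonneg (norm_nonneg _) hp.le, ofReal_norm]

lemma exists_lorentzNorm_distributionFunction_le {E : Type*} [NormedAddCommGroup E]
    [NormedSpace ℝ E] [FiniteDimensional ℝ E] [Nontrivial E] [MeasurableSpace E] [BorelSpace E]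
    (μ : Measure E) [μ.IsAddHaarMeasure] {p κ : ℝ} (hp : 0 < p) (hκ : 0 ≤ κ) :
    ∃ C : ℝ≥0∞, C ≠ ∞ ∧ ∀ f : E → F, (Measurable fun x => ‖f x‖) →
      lorentzNorm p (1 / p + κ / Module.finrank ℝ E) (fun s => distributionFunction f s μ) ≤
        C * powerWeightedNorm p κ f μ := by
  obtain ⟨C, hC, hbath⟩ :=
    exists_measure_rpow_le_mul_setLIntegral_norm_rpow μ (mul_nonneg hp.le hκ)
  have hp' : 0 ≤ 1 / p := by positivity
  have hpinv : (ENNReal.ofReal p)⁻¹ ≠ ∞ := ENNReal.inv_ne_top.2 (ENNReal.ofReal_pos.2 hp).ne'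
  refine ⟨(C * (ENNReal.ofReal p)⁻¹) ^ (1 / p),
    ENNReal.rpow_ne_top_of_nonneg hp' (ENNReal.mul_ne_top hC hpinv), fun f hf => ?_⟩
  have hexp : p * (1 / p + κ / Module.finrank ℝ E) = 1 + p * κ / Module.finrank ℝ E := by
    field_simp
  rw [lorentzNorm, powerWeightedNorm, ← ENNReal.mul_rpow_of_nonneg _ _ hp', hexp]
  gcongr
  rw [lintegral_enorm_rpow_mul_eq_lintegral_setLIntegral (by fun_prop) hf hp, mul_assoc,
    ENNReal.inv_mul_cancel_left (ENNReal.ofReal_pos.2 hp).ne' ENNReal.ofReal_ne_top,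
    ← lintegral_const_mul' _ _ hC]
  refine lintegral_mono fun s => ?_
  rw [← mul_assoc]
  exact mul_le_mul_left (hbath _) _

end DistributionFunction

section LayerCake

variable {α : Type*} {f : α → ℂ}

/-- The layer of `f` at height `s`: the phase of `f` on the set where `‖f‖` exceeds `s`.
Integrating the layers over `s > 0` recovers `f`. -/
noncomputable def levelPhase (f : α → ℂ) (s : ℝ) : α → ℂ :=
  {x | s < ‖f x‖}.indicator fun x => f x / ‖f x‖

lemma levelPhase_eq_indicator_Iio (f : α → ℂ) (s : ℝ) (x : α) :
    levelPhase f s x = (Iio ‖f x‖).indicator (fun _ => f x / ‖f x‖) s := by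
  simp only [levelPhase, indicator_apply, mem_ofPred_eq, mem_Iio]

lemma enorm_levelPhase_le (f : α → ℂ) (s : ℝ) (x : α) :
    ‖levelPhase f s x‖ₑ ≤ {x | s < ‖f x‖}.indicator 1 x := by
  rw [levelPhase, enorm_indicator_eq_indicator_enorm]
  refine indicator_le_indicator ?_
  rw [Pi.one_apply, ← ofReal_norm, ENNReal.ofReal_le_one, norm_div, Complex.norm_real, norm_norm]
  exact div_self_le_one _

lemma setIntegral_levelPhase (f : α → ℂ) (x : α) : ∫ s in Ioi (0 : ℝ), levelPhase f s x = f x := by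
  simp only [levelPhase_eq_indicator_Iio]
  rw [setIntegral_indicator measurableSet_Iio, Ioi_inter_Iio, setIntegral_const, measureReal_def,
    Real.volume_Ioo, sub_zero, ENNReal.toReal_ofReal (norm_nonneg _), Complex.real_smul]
  rcases eq_or_ne (f x) 0 with h₀ | h₀
  · rw [h₀, zero_div, mul_zero]
  · exact mul_div_cancel₀ _ (by simpa using h₀)

lemma setLIntegral_enorm_levelPhase_le (f : α → ℂ) (x : α) :
    ∫⁻ s in Ioi (0 : ℝ), ‖levelPhase f s x‖ₑ ≤ ‖f x‖ₑ :=
  calc ∫⁻ s in Ioi (0 : ℝ), ‖levelPhase f s x‖ₑ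
      ≤ ∫⁻ s in Ioi (0 : ℝ), (Iio ‖f x‖).indicator 1 s :=
        lintegral_mono fun s => enorm_levelPhase_le f s x
    _ = ‖f x‖ₑ := by
        rw [setLIntegral_indicator measurableSet_Iio, inter_comm, Ioi_inter_Iio]
        simp

variable [MeasurableSpace α] {μ : Measure α}

lemma measurable_uncurry_levelPhase (hf : Measurable f) :
    Measurable (Function.uncurry (levelPhase f)) := by
  have hset : MeasurableSet {z : ℝ × α | z.1 < ‖f z.2‖} :=
    measurableSet_lt measurable_fst (by fun_prop)
  have hquot : Measurable fun z : ℝ × α => f z.2 / ‖f z.2‖ := by fun_prop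
  exact hquot.indicator hset

lemma measurable_levelPhase (hf : Measurable f) (s : ℝ) : Measurable (levelPhase f s) :=
  (measurable_uncurry_levelPhase hf).comp measurable_prodMk_left

lemma enorm_integral_mul_le_setLIntegral_levelPhase [SFinite μ] (hf : Integrable f μ)
    (hfm : Measurable f) {h : α → ℂ} (hh : AEStronglyMeasurable h μ) (hh₁ : ∀ x, ‖h x‖ₑ ≤ 1) :
    ‖∫ x, f x * h x ∂μ‖ₑ ≤ ∫⁻ s in Ioi (0 : ℝ), ‖∫ x, levelPhase f s x * h x ∂μ‖ₑ := by
  have hmeas : AEStronglyMeasurable (Function.uncurry fun s x => levelPhase f s x * h x)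
      ((volume.restrict (Ioi (0 : ℝ))).prod μ) :=
    (measurable_uncurry_levelPhase hfm).aestronglyMeasurable.mul hh.comp_snd
  have hint : Integrable (Function.uncurry fun s x => levelPhase f s x * h x)
      ((volume.restrict (Ioi (0 : ℝ))).prod μ) := by
    refine ⟨hmeas, ?_⟩
    rw [hasFiniteIntegral_iff_enorm, lintegral_prod_symm _ hmeas.enorm]
    refine lt_of_le_of_lt (lintegral_mono fun x => ?_) hf.2
    calc ∫⁻ s in Ioi (0 : ℝ), ‖levelPhase f s x * h x‖ₑ
        ≤ ∫⁻ s in Ioi (0 : ℝ), ‖levelPhase f s x‖ₑ := by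
          refine lintegral_mono fun s => ?_
          rw [enorm_mul]
          exact mul_le_of_le_one_right' (hh₁ x)
      _ ≤ ‖f x‖ₑ := setLIntegral_enorm_levelPhase_le f x
  calc ‖∫ x, f x * h x ∂μ‖ₑ = ‖∫ x, (∫ s in Ioi (0 : ℝ), levelPhase f s x * h x) ∂μ‖ₑ := by
        simp only [integral_mul_const, setIntegral_levelPhase]
    _ = ‖∫ s in Ioi (0 : ℝ), (∫ x, levelPhase f s x * h x ∂μ)‖ₑ := by
        rw [integral_integral_swap hint]
    _ ≤ _ := enorm_integral_le_lintegral_enorm _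

end LayerCake

/-! ### The Fourier transform -/

lemma lintegral_comp_smul {E : Type*} [NormedAddCommGroup E] [NormedSpace ℝ E]
    [FiniteDimensional ℝ E] [MeasurableSpace E] [BorelSpace E] (μ : Measure E)
    [μ.IsAddHaarMeasure] (F : E → ℝ≥0∞) {c : ℝ} (hc : c ≠ 0) :
    ∫⁻ x, F (c • x) ∂μ = ENNReal.ofReal |(c ^ Module.finrank ℝ E)⁻¹| * ∫⁻ x, F x ∂μ := by
  rw [← (measurableEmbedding_const_smul₀ hc).lintegral_map, Measure.map_addHaar_smul μ hc,
    lintegral_smul_measure, smul_eq_mul]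

lemma eLpNorm_two_eq_lintegral {α F : Type*} [MeasurableSpace α] [NormedAddCommGroup F]
    {μ : Measure α} (f : α → F) : eLpNorm f 2 μ = (∫⁻ x, ‖f x‖ₑ ^ (2 : ℝ) ∂μ) ^ (1 / 2 : ℝ) := by
  simp [eLpNorm_eq_lintegral_rpow_enorm_toReal]

section Plancherel

open FourierTransform SchwartzMap

variable {V : Type*} [NormedAddCommGroup V] [InnerProductSpace ℝ V] [FiniteDimensional ℝ V]
  [MeasurableSpace V] [BorelSpace V] {f : V → ℂ}

lemma continuous_fourier_of_integrable (hf : Integrable f) : Continuous (𝓕 f) :=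
  VectorFourier.fourierIntegral_continuous Real.continuous_fourierChar
    (innerSL ℝ).continuous₂ hf

lemma integral_fourier_mul_eq_integral_mul_fourier {g : V → ℂ} (hf : Integrable f)
    (hg : Integrable g) : ∫ ξ, 𝓕 f ξ * g ξ = ∫ x, f x * 𝓕 g x := by
  have hflip := VectorFourier.integral_fourierIntegral_smul_eq_flip (L := innerₗ V) (μ := volume)
    (ν := volume) Real.continuous_fourierChar continuous_inner hf hg
  rwa [flip_innerₗ] at hflip

-- The `L²` transform is defined by density; it is identified with the integral by pairing both
-- with Schwartz functions.
lemma coeFn_fourier_toLp_ae_eq (hf : Integrable f) (hf₂ : MemLp f 2) :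
    (𝓕 (hf₂.toLp f) : Lp (α := V) ℂ 2) =ᵐ[volume] 𝓕 f := by
  refine ae_eq_of_integral_contDiff_smul_eq ((Lp.memLp _).locallyIntegrable one_le_two)
    (continuous_fourier_of_integrable hf).locallyIntegrable fun g hg hgs => ?_
  have hg' : ContDiff ℝ (⊤ : ℕ∞) fun x => (g x : ℂ) := Complex.ofRealCLM.contDiff.comp hg
  have hgs' : HasCompactSupport fun x => (g x : ℂ) :=
    hgs.comp_left (g := fun t : ℝ => (t : ℂ)) Complex.ofReal_zero
  let G : 𝓢(V, ℂ) := hgs'.toSchwartzMap hg'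
  have hpair := congrArg (fun T => T G) (Lp.fourier_toTemperedDistribution_eq (hf₂.toLp f))
  simp only [TemperedDistribution.fourier_apply, Lp.toTemperedDistribution_apply] at hpair
  calc ∫ x, g x • (𝓕 (hf₂.toLp f) : Lp ℂ 2 (volume : Measure V)) x =
        ∫ x, (𝓕 G : 𝓢(V, ℂ)) x • hf₂.toLp f x := hpair.symm
    _ = ∫ x, f x * 𝓕 (fun x => (g x : ℂ)) x := by
        refine integral_congr_ae ?_
        filter_upwards [hf₂.coeFn_toLp] with x hx
        rw [hx, smul_eq_mul, mul_comm, SchwartzMap.fourier_coe]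
        rfl
    _ = ∫ x, 𝓕 f x * (g x : ℂ) :=
        (integral_fourier_mul_eq_integral_mul_fourier hf
          (hg'.continuous.integrable_of_hasCompactSupport hgs')).symm
    _ = ∫ x, g x • 𝓕 f x := by simp only [Complex.real_smul, mul_comm]

lemma lintegral_enorm_fourier_sq (hf : Integrable f) (hf₂ : MemLp f 2) :
    ∫⁻ ξ, ‖𝓕 f ξ‖ₑ ^ (2 : ℝ) = ∫⁻ x, ‖f x‖ₑ ^ (2 : ℝ) := by
  have hnorm : eLpNorm (𝓕 f) 2 volume = eLpNorm f 2 volume := by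
    rw [← eLpNorm_congr_ae (coeFn_fourier_toLp_ae_eq hf hf₂), ← Lp.enorm_def,
      ← eLpNorm_congr_ae hf₂.coeFn_toLp, ← Lp.enorm_def, ← ofReal_norm, ← ofReal_norm,
      Lp.norm_fourier_eq]
  rw [eLpNorm_two_eq_lintegral, eLpNorm_two_eq_lintegral] at hnorm
  exact ENNReal.rpow_left_injective one_half_pos.ne' hnorm

end Plancherel

section FT

variable {N : ℕ} {f : EuclideanSpace ℝ (Fin N) → ℂ}

lemma enorm_FT_kernel (x ξ : EuclideanSpace ℝ (Fin N)) :
    ‖Complex.exp (-(Complex.I * ((inner ℝ ξ x : ℝ) : ℂ)))‖ₑ = 1 := by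
  rw [← ofReal_norm, Complex.norm_exp]
  simp

lemma enorm_FT_le_lintegral (f : EuclideanSpace ℝ (Fin N) → ℂ) (ξ : EuclideanSpace ℝ (Fin N)) :
    ‖FT f ξ‖ₑ ≤ ∫⁻ x, ‖f x‖ₑ := by
  refine (enorm_integral_le_lintegral_enorm _).trans_eq ?_
  simp only [enorm_mul, enorm_FT_kernel, mul_one]

lemma FT_eq_fourier (f : EuclideanSpace ℝ (Fin N) → ℂ) (ξ : EuclideanSpace ℝ (Fin N)) :
    FT f ξ = FourierTransform.fourier f ((2 * Real.pi)⁻¹ • ξ) := by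
  rw [FT, Real.fourier_eq']
  refine integral_congr_ae (.of_forall fun x => ?_)
  have hpi : (Real.pi : ℂ) ≠ 0 := Complex.ofReal_ne_zero.2 Real.pi_ne_zero
  simp only [smul_eq_mul, mul_comm (f x), inner_smul_right, real_inner_comm]
  congr 2
  push_cast
  field_simp

lemma continuous_FT (hf : Integrable f) : Continuous (FT f) := by
  rw [funext (FT_eq_fourier f)]
  exact (continuous_fourier_of_integrable hf).comp (continuous_const_smul _)

lemma lintegral_enorm_FT_sq (hf : Integrable f) (hf₂ : MemLp f 2) :
    ∫⁻ ξ, ‖FT f ξ‖ₑ ^ (2 : ℝ) = ENNReal.ofReal ((2 * Real.pi) ^ N) * ∫⁻ x, ‖f x‖ₑ ^ (2 : ℝ) := by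
  simp only [FT_eq_fourier]
  rw [lintegral_comp_smul volume (fun ξ => ‖FourierTransform.fourier f ξ‖ₑ ^ (2 : ℝ))
    (by positivity), lintegral_enorm_fourier_sq hf hf₂, finrank_euclideanSpace_fin, inv_pow,
    inv_inv, abs_of_pos (by positivity)]

lemma FT_comp_smul (f : EuclideanSpace ℝ (Fin N) → ℂ) {c : ℝ} (hc : 0 < c)
    (ξ : EuclideanSpace ℝ (Fin N)) :
    FT (fun x => f (c • x)) ξ = (((c ^ N)⁻¹ : ℝ) : ℂ) * FT f (c⁻¹ • ξ) := by
  have hscale := Measure.integral_comp_smul_of_nonneg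
    (volume : Measure (EuclideanSpace ℝ (Fin N)))
    (fun x => f x * Complex.exp (-(Complex.I * ((inner ℝ (c⁻¹ • ξ) x : ℝ) : ℂ)))) c (hR := hc.le)
  simp only [inner_smul_left, inner_smul_right, RCLike.conj_to_real,
    mul_inv_cancel_left₀ hc.ne', finrank_euclideanSpace_fin, Complex.real_smul] at hscale
  simpa only [FT, inner_smul_left, RCLike.conj_to_real] using hscale

lemma enorm_FT_comp_sub (f : EuclideanSpace ℝ (Fin N) → ℂ) (a ξ : EuclideanSpace ℝ (Fin N)) :
    ‖FT (fun x => f (x - a)) ξ‖ₑ = ‖FT f ξ‖ₑ := by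
  have hshift := integral_add_right_eq_self (μ := (volume : Measure (EuclideanSpace ℝ (Fin N))))
    (fun x => f (x - a) * Complex.exp (-(Complex.I * ((inner ℝ ξ x : ℝ) : ℂ)))) a
  have hphase : FT (fun x => f (x - a)) ξ =
      FT f ξ * Complex.exp (-(Complex.I * ((inner ℝ ξ a : ℝ) : ℂ))) := by
    rw [FT, ← hshift, FT, ← integral_mul_const]
    refine integral_congr_ae (.of_forall fun x => ?_)
    simp only [add_sub_cancel_right, inner_add_right, Complex.ofReal_add, mul_add, neg_add,
      Complex.exp_add, mul_assoc]
  rw [hphase, enorm_mul, enorm_FT_kernel, mul_one]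

lemma FT_mul_exp (f : EuclideanSpace ℝ (Fin N) → ℂ) (a ξ : EuclideanSpace ℝ (Fin N)) :
    FT (fun x => f x * Complex.exp (Complex.I * ((inner ℝ a x : ℝ) : ℂ))) ξ = FT f (ξ - a) := by
  refine integral_congr_ae (.of_forall fun x => ?_)
  simp only [mul_assoc, ← Complex.exp_add, inner_sub_left]
  congr 2
  push_cast
  ring

end FT

/-! ### Sufficiency -/

section Duality

variable {α F : Type*} [MeasurableSpace α] [NormedAddCommGroup F] {μ : Measure α}

lemma measure_support_ne_top_of_lintegral_coe_ne_top {φ : SimpleFunc α NNReal}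
    (hφ : ∫⁻ x, (φ x : ℝ≥0∞) ∂μ ≠ ∞) : μ (Function.support φ) ≠ ∞ := by
  let φ' : SimpleFunc α ℝ≥0∞ := φ.map (↑)
  have hφ' : φ'.lintegral μ ≠ ∞ := by rwa [← SimpleFunc.lintegral_eq_lintegral]
  have hsupp : Function.support φ = Function.support φ' := by
    ext x
    simp [φ']
  rw [hsupp]
  exact (SimpleFunc.measure_support_lt_top_of_lintegral_ne_top hφ').ne

lemma rpow_one_div_mul_rpow_one_div {q q' : ℝ} (hq : q.HolderConjugate q') (a : ℝ≥0∞) :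
    a ^ (1 / q) * a ^ (1 / q') = a := by
  rw [← ENNReal.rpow_add_of_nonneg _ _ hq.one_div_nonneg hq.symm.one_div_nonneg,
    hq.one_div_add_one_div, div_one, ENNReal.rpow_one]

lemma le_rpow_of_le_mul_rpow_one_div {q q' : ℝ} (hq : q.HolderConjugate q') {I K : ℝ≥0∞}
    (hI : I ≠ ∞) (hIK : I ≤ K * I ^ (1 / q')) : I ≤ K ^ q := by
  rcases eq_or_ne I 0 with rfl | hI₀
  · exact zero_le
  rw [← ENNReal.rpow_inv_le_iff hq.pos, ← one_div]
  refine (ENNReal.mul_le_mul_iff_left ?_ ?_).1 ((rpow_one_div_mul_rpow_one_div hq I).trans_le hIK)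
  · exact (ENNReal.rpow_pos (pos_iff_ne_zero.2 hI₀) hI).ne'
  · exact ENNReal.rpow_ne_top_of_nonneg hq.symm.one_div_nonneg hI

lemma lintegral_enorm_rpow_le_of_forall_measure_support_ne_top [SigmaFinite μ] {q q' : ℝ}
    (hq : q.HolderConjugate q') {h : α → F} {K : ℝ≥0∞}
    (hK : ∀ G : α → ℝ, Measurable G → μ (Function.support G) ≠ ∞ →
      ∫⁻ x, ‖h x‖ₑ * ‖G x‖ₑ ∂μ ≤ K * (∫⁻ x, ‖G x‖ₑ ^ q' ∂μ) ^ (1 / q')) :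
    (∫⁻ x, ‖h x‖ₑ ^ q ∂μ) ^ (1 / q) ≤ K := by
  rw [one_div, ENNReal.rpow_inv_le_iff hq.pos]
  refine le_of_forall_lt fun L hL => ?_
  have hcoe : ∀ x, ‖h x‖ₑ ^ q = ((‖h x‖₊ ^ q : NNReal) : ℝ≥0∞) := fun x => by
    rw [ENNReal.coe_rpow_of_nonneg _ hq.nonneg, enorm_eq_nnnorm]
  simp only [hcoe] at hL
  obtain ⟨φ, hφh, hφt, hLφ⟩ := exists_lt_lintegral_simpleFunc_of_lt_lintegral hL
  refine hLφ.trans_le (le_rpow_of_le_mul_rpow_one_div hq hφt.ne ?_)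
  let G : α → ℝ := fun x => ((φ x) ^ (1 / q') : NNReal)
  have hGe : ∀ x, ‖G x‖ₑ = (φ x : ℝ≥0∞) ^ (1 / q') := fun x => by
    rw [← ENNReal.coe_rpow_of_nonneg _ hq.symm.one_div_nonneg, NNReal.enorm_eq]
  have hGsupp : μ (Function.support G) ≠ ∞ := by
    refine ne_top_of_le_ne_top (measure_support_ne_top_of_lintegral_coe_ne_top hφt.ne)
      (measure_mono (Function.support_subset_iff'.2 fun x hx => ?_))
    simp only [G]
    rw [Function.notMem_support.1 hx, NNReal.zero_rpow hq.symm.one_div_ne_zero, NNReal.coe_zero]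
  calc ∫⁻ x, φ x ∂μ ≤ ∫⁻ x, ‖h x‖ₑ * ‖G x‖ₑ ∂μ := by
        refine lintegral_mono fun x => ?_
        have hφx : (φ x : ℝ≥0∞) ^ (1 / q) ≤ ‖h x‖ₑ := by
          rw [one_div, ENNReal.rpow_inv_le_iff hq.pos, hcoe]
          exact ENNReal.coe_le_coe.2 (hφh x)
        rw [← rpow_one_div_mul_rpow_one_div hq (φ x : ℝ≥0∞), hGe]
        exact mul_le_mul_left hφx _
    _ ≤ K * (∫⁻ x, ‖G x‖ₑ ^ q' ∂μ) ^ (1 / q') := hK G (by fun_prop) hGsupp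
    _ = K * (∫⁻ x, φ x ∂μ) ^ (1 / q') := by
        simp only [hGe, ← ENNReal.rpow_mul, one_div_mul_cancel hq.symm.ne_zero, ENNReal.rpow_one]

end Duality

section FTBounds

lemma setLIntegral_le_lintegral_sq_mul_measure {α : Type*} [MeasurableSpace α] {μ : Measure α}
    {F : α → ℝ≥0∞} (hF : Measurable F) (B : Set α) :
    ∫⁻ x in B, F x ∂μ ≤ (∫⁻ x, F x ^ (2 : ℝ) ∂μ) ^ (1 / 2 : ℝ) * μ B ^ (1 / 2 : ℝ) :=
  calc ∫⁻ x in B, F x ∂μ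
      ≤ (∫⁻ x in B, F x ^ (2 : ℝ) ∂μ) ^ (1 / 2 : ℝ) *
          (∫⁻ _ in B, 1 ^ (2 : ℝ) ∂μ) ^ (1 / 2 : ℝ) := by
        simpa using ENNReal.lintegral_mul_le_Lp_mul_Lq (μ.restrict B)
          Real.HolderConjugate.two_two hF.aemeasurable
          (aemeasurable_const (b := (1 : ℝ≥0∞)))
    _ ≤ (∫⁻ x, F x ^ (2 : ℝ) ∂μ) ^ (1 / 2 : ℝ) * μ B ^ (1 / 2 : ℝ) := by
        rw [ENNReal.one_rpow, setLIntegral_one]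
        gcongr
        exact Measure.restrict_le_self

/-- The bound for `∫_B |𝓕u|` when `|u| ≤ 1_A`, as a function of the product of the measures of
`A` and `B`: the smaller of the `L¹ → L^∞` bound and the one given by Plancherel's theorem. -/
noncomputable def restrictedFTBound (N : ℕ) (x : ℝ≥0∞) : ℝ≥0∞ :=
  min x (ENNReal.ofReal ((2 * Real.pi) ^ N) ^ (1 / 2 : ℝ) * x ^ (1 / 2 : ℝ))

lemma monotone_restrictedFTBound (N : ℕ) : Monotone (restrictedFTBound N) := fun x y hxy => by
  unfold restrictedFTBound
  gcongr

lemma restrictedFTBound_zero (N : ℕ) : restrictedFTBound N 0 = 0 := by simp [restrictedFTBound]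

lemma tsum_restrictedFTBound_mul_lt_top (N : ℕ) {ρ : ℝ} (hρ : 1 / 2 < ρ) (hρ₁ : ρ < 1) :
    ∑' n : ℤ, restrictedFTBound N (4 * 2 ^ n) * ((2 : ℝ≥0∞) ^ n) ^ (-ρ) < ∞ :=
  tsum_min_mul_rpow_two_zpow_lt_top
    (ENNReal.rpow_ne_top_of_nonneg one_half_pos.le ENNReal.ofReal_ne_top) one_half_pos.le hρ hρ₁

variable {N : ℕ} {f : EuclideanSpace ℝ (Fin N) → ℂ}

lemma setLIntegral_enorm_FT_le {u : EuclideanSpace ℝ (Fin N) → ℂ} (hu : Measurable u)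
    {A : Set (EuclideanSpace ℝ (Fin N))} (hA : MeasurableSet A) (hAt : volume A ≠ ∞)
    (huA : ∀ x, ‖u x‖ₑ ≤ A.indicator 1 x) (B : Set (EuclideanSpace ℝ (Fin N))) :
    ∫⁻ ξ in B, ‖FT u ξ‖ₑ ≤ restrictedFTBound N (volume A * volume B) := by
  have hu₁ : ∫⁻ x, ‖u x‖ₑ ≤ volume A := by
    rw [← lintegral_indicator_one hA]
    exact lintegral_mono huA
  have hu₂ : ∫⁻ x, ‖u x‖ₑ ^ (2 : ℝ) ≤ volume A := by
    refine (lintegral_mono fun x => ?_).trans hu₁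
    have hle : ‖u x‖ₑ ≤ 1 := (huA x).trans (indicator_le_self' (fun _ _ => zero_le_one) x)
    simpa only [ENNReal.rpow_one] using ENNReal.rpow_le_rpow_of_exponent_ge hle one_le_two
  have hint : Integrable u := ⟨hu.aestronglyMeasurable, hu₁.trans_lt hAt.lt_top⟩
  have hL₂ : MemLp u 2 := by
    refine ⟨hu.aestronglyMeasurable, ?_⟩
    rw [eLpNorm_two_eq_lintegral]
    exact ENNReal.rpow_lt_top_of_nonneg one_half_pos.le (hu₂.trans_lt hAt.lt_top).ne
  refine le_min ?_ ?_
  · calc ∫⁻ ξ in B, ‖FT u ξ‖ₑ ≤ ∫⁻ _ in B, volume A :=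
          lintegral_mono fun ξ => (enorm_FT_le_lintegral u ξ).trans hu₁
      _ = volume A * volume B := setLIntegral_const _ _
  · calc ∫⁻ ξ in B, ‖FT u ξ‖ₑ
        ≤ (∫⁻ ξ, ‖FT u ξ‖ₑ ^ (2 : ℝ)) ^ (1 / 2 : ℝ) * (volume B) ^ (1 / 2 : ℝ) :=
          setLIntegral_le_lintegral_sq_mul_measure (continuous_FT hint).measurable.enorm B
      _ ≤ (ENNReal.ofReal ((2 * Real.pi) ^ N) * volume A) ^ (1 / 2 : ℝ) *
            (volume B) ^ (1 / 2 : ℝ) := by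
          rw [lintegral_enorm_FT_sq hint hL₂]
          gcongr
      _ = _ := by
          rw [← ENNReal.mul_rpow_of_nonneg _ _ one_half_pos.le,
            ← ENNReal.mul_rpow_of_nonneg _ _ one_half_pos.le, mul_assoc]

lemma stronglyMeasurable_uncurry_FT_levelPhase (hfm : Measurable f) :
    StronglyMeasurable (Function.uncurry fun s ξ => FT (levelPhase f s) ξ) := by
  have hlevel : Measurable fun z : (ℝ × EuclideanSpace ℝ (Fin N)) × EuclideanSpace ℝ (Fin N) =>
      levelPhase f z.1.1 z.2 :=
    (measurable_uncurry_levelPhase hfm).comp (by fun_prop : Measurable fun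
      z : (ℝ × EuclideanSpace ℝ (Fin N)) × EuclideanSpace ℝ (Fin N) => (z.1.1, z.2))
  have hjoint : Measurable fun z : (ℝ × EuclideanSpace ℝ (Fin N)) × EuclideanSpace ℝ (Fin N) =>
      levelPhase f z.1.1 z.2 * Complex.exp (-(Complex.I * ((inner ℝ z.1.2 z.2 : ℝ) : ℂ))) :=
    hlevel.mul (by fun_prop)
  exact hjoint.stronglyMeasurable.integral_prod_right'

lemma lintegral_enorm_FT_mul_le_lintegral_levelPhase (hf : Integrable f) (hfm : Measurable f)
    {g : EuclideanSpace ℝ (Fin N) → ℝ} (hg : Measurable g) :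
    ∫⁻ ξ, ‖FT f ξ‖ₑ * ‖g ξ‖ₑ ≤ ∫⁻ t in Ioi (0 : ℝ), ∫⁻ s in Ioi (0 : ℝ),
      ∫⁻ ξ in {ξ | t < ‖g ξ‖}, ‖FT (levelPhase f s) ξ‖ₑ := by
  have hlayer := lintegral_enorm_rpow_mul_eq_lintegral_setLIntegral (μ := volume)
    (continuous_FT hf).measurable.enorm hg.norm one_pos
  simp only [ENNReal.rpow_one, sub_self, Real.rpow_zero, ENNReal.ofReal_one, one_mul,
    mul_one] at hlayer
  simp only [mul_comm ‖FT f _‖ₑ, hlayer]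
  refine lintegral_mono fun t => ?_
  have hmeas := (stronglyMeasurable_uncurry_FT_levelPhase hfm).enorm
  calc ∫⁻ ξ in {ξ | t < ‖g ξ‖}, ‖FT f ξ‖ₑ
      ≤ ∫⁻ ξ in {ξ | t < ‖g ξ‖}, ∫⁻ s in Ioi (0 : ℝ), ‖FT (levelPhase f s) ξ‖ₑ :=
        lintegral_mono fun ξ => enorm_integral_mul_le_setLIntegral_levelPhase hf hfm
          (by fun_prop) fun x => (enorm_FT_kernel x ξ).le
    _ = _ := (lintegral_lintegral_swap hmeas.aemeasurable).symm

lemma lintegral_enorm_FT_mul_le_restrictedFTBound (hf : Integrable f) (hfm : Measurable f)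
    {g : EuclideanSpace ℝ (Fin N) → ℝ} (hg : Measurable g) :
    ∫⁻ ξ, ‖FT f ξ‖ₑ * ‖g ξ‖ₑ ≤ ∫⁻ t in Ioi (0 : ℝ), ∫⁻ s in Ioi (0 : ℝ),
      restrictedFTBound N (distributionFunction g t * distributionFunction f s) := by
  refine (lintegral_enorm_FT_mul_le_lintegral_levelPhase hf hfm hg).trans
    (lintegral_mono fun t => setLIntegral_mono' measurableSet_Ioi fun s hs => ?_)
  rw [mul_comm (distributionFunction g t volume)]
  exact setLIntegral_enorm_FT_le (measurable_levelPhase hfm s)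
    (measurableSet_lt measurable_const hfm.norm)
    (distributionFunction_ne_top_of_integrable hf hs) (enorm_levelPhase_le f s) _

end FTBounds

section Sufficiency

variable {N : ℕ} [NeZero N] {p q q' σ κ : ℝ}

lemma exists_lintegral_enorm_FT_mul_le (hp : 1 ≤ p) (hpq : p ≤ q) (hq : q.HolderConjugate q')
    (hσ : 0 ≤ σ) (hκ : 0 ≤ κ) (hκσ : 1 / p + κ / N = 1 / q' + σ / N) (hlow : 1 / 2 < 1 / p + κ / N)
    (hupp : 1 / p + κ / N < 1) :
    ∃ C : ℝ≥0∞, C ≠ ∞ ∧ ∀ (f : EuclideanSpace ℝ (Fin N) → ℂ) (g : EuclideanSpace ℝ (Fin N) → ℝ),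
      Integrable f → Measurable f → Measurable g → volume (Function.support g) ≠ ∞ →
      ∫⁻ ξ, ‖FT f ξ‖ₑ * ‖g ξ‖ₑ ≤ C * (powerWeightedNorm p κ f * powerWeightedNorm q' σ g) := by
  have hp₀ : 0 < p := one_pos.trans_le hp
  obtain ⟨C₀, hC₀, hdyadic⟩ := exists_lintegral_lintegral_le_mul_lorentzNorm hq.symm hp hpq
    (one_half_pos.trans hlow).le (monotone_restrictedFTBound N) (restrictedFTBound_zero N)
    (tsum_restrictedFTBound_mul_lt_top N hlow hupp)
  obtain ⟨C₁, hC₁, hbath₁⟩ := exists_lorentzNorm_distributionFunction_le (F := ℂ)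
    (volume : Measure (EuclideanSpace ℝ (Fin N))) hp₀ hκ
  obtain ⟨C₂, hC₂, hbath₂⟩ := exists_lorentzNorm_distributionFunction_le (F := ℝ)
    (volume : Measure (EuclideanSpace ℝ (Fin N))) hq.symm.pos hσ
  simp only [finrank_euclideanSpace_fin] at hbath₁ hbath₂
  rw [← hκσ] at hbath₂
  refine ⟨C₀ * (C₂ * C₁), ENNReal.mul_ne_top hC₀ (ENNReal.mul_ne_top hC₂ hC₁),
    fun f g hf hfm hg hgs => ?_⟩
  have hgtop (t : ℝ) (ht : 0 < t) : distributionFunction g t ≠ ∞ :=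
    distributionFunction_ne_top_of_measure_support hgs ht
  have hftop (s : ℝ) (hs : 0 < s) : distributionFunction f s ≠ ∞ :=
    distributionFunction_ne_top_of_integrable hf hs
  calc ∫⁻ ξ, ‖FT f ξ‖ₑ * ‖g ξ‖ₑ
      ≤ ∫⁻ t in Ioi (0 : ℝ), ∫⁻ s in Ioi (0 : ℝ),
          restrictedFTBound N (distributionFunction g t volume * distributionFunction f s volume) :=
        lintegral_enorm_FT_mul_le_restrictedFTBound hf hfm hg
    _ ≤ C₀ * (lorentzNorm q' (1 / p + κ / N) (distributionFunction g · volume) *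
          lorentzNorm p (1 / p + κ / N) (distributionFunction f · volume)) :=
        hdyadic _ _ measurable_distributionFunction hgtop measurable_distributionFunction hftop
    _ ≤ C₀ * (C₂ * powerWeightedNorm q' σ g * (C₁ * powerWeightedNorm p κ f)) := by
        gcongr
        exacts [hbath₂ g hg.norm, hbath₁ f hfm.norm]
    _ = _ := by ring

lemma powerWeightedNorm_neg_le_of_forall {F : Type*} [NormedAddCommGroup F] {E : Type*}
    [NormedAddCommGroup E] [MeasurableSpace E] [OpensMeasurableSpace E] {μ : Measure E}
    [SigmaFinite μ] (hq : q.HolderConjugate q') {h : E → F} {K : ℝ≥0∞}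
    (hK : ∀ g : E → ℝ, Measurable g → μ (Function.support g) ≠ ∞ →
      ∫⁻ x, ‖h x‖ₑ * ‖g x‖ₑ ∂μ ≤ K * powerWeightedNorm q' σ g μ) :
    powerWeightedNorm q (-σ) h μ ≤ K := by
  have hcancel : ∀ x : E, ‖x‖ ^ (q' * -σ) * ‖x‖ ^ (q' * σ) ≤ 1 := fun x => by
    rw [mul_neg, Real.rpow_neg (norm_nonneg _)]
    exact inv_mul_le_one
  rw [powerWeightedNorm_eq_lintegral hq.nonneg]
  refine lintegral_enorm_rpow_le_of_forall_measure_support_ne_top hq fun G hG hGs => ?_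
  let g : E → ℝ := fun x => G x * ‖x‖ ^ (-σ)
  have hgs : μ (Function.support g) ≠ ∞ :=
    ne_top_of_le_ne_top hGs (measure_mono (Function.support_mul_subset_left _ _))
  have hgG : powerWeightedNorm q' σ g μ ≤ (∫⁻ x, ‖G x‖ₑ ^ q' ∂μ) ^ (1 / q') := by
    refine ENNReal.rpow_le_rpow (lintegral_mono fun x => ?_) hq.symm.one_div_nonneg
    rw [enorm_mul_norm_rpow_rpow hq.symm.nonneg, mul_assoc, ← ENNReal.ofReal_mul (by positivity)]
    exact mul_le_of_le_one_right' (ENNReal.ofReal_le_one.2 (hcancel x))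
  calc ∫⁻ x, ‖‖h x‖ * ‖x‖ ^ (-σ)‖ₑ * ‖G x‖ₑ ∂μ = ∫⁻ x, ‖h x‖ₑ * ‖g x‖ₑ ∂μ := by
        simp only [g, enorm_mul, enorm_norm, mul_assoc, mul_comm ‖G _‖ₑ]
    _ ≤ K * powerWeightedNorm q' σ g μ := hK g (by fun_prop) hgs
    _ ≤ K * (∫⁻ x, ‖G x‖ₑ ^ q' ∂μ) ^ (1 / q') := by gcongr

lemma powerWeightedNorm_two_zero_FT_le {N : ℕ} {f : EuclideanSpace ℝ (Fin N) → ℂ}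
    (hf : Integrable f) :
    powerWeightedNorm 2 0 (FT f) ≤
      ENNReal.ofReal ((2 * Real.pi) ^ N) ^ (1 / 2 : ℝ) * powerWeightedNorm 2 0 f := by
  simp only [powerWeightedNorm, mul_zero, Real.rpow_zero, ENNReal.ofReal_one, mul_one]
  rw [← ENNReal.mul_rpow_of_nonneg _ _ one_half_pos.le]
  gcongr
  by_cases hf₂ : MemLp f 2
  · exact (lintegral_enorm_FT_sq hf hf₂).le
  · have htop : ∫⁻ x, ‖f x‖ₑ ^ (2 : ℝ) = ∞ := by
      by_contra hfin
      refine hf₂ ⟨hf.1, ?_⟩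
      rw [eLpNorm_two_eq_lintegral]
      exact ENNReal.rpow_lt_top_of_nonneg one_half_pos.le hfin
    rw [htop, ENNReal.mul_top (ENNReal.ofReal_pos.2 (by positivity)).ne']
    exact le_top

lemma exists_powerWeightedNorm_FT_le (hp : 1 < p) (hpq : p ≤ q) (hσ : 0 ≤ σ) (hκ : 0 ≤ κ)
    (hκσ : κ - σ = N * (1 - 1 / p - 1 / q)) (hκp : κ < N * (1 - 1 / p)) :
    ∃ C : ℝ≥0∞, C ≠ ∞ ∧ ∀ f : EuclideanSpace ℝ (Fin N) → ℂ, Integrable f → Measurable f →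
      powerWeightedNorm q (-σ) (FT f) ≤ C * powerWeightedNorm p κ f := by
  have hN : (0 : ℝ) < N := by exact_mod_cast NeZero.pos N
  have hp₀ : 0 < p := one_pos.trans hp
  have hq := Real.HolderConjugate.conjExponent (hp.trans_le hpq)
  have hq₁ : 1 / q + 1 / q.conjExponent = 1 := by rw [hq.one_div_add_one_div, div_one]
  have hqp : 1 / q ≤ 1 / p := one_div_le_one_div_of_le hp₀ hpq
  have hκN : 0 ≤ κ / N := by positivity
  have hσN : 0 ≤ σ / N := by positivity
  have hdiff : κ / N - σ / N = 1 - 1 / p - 1 / q := by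
    rw [← sub_div, hκσ, mul_div_cancel_left₀ _ hN.ne']
  have hupp : κ / N < 1 - 1 / p := (div_lt_iff₀' hN).2 hκp
  rcases (show 1 / 2 ≤ 1 / p + κ / N by linarith).eq_or_lt with hhalf | hhalf
  · obtain rfl : κ = 0 := by simpa [hN.ne'] using (by linarith : κ / N = 0)
    obtain rfl : σ = 0 := by simpa [hN.ne'] using (by linarith : σ / N = 0)
    obtain rfl : p = 2 := by simpa using (by linarith : 1 / p = 1 / 2)
    obtain rfl : q = 2 := by simpa using (by linarith : 1 / q = 1 / 2)
    rw [neg_zero]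
    exact ⟨_, ENNReal.rpow_ne_top_of_nonneg one_half_pos.le ENNReal.ofReal_ne_top,
      fun f hf _ => powerWeightedNorm_two_zero_FT_le hf⟩
  · obtain ⟨C, hC, hbilin⟩ := exists_lintegral_enorm_FT_mul_le hp.le hpq hq hσ hκ (by linarith)
      hhalf (by linarith)
    refine ⟨C, hC, fun f hf hfm => powerWeightedNorm_neg_le_of_forall hq fun g hg hgs => ?_⟩
    rw [mul_assoc]
    exact hbilin f g hf hfm hg hgs

end Sufficiency

/-! ### Necessity -/

lemma eq_zero_of_forall_ofReal_rpow_mul_le {e : ℝ} {l K : ℝ≥0∞} (hl : l ≠ 0) (hK : K ≠ ∞)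
    (h : ∀ t : ℝ, 0 < t → ENNReal.ofReal (t ^ e) * l ≤ K) : e = 0 := by
  by_contra he
  have hl_top : l ≠ ∞ := ne_top_of_le_ne_top hK (by simpa using h 1 one_pos)
  have hl_pos : 0 < l.toReal := ENNReal.toReal_pos hl hl_top
  have hs : 0 < K.toReal / l.toReal + 1 := by positivity
  have hbound := ENNReal.toReal_mono hK (h ((K.toReal / l.toReal + 1) ^ (1 / e)) (by positivity))
  rw [← Real.rpow_mul hs.le, one_div_mul_cancel he, Real.rpow_one, ENNReal.toReal_mul,
    ENNReal.toReal_ofReal hs.le, add_mul, div_mul_cancel₀ _ hl_pos.ne'] at hbound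
  linarith

section PowerWeightedNorm

variable {E F : Type*} [NormedAddCommGroup E] [MeasurableSpace E] [NormedAddCommGroup F]
  {μ : Measure E} {p q κ σ : ℝ}

lemma powerWeightedNorm_le_ofReal_mul_measure_rpow (hp : 0 < p) {f : E → F} {A : Set E}
    (hA : MeasurableSet A) (hfA : ∀ x ∉ A, f x = 0) {M : ℝ}
    (hfM : ∀ x, f x ≠ 0 → ‖f x‖ * ‖x‖ ^ κ ≤ M) :
    powerWeightedNorm p κ f μ ≤ ENNReal.ofReal M * μ A ^ (1 / p) := by
  have hpoint (x : E) : ‖‖f x‖ * ‖x‖ ^ κ‖ₑ ^ p ≤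
      A.indicator (fun _ => ENNReal.ofReal M ^ p) x := by
    by_cases hfx : f x = 0
    · simp [hfx, hp]
    · rw [indicator_of_mem (not_imp_comm.1 (hfA x) hfx), Real.enorm_of_nonneg (by positivity)]
      gcongr
      exact hfM x hfx
  calc powerWeightedNorm p κ f μ
      ≤ (∫⁻ x, A.indicator (fun _ => ENNReal.ofReal M ^ p) x ∂μ) ^ (1 / p) := by
        rw [powerWeightedNorm_eq_lintegral hp.le]
        exact ENNReal.rpow_le_rpow (lintegral_mono hpoint) (by positivity)
    _ = ENNReal.ofReal M * μ A ^ (1 / p) := by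
        rw [lintegral_indicator_const hA, ENNReal.mul_rpow_of_nonneg _ _ (by positivity), one_div,
          ENNReal.rpow_rpow_inv hp.ne']

lemma ofReal_mul_measure_rpow_le_powerWeightedNorm (hp : 0 < p) {f : E → F} {A : Set E}
    (hA : MeasurableSet A) {m : ℝ} (hm : ∀ x ∈ A, m ≤ ‖f x‖ * ‖x‖ ^ κ) :
    ENNReal.ofReal m * μ A ^ (1 / p) ≤ powerWeightedNorm p κ f μ := by
  calc ENNReal.ofReal m * μ A ^ (1 / p)
      = (∫⁻ _ in A, ENNReal.ofReal m ^ p ∂μ) ^ (1 / p) := by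
        rw [setLIntegral_const, ENNReal.mul_rpow_of_nonneg _ _ (by positivity), one_div,
          ENNReal.rpow_rpow_inv hp.ne']
    _ ≤ (∫⁻ x in A, ‖‖f x‖ * ‖x‖ ^ κ‖ₑ ^ p ∂μ) ^ (1 / p) := by
        refine ENNReal.rpow_le_rpow (setLIntegral_mono' hA fun x hx => ?_) (by positivity)
        rw [Real.enorm_of_nonneg (by positivity)]
        gcongr
        exact hm x hx
    _ ≤ powerWeightedNorm p κ f μ := by
        rw [powerWeightedNorm_eq_lintegral hp.le]
        exact ENNReal.rpow_le_rpow (setLIntegral_le_lintegral _ _) (by positivity)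

lemma powerWeightedNorm_congr_enorm {f g : E → F} (h : ∀ x, ‖f x‖ₑ = ‖g x‖ₑ) :
    powerWeightedNorm p κ f μ = powerWeightedNorm p κ g μ := by
  simp only [powerWeightedNorm, h]

lemma powerWeightedNorm_const_mul {𝕜 : Type*} [NormedField 𝕜] (hp : 0 < p) (a : 𝕜) (f : E → 𝕜) :
    powerWeightedNorm p κ (fun x => a * f x) μ = ‖a‖ₑ * powerWeightedNorm p κ f μ := by
  simp only [powerWeightedNorm, enorm_mul, ENNReal.mul_rpow_of_nonneg _ _ hp.le, mul_assoc]
  rw [lintegral_const_mul' _ _ (ENNReal.rpow_ne_top_of_nonneg hp.le enorm_ne_top),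
    ENNReal.mul_rpow_of_nonneg _ _ (by positivity), one_div, ENNReal.rpow_rpow_inv hp.ne']

variable [NormedSpace ℝ E] [FiniteDimensional ℝ E] [BorelSpace E] [μ.IsAddHaarMeasure]

lemma powerWeightedNorm_comp_smul (hp : 0 < p) (f : E → F) {c : ℝ} (hc : 0 < c) :
    powerWeightedNorm p κ (fun x => f (c • x)) μ =
      ENNReal.ofReal (c ^ (-κ - Module.finrank ℝ E / p)) * powerWeightedNorm p κ f μ := by
  have hnorm (x : E) : ‖x‖ ^ (p * κ) = c ^ (-(p * κ)) * ‖c • x‖ ^ (p * κ) := by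
    rw [norm_smul, Real.norm_of_nonneg hc.le, Real.mul_rpow hc.le (norm_nonneg _),
      Real.rpow_neg hc.le, inv_mul_cancel_left₀ (by positivity)]
  have hpow : (c ^ (-(p * κ)) * |(c ^ Module.finrank ℝ E)⁻¹|) ^ (1 / p) =
      c ^ (-κ - Module.finrank ℝ E / p) := by
    rw [abs_of_nonneg (by positivity), ← Real.rpow_natCast, ← Real.rpow_neg hc.le,
      ← Real.rpow_add hc, ← Real.rpow_mul hc.le]
    congr 1
    field_simp
    ring
  have hscale (x : E) : ‖f (c • x)‖ₑ ^ p * ENNReal.ofReal (‖x‖ ^ (p * κ)) =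
      ENNReal.ofReal (c ^ (-(p * κ))) *
        (‖f (c • x)‖ₑ ^ p * ENNReal.ofReal (‖c • x‖ ^ (p * κ))) := by
    rw [hnorm, ENNReal.ofReal_mul (by positivity), mul_left_comm]
  simp only [powerWeightedNorm, hscale]
  rw [lintegral_const_mul' _ _ ENNReal.ofReal_ne_top,
    lintegral_comp_smul μ (fun x => ‖f x‖ₑ ^ p * ENNReal.ofReal (‖x‖ ^ (p * κ))) hc.ne',
    ← mul_assoc, ← ENNReal.ofReal_mul (by positivity),
    ENNReal.mul_rpow_of_nonneg _ _ (by positivity),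
    ENNReal.ofReal_rpow_of_nonneg (by positivity) (by positivity), hpow]

variable [Nontrivial E]

lemma powerWeightedNorm_ne_zero (hp : 0 < p) {f : E → F} (hf : Continuous f) (hf₀ : f ≠ 0) :
    powerWeightedNorm p κ f μ ≠ 0 := by
  have hf_norm : Measurable fun x => ‖f x‖ := hf.norm.measurable
  contrapose! hf₀
  rw [powerWeightedNorm_eq_lintegral hp.le, ENNReal.rpow_eq_zero_iff_of_pos (by positivity),
    lintegral_eq_zero_iff' (by fun_prop)] at hf₀
  refine (Continuous.ae_eq_iff_eq μ hf continuous_zero).1 ?_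
  filter_upwards [hf₀, Measure.ae_ne μ 0] with x hx hx₀
  have hx_weight : ‖x‖ ^ κ ≠ 0 := (Real.rpow_pos_of_pos (norm_pos_iff.2 hx₀) κ).ne'
  simpa [ENNReal.rpow_eq_zero_iff_of_pos hp, hx_weight, -enorm_mul] using hx

lemma setLIntegral_ball_norm_rpow_neg_eq_top {s δ : ℝ} (hs : Module.finrank ℝ E ≤ s)
    (hδ : 0 < δ) : ∫⁻ x in Metric.ball (0 : E) δ, ENNReal.ofReal (‖x‖ ^ (-s)) ∂μ = ∞ := by
  by_contra hfin
  have hint : IntegrableOn (fun x : E => ‖x‖ ^ (-s)) (Metric.ball 0 δ) μ :=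
    (lintegral_ofReal_ne_top_iff_integrable
      (measurable_norm.pow_const _).aestronglyMeasurable
      (.of_forall fun x => by positivity)).1 hfin
  rw [integrableOn_fun_norm_addHaar μ (f := fun r => r ^ (-s))] at hint
  have hradial : EqOn (fun r : ℝ => r ^ (Module.finrank ℝ E - 1) • r ^ (-s))
      (fun r => r ^ (((Module.finrank ℝ E - 1 : ℕ) : ℝ) - s)) (Ioo 0 δ) := fun r hr => by
    simp only [smul_eq_mul]
    rw [← Real.rpow_natCast, ← Real.rpow_add hr.1, ← sub_eq_add_neg]
  rw [integrableOn_congr_fun hradial measurableSet_Ioo,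
    intervalIntegral.integrableOn_Ioo_rpow_iff hδ,
    Nat.cast_pred Module.finrank_pos] at hint
  linarith

lemma powerWeightedNorm_neg_eq_top (hq : 0 < q) (hσ : Module.finrank ℝ E / q ≤ σ) {f : E → F}
    {c δ : ℝ} (hc : 0 < c) (hδ : 0 < δ) (hf : ∀ x ∈ Metric.ball 0 δ, c ≤ ‖f x‖) :
    powerWeightedNorm q (-σ) f μ = ∞ := by
  have hball : ENNReal.ofReal c ^ q *
      ∫⁻ x in Metric.ball 0 δ, ENNReal.ofReal (‖x‖ ^ (q * -σ)) ∂μ ≤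
      ∫⁻ x, ‖f x‖ₑ ^ q * ENNReal.ofReal (‖x‖ ^ (q * -σ)) ∂μ := by
    rw [← lintegral_const_mul _ (by fun_prop)]
    refine (setLIntegral_mono' measurableSet_ball fun x hx => ?_).trans
      (setLIntegral_le_lintegral _ _)
    rw [← ofReal_norm]
    gcongr
    exact hf x hx
  have hc_ne : ENNReal.ofReal c ^ q ≠ 0 := by simp [hc]
  rw [mul_neg, setLIntegral_ball_norm_rpow_neg_eq_top ((div_le_iff₀' hq).1 hσ) hδ,
    ENNReal.mul_top hc_ne, top_le_iff, ← mul_neg] at hball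
  rw [powerWeightedNorm, hball, ENNReal.top_rpow_of_pos (by positivity)]

end PowerWeightedNorm

section TestFunction

lemma exists_forall_mem_ball_le_norm {X F : Type*} [PseudoMetricSpace X] [NormedAddCommGroup F]
    {f : X → F} {x₀ : X} (hf : ContinuousAt f x₀) (hx₀ : f x₀ ≠ 0) :
    ∃ c > 0, ∃ δ > 0, ∀ x ∈ Metric.ball x₀ δ, c ≤ ‖f x‖ := by
  have hpos : 0 < ‖f x₀‖ := norm_pos_iff.2 hx₀
  obtain ⟨δ, hδ, hball⟩ := Metric.eventually_nhds_iff_ball.1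
    (hf.norm.eventually (lt_mem_nhds (half_lt_self hpos)))
  exact ⟨‖f x₀‖ / 2, half_pos hpos, δ, hδ, fun x hx => (hball x hx).le⟩

lemma exists_contDiff_hasCompactSupport_FT_zero_ne_zero (N : ℕ) [NeZero N] :
    ∃ f : EuclideanSpace ℝ (Fin N) → ℂ, ContDiff ℝ (⊤ : ℕ∞) f ∧ HasCompactSupport f ∧
      (∀ x, f x ≠ 0 → 1 ≤ ‖x‖ ∧ ‖x‖ ≤ 3) ∧ (∀ x, ‖f x‖ ≤ 1) ∧ FT f 0 ≠ 0 := by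
  obtain ⟨x₀, hx₀⟩ := exists_norm_eq (EuclideanSpace ℝ (Fin N)) zero_le_two
  let b : ContDiffBump x₀ := ⟨1 / 2, 1, by norm_num, by norm_num⟩
  refine ⟨fun x => (b x : ℂ), Complex.ofRealCLM.contDiff.comp b.contDiff,
    b.hasCompactSupport.comp_left Complex.ofReal_zero, fun x hx => ?_, fun x => ?_, ?_⟩
  · have hsupp : x ∈ Metric.ball x₀ 1 := by
      rw [← b.support_eq]
      exact Complex.ofReal_ne_zero.1 hx
    have hdist := abs_lt.1 ((abs_norm_sub_norm_le x x₀).trans_lt (mem_ball_iff_norm.1 hsupp))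
    rw [hx₀] at hdist
    constructor <;> linarith
  · rw [Complex.norm_real, Real.norm_of_nonneg b.nonneg]
    exact b.le_one
  · have hmass : FT (fun x => (b x : ℂ)) 0 = ((∫ x, b x : ℝ) : ℂ) := by
      simp [FT, integral_complex_ofReal]
    rw [hmass]
    exact Complex.ofReal_ne_zero.2 b.integral_pos.ne'

end TestFunction

/-- Pitt's inequality on `ℝ^N` with constant `C`, for smooth compactly supported functions. -/
def PittInequality (N : ℕ) (p q σ κ : ℝ) (C : ℝ≥0∞) : Prop :=
  ∀ f : EuclideanSpace ℝ (Fin N) → ℂ, ContDiff ℝ (⊤ : ℕ∞) f → HasCompactSupport f →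
    powerWeightedNorm q (-σ) (FT f) ≤ C * powerWeightedNorm p κ f

namespace PittInequality

variable {N : ℕ} [NeZero N] {p q σ κ : ℝ} {C : ℝ≥0∞}

lemma exists_testFunction (h : PittInequality N p q σ κ C) (hC : C ≠ ∞) (hp : 0 < p) (hq : 0 < q) :
    ∃ f : EuclideanSpace ℝ (Fin N) → ℂ, ContDiff ℝ (⊤ : ℕ∞) f ∧ HasCompactSupport f ∧
      (∀ x, f x ≠ 0 → ‖x‖ ≤ 3) ∧ (∀ x, ‖f x‖ ≤ 1) ∧ Continuous (FT f) ∧ FT f 0 ≠ 0 ∧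
      powerWeightedNorm p κ f ≠ ∞ ∧ powerWeightedNorm q (-σ) (FT f) ≠ 0 ∧
      powerWeightedNorm q (-σ) (FT f) ≠ ∞ := by
  obtain ⟨f, hf, hfc, hsupp, hle, hFT⟩ := exists_contDiff_hasCompactSupport_FT_zero_ne_zero N
  have hcont : Continuous (FT f) :=
    continuous_FT (hf.continuous.integrable_of_hasCompactSupport hfc)
  have hnorm : powerWeightedNorm p κ f ≠ ∞ := by
    refine ne_top_of_le_ne_top ?_ (powerWeightedNorm_le_ofReal_mul_measure_rpow hp
      (A := Metric.closedBall 0 3) (M := 3 ^ |κ|) measurableSet_closedBall (fun x hx => ?_)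
      fun x hx => ?_)
    · exact ENNReal.mul_ne_top ENNReal.ofReal_ne_top
        (ENNReal.rpow_ne_top_of_nonneg (by positivity) measure_closedBall_lt_top.ne)
    · by_contra hfx
      exact hx (mem_closedBall_zero_iff.2 (hsupp x hfx).2)
    · calc ‖f x‖ * ‖x‖ ^ κ ≤ 1 * ‖x‖ ^ |κ| := by
            gcongr
            exacts [hle x, (hsupp x hx).1, le_abs_self κ]
        _ ≤ 3 ^ |κ| := by
            rw [one_mul]
            gcongr
            exact (hsupp x hx).2
  exact ⟨f, hf, hfc, fun x hx => (hsupp x hx).2, hle, hcont, hFT, hnorm,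
    powerWeightedNorm_ne_zero hq hcont fun hzero => hFT (congrFun hzero 0),
    ne_top_of_le_ne_top (ENNReal.mul_ne_top hC hnorm) (h f hf hfc)⟩

lemma sub_eq (h : PittInequality N p q σ κ C) (hC : C ≠ ∞) (hp : 0 < p) (hq : 0 < q) :
    κ - σ = N * (1 - 1 / p - 1 / q) := by
  obtain ⟨f, hf, hfc, -, -, -, -, hR, hL, -⟩ := h.exists_testFunction hC hp hq
  suffices hexp : (κ + N / p) + (-N - (σ - N / q)) = 0 by
    linear_combination hexp
  refine eq_zero_of_forall_ofReal_rpow_mul_le hL (ENNReal.mul_ne_top hC hR) fun t ht => ?_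
  have hscaled := h (fun x => f (t • x)) (hf.comp (contDiff_const_smul t))
    (hfc.comp_homeomorph (Homeomorph.smulOfNeZero t ht.ne'))
  have hmul : t ^ (-N - (σ - N / q)) = (t ^ N)⁻¹ * t⁻¹ ^ (σ - N / q) := by
    rw [sub_eq_add_neg, Real.rpow_add ht, Real.rpow_neg ht.le, Real.rpow_natCast,
      Real.rpow_neg_eq_inv_rpow]
  have hcancel : t ^ (κ + N / p) * t ^ (-κ - N / p) = 1 := by
    rw [← Real.rpow_add ht, add_add_sub_cancel, add_neg_cancel, Real.rpow_zero]
  rw [funext (FT_comp_smul f ht), powerWeightedNorm_const_mul hq,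
    powerWeightedNorm_comp_smul hq (FT f) (inv_pos.2 ht), powerWeightedNorm_comp_smul hp f ht,
    finrank_euclideanSpace_fin, neg_neg, ← ofReal_norm, Complex.norm_real,
    Real.norm_of_nonneg (by positivity), ← mul_assoc, ← ENNReal.ofReal_mul (by positivity),
    ← hmul] at hscaled
  calc ENNReal.ofReal (t ^ ((κ + N / p) + (-N - (σ - N / q)))) * powerWeightedNorm q (-σ) (FT f)
      = ENNReal.ofReal (t ^ (κ + N / p)) *
          (ENNReal.ofReal (t ^ (-N - (σ - N / q))) * powerWeightedNorm q (-σ) (FT f)) := by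
        rw [Real.rpow_add ht, ENNReal.ofReal_mul (by positivity), mul_assoc]
    _ ≤ ENNReal.ofReal (t ^ (κ + N / p)) *
          (C * (ENNReal.ofReal (t ^ (-κ - N / p)) * powerWeightedNorm p κ f)) := by gcongr
    _ = ENNReal.ofReal (t ^ (κ + N / p) * t ^ (-κ - N / p)) * (C * powerWeightedNorm p κ f) := by
        rw [ENNReal.ofReal_mul (by positivity)]
        ring
    _ = C * powerWeightedNorm p κ f := by rw [hcancel, ENNReal.ofReal_one, one_mul]

lemma sigma_nonneg (h : PittInequality N p q σ κ C) (hC : C ≠ ∞) (hp : 0 < p) (hq : 0 < q) :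
    0 ≤ σ := by
  obtain ⟨f, hf, hfc, -, -, hcont, hFT, hR, -, -⟩ := h.exists_testFunction hC hp hq
  obtain ⟨c, hc, δ, hδ, hball⟩ := exists_forall_mem_ball_le_norm hcont.continuousAt hFT
  by_contra! hσ
  refine hσ.ne (neg_eq_zero.1 (eq_zero_of_forall_ofReal_rpow_mul_le
    (l := ENNReal.ofReal c * volume (Metric.ball (0 : EuclideanSpace ℝ (Fin N)) δ) ^ (1 / q))
    ?_ (ENNReal.mul_ne_top hC hR) fun t ht => ?_))
  · have hvol := Metric.measure_ball_pos volume (0 : EuclideanSpace ℝ (Fin N)) hδ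
    exact mul_ne_zero (ENNReal.ofReal_pos.2 hc).ne'
      (ENNReal.rpow_pos hvol measure_ball_lt_top.ne).ne'
  obtain ⟨a, ha⟩ := exists_norm_eq (EuclideanSpace ℝ (Fin N)) (by positivity : 0 ≤ t + δ)
  let fa : EuclideanSpace ℝ (Fin N) → ℂ :=
    fun x => f x * Complex.exp (Complex.I * ((inner ℝ a x : ℝ) : ℂ))
  have hfa : ContDiff ℝ (⊤ : ℕ∞) fa :=
    hf.mul (contDiff_const.mul
      (Complex.ofRealCLM.contDiff.comp (contDiff_const.inner ℝ contDiff_id))).cexp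
  have hfa_norm : powerWeightedNorm p κ fa = powerWeightedNorm p κ f :=
    powerWeightedNorm_congr_enorm fun x => by simp [fa, ← ofReal_norm, Complex.norm_exp]
  have hlower : ∀ ξ ∈ Metric.ball a δ, t ^ (-σ) * c ≤ ‖FT fa ξ‖ * ‖ξ‖ ^ (-σ) := fun ξ hξ => by
    have hξ_dist : ‖ξ - a‖ < δ := mem_ball_iff_norm.1 hξ
    have hξ_norm : t ≤ ‖ξ‖ := by linarith [norm_le_norm_add_norm_sub ξ a]
    rw [FT_mul_exp, mul_comm]
    have hσ' : 0 ≤ -σ := by linarith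
    gcongr
    exact hball _ (mem_ball_zero_iff.2 hξ_dist)
  rw [← Measure.addHaar_ball_center volume a δ, ← mul_assoc, ← ENNReal.ofReal_mul (by positivity),
    ← hfa_norm]
  exact (ofReal_mul_measure_rpow_le_powerWeightedNorm hq measurableSet_ball hlower).trans
    (h fa hfa hfc.mul_right)

lemma sigma_lt (h : PittInequality N p q σ κ C) (hC : C ≠ ∞) (hp : 0 < p) (hq : 0 < q) :
    σ < N / q := by
  obtain ⟨f, -, -, -, -, hcont, hFT, -, -, hL⟩ := h.exists_testFunction hC hp hq
  obtain ⟨c, hc, δ, hδ, hball⟩ := exists_forall_mem_ball_le_norm hcont.continuousAt hFT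
  by_contra! hσ
  exact hL (powerWeightedNorm_neg_eq_top hq (by rwa [finrank_euclideanSpace_fin]) hc hδ hball)

lemma kappa_nonneg (h : PittInequality N p q σ κ C) (hC : C ≠ ∞) (hp : 0 < p) (hq : 0 < q) :
    0 ≤ κ := by
  obtain ⟨f, hf, hfc, hsupp, hle, -, -, -, hL, -⟩ := h.exists_testFunction hC hp hq
  by_contra! hκ
  set V := volume (Metric.closedBall (0 : EuclideanSpace ℝ (Fin N)) 3) with hV_def
  have hV : V ^ (1 / p) ≠ ∞ :=
    ENNReal.rpow_ne_top_of_nonneg (by positivity) measure_closedBall_lt_top.ne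
  refine hκ.ne (neg_eq_zero.1 (eq_zero_of_forall_ofReal_rpow_mul_le hL (ENNReal.mul_ne_top hC hV)
    fun t ht => ?_))
  obtain ⟨a, ha⟩ := exists_norm_eq (EuclideanSpace ℝ (Fin N)) (by positivity : 0 ≤ t + 3)
  have hupper : powerWeightedNorm p κ (fun x => f (x - a)) ≤
      ENNReal.ofReal (t ^ κ) * V ^ (1 / p) := by
    rw [hV_def, ← Measure.addHaar_closedBall_center volume a 3]
    refine powerWeightedNorm_le_ofReal_mul_measure_rpow hp measurableSet_closedBall
      (fun x hx => ?_) fun x hx => ?_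
    · by_contra hfx
      exact hx (mem_closedBall_iff_norm.2 (hsupp _ hfx))
    · have hx_norm : t ≤ ‖x‖ := by linarith [norm_le_norm_add_norm_sub x a, hsupp _ hx]
      calc ‖f (x - a)‖ * ‖x‖ ^ κ ≤ 1 * t ^ κ :=
            mul_le_mul (hle _) (Real.rpow_le_rpow_of_nonpos ht hx_norm hκ.le) (by positivity)
              zero_le_one
        _ = t ^ κ := one_mul _
  have htranslated := h (fun x => f (x - a)) (hf.comp (contDiff_id.sub contDiff_const))
    (hfc.comp_homeomorph (Homeomorph.subRight a))
  rw [powerWeightedNorm_congr_enorm (enorm_FT_comp_sub f a)] at htranslated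
  calc ENNReal.ofReal (t ^ (-κ)) * powerWeightedNorm q (-σ) (FT f)
      ≤ ENNReal.ofReal (t ^ (-κ)) * (C * (ENNReal.ofReal (t ^ κ) * V ^ (1 / p))) := by
        gcongr
        exact htranslated.trans (mul_le_mul_right hupper C)
    _ = ENNReal.ofReal (t ^ (-κ) * t ^ κ) * (C * V ^ (1 / p)) := by
        rw [ENNReal.ofReal_mul (by positivity)]
        ring
    _ = C * V ^ (1 / p) := by
        rw [← Real.rpow_add ht, neg_add_cancel, Real.rpow_zero, ENNReal.ofReal_one, one_mul]

end PittInequality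

/-- classical Pitt inequality with power weights on `ℝ^N`:
for `1 < p ≤ q < ∞`, the inequality holds iff
`κ − σ = N(1 − 1/p − 1/q)`, `0 ≤ σ < N/q` and `0 ≤ κ < N/p'`. -/
theorem stmt17 (N : ℕ) (hN : 1 ≤ N) (p q p' : ℝ) (hp : 1 < p) (hpq : p ≤ q)
    (hp'def : p' = p / (p - 1)) (σ κ : ℝ) :
    (∃ C : ℝ, 0 < C ∧ ∀ f : EuclideanSpace ℝ (Fin N) → ℂ,
      ContDiff ℝ (⊤ : ℕ∞) f → HasCompactSupport f →
      (∫⁻ ξ, (‖FT f ξ‖₊ : ℝ≥0∞) ^ q * ENNReal.ofReal (‖ξ‖ ^ (-(q * σ)))) ^ (1/q)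
        ≤ ENNReal.ofReal C *
          (∫⁻ x, (‖f x‖₊ : ℝ≥0∞) ^ p * ENNReal.ofReal (‖x‖ ^ (p * κ))) ^ (1/p))
    ↔ (κ - σ = N * (1 - 1/p - 1/q) ∧ 0 ≤ σ ∧ σ < N / q ∧ 0 ≤ κ ∧ κ < N / p') := by
  have : NeZero N := ⟨Nat.one_le_iff_ne_zero.1 hN⟩
  have hp₀ : 0 < p := one_pos.trans hp
  have hq₀ : 0 < q := hp₀.trans_le hpq
  have hp' : (N : ℝ) / p' = N * (1 - 1 / p) := by
    rw [hp'def, one_sub_div hp₀.ne', div_div_eq_mul_div, mul_div_assoc]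
  simp only [← mul_neg, ← enorm_eq_nnnorm, hp']
  change (∃ C : ℝ, 0 < C ∧ PittInequality N p q σ κ (ENNReal.ofReal C)) ↔ _
  constructor
  · rintro ⟨C, -, hC⟩
    have hκσ := hC.sub_eq ENNReal.ofReal_ne_top hp₀ hq₀
    have hσN := hC.sigma_lt ENNReal.ofReal_ne_top hp₀ hq₀
    refine ⟨hκσ, hC.sigma_nonneg ENNReal.ofReal_ne_top hp₀ hq₀, hσN,
      hC.kappa_nonneg ENNReal.ofReal_ne_top hp₀ hq₀, ?_⟩
    linear_combination hσN + hκσ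
  · rintro ⟨hκσ, hσ, -, hκ, hκp⟩
    obtain ⟨C, hC, hpitt⟩ := exists_powerWeightedNorm_FT_le hp hpq hσ hκ hκσ hκp
    have hC_le : C ≤ ENNReal.ofReal (C.toReal + 1) :=
      (ENNReal.le_ofReal_iff_toReal_le hC (by positivity)).2 (le_add_of_nonneg_right zero_le_one)
    exact ⟨C.toReal + 1, by positivity, fun f hf hfc => (hpitt f
      (hf.continuous.integrable_of_hasCompactSupport hfc) hf.continuous.measurable).trans
      (mul_le_mul_left hC_le _)⟩
end

section
/- Let N ≥ 1 be an integer and let u be a positive measurable function on ℝ^N belonging to weak-L¹, i.e. sup_{α>0} α · Leb({ξ ∈ ℝ^N : u(ξ) > α}) < ∞. Then for every 1 < p ≤ 2 there is a constant C_p > 0 (depending only on p, N, and u) such that ( ∫_{ℝ^N} |𝓕f(ξ)|^p u(ξ)^{2−p} dξ )^{1/p} ≤ C_p ( ∫_{ℝ^N} |f(x)|^p dx )^{1/p} for all f ∈ C_c^∞(ℝ^N). -/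
/-!
Let `Tf = 𝓕f / u`, regarded as a function on `ℝ^N` with the measure `u² dξ`. Plancherel's theorem
bounds `T` on `L²`. Since `|𝓕f| ≤ ‖f‖₁`, the set `{|Tf| > t}` lies in `{u ≤ ‖f‖₁ / t}`, and the
weak-`L¹` bound on `u` gives this set `u² dξ`-measure at most `C ‖f‖₁ / t`: so `T` is of weak type
`(1, 1)`. The inequality follows by interpolation: at each height `t`, split `f` into its parts
below and above `t` in absolute value, apply the `L²` bound to the former and the `L¹` bound to the
latter, and integrate against `t^(p-1) dt`.
-/

open MeasureTheory Set ENNReal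

open scoped FourierTransform SchwartzMap NNReal

namespace Paley

section PowerIntegrals

lemma lintegral_Ioi_rpow {s a : ℝ} (hs : s < -1) (ha : 0 < a) :
    ∫⁻ t in Ioi a, ENNReal.ofReal (t ^ s) = ENNReal.ofReal (a ^ (s + 1) / (-(s + 1))) := by
  rw [← ofReal_integral_eq_lintegral_ofReal (integrableOn_Ioi_rpow_of_lt hs ha)
      ((ae_restrict_mem measurableSet_Ioi).mono fun t ht => Real.rpow_nonneg (ha.trans ht).le _),
    integral_Ioi_rpow_of_lt hs ha, neg_div, div_neg]

lemma lintegral_Ioc_zero_rpow {s a : ℝ} (hs : -1 < s) (ha : 0 ≤ a) :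
    ∫⁻ t in Ioc 0 a, ENNReal.ofReal (t ^ s) = ENNReal.ofReal (a ^ (s + 1) / (s + 1)) := by
  rw [← ofReal_integral_eq_lintegral_ofReal
      ((intervalIntegrable_iff_integrableOn_Ioc_of_le ha).1
        (intervalIntegral.intervalIntegrable_rpow' hs))
      ((ae_restrict_mem measurableSet_Ioc).mono fun t ht => Real.rpow_nonneg ht.1.le _),
    ← intervalIntegral.integral_of_le ha, integral_rpow (Or.inl hs),
    Real.zero_rpow (by linarith), sub_zero]

variable {E : Type*} [NormedAddCommGroup E] {p q r : ℝ}

lemma enorm_rpow_eq_ofReal {v : E} (hp : 0 ≤ p) : ‖v‖ₑ ^ p = ENNReal.ofReal (‖v‖ ^ p) := by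
  rw [← ofReal_norm, ENNReal.ofReal_rpow_of_nonneg (norm_nonneg v) hp]

lemma enorm_rpow_mul_lintegral_Ioi (hp : 0 < p) (hpr : p < r) (v : E) :
    ‖v‖ₑ ^ r * ∫⁻ t in Ioi ‖v‖, ENNReal.ofReal (t ^ (p - 1 - r)) =
      ENNReal.ofReal (r - p)⁻¹ * ‖v‖ₑ ^ p := by
  have hr : 0 < r := hp.trans hpr
  rcases (norm_nonneg v).eq_or_lt with hv | hv
  · simp [norm_eq_zero.1 hv.symm, hp, hr]
  · rw [lintegral_Ioi_rpow (by linarith) hv, enorm_rpow_eq_ofReal hr.le, enorm_rpow_eq_ofReal hp.le,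
      ← ENNReal.ofReal_mul (by positivity), ← ENNReal.ofReal_mul (inv_nonneg.2 (sub_pos.2 hpr).le)]
    congr 1
    rw [mul_div_assoc', ← Real.rpow_add hv, div_eq_inv_mul]
    ring_nf

lemma enorm_rpow_mul_lintegral_Ioc (hq : 0 ≤ q) (hqp : q < p) (v : E) :
    ‖v‖ₑ ^ q * ∫⁻ t in Ioc 0 ‖v‖, ENNReal.ofReal (t ^ (p - 1 - q)) =
      ENNReal.ofReal (p - q)⁻¹ * ‖v‖ₑ ^ p := by
  have hp : 0 < p := hq.trans_lt hqp
  rcases (norm_nonneg v).eq_or_lt with hv | hv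
  · simp [norm_eq_zero.1 hv.symm, hp]
  · rw [lintegral_Ioc_zero_rpow (by linarith) hv.le, enorm_rpow_eq_ofReal hq,
      enorm_rpow_eq_ofReal hp.le, ← ENNReal.ofReal_mul (by positivity),
      ← ENNReal.ofReal_mul (inv_nonneg.2 (sub_pos.2 hqp).le)]
    congr 1
    rw [mul_div_assoc', ← Real.rpow_add hv, div_eq_inv_mul]
    ring_nf

end PowerIntegrals

section Interpolation

lemma lintegral_mul_setLIntegral_swap {α β X : Type*} [MeasurableSpace α] [MeasurableSpace β]
    [MeasurableSpace X] {κ : Measure α} {μ : Measure X} [SFinite κ] [SFinite μ] {n : X → β}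
    {k : α → ℝ≥0∞} {h : X → ℝ≥0∞} {s : Set (α × β)} (hn : AEMeasurable n μ) (hk : Measurable k)
    (hh : AEMeasurable h μ) (hs : MeasurableSet s) :
    ∫⁻ t, k t * ∫⁻ x in {x | (t, n x) ∈ s}, h x ∂μ ∂κ =
      ∫⁻ x, h x * ∫⁻ t in {t | (t, n x) ∈ s}, k t ∂κ ∂μ := by
  let F : α → X → ℝ≥0∞ := fun t x => s.indicator 1 (t, n x) * (k t * h x)
  have hF : AEMeasurable (Function.uncurry F) (κ.prod μ) :=
    ((measurable_one.indicator hs).comp_aemeasurable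
      (measurable_fst.aemeasurable.prodMk hn.comp_snd)).mul
      ((hk.comp measurable_fst).aemeasurable.mul hh.comp_snd)
  have hleft (t : α) : k t * ∫⁻ x in {x | (t, n x) ∈ s}, h x ∂μ = ∫⁻ x, F t x ∂μ := by
    have hst : NullMeasurableSet {x | (t, n x) ∈ s} μ :=
      (measurable_prodMk_left.comp_aemeasurable hn).nullMeasurableSet_preimage hs
    rw [← lintegral_const_mul'' _ hh.restrict, ← lintegral_indicator₀ hst]
    refine lintegral_congr fun x => ?_
    by_cases hx : (t, n x) ∈ s <;> simp [F, hx]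
  have hright (x : X) : h x * ∫⁻ t in {t | (t, n x) ∈ s}, k t ∂κ = ∫⁻ t, F t x ∂κ := by
    have hsx : MeasurableSet {t | (t, n x) ∈ s} := measurable_prodMk_right hs
    rw [← lintegral_const_mul _ hk, ← lintegral_indicator hsx]
    refine lintegral_congr fun t => ?_
    by_cases hx : (t, n x) ∈ s <;> simp [F, hx, mul_comm]
  simp_rw [hleft, hright]
  exact lintegral_lintegral_swap hF

variable {X Y E : Type*} [MeasurableSpace X] [MeasurableSpace Y] [NormedAddCommGroup E]
  {μ : Measure X} [SFinite μ] {ν : Measure Y} {p q r : ℝ}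

lemma lintegral_mul_setLIntegral_norm_lt {f : X → E} (hf : AEStronglyMeasurable f μ) (hp : 0 < p)
    (hpr : p < r) :
    ∫⁻ t in Ioi 0, ENNReal.ofReal (t ^ (p - 1 - r)) * ∫⁻ x in {x | ‖f x‖ < t}, ‖f x‖ₑ ^ r ∂μ =
      ENNReal.ofReal (r - p)⁻¹ * ∫⁻ x, ‖f x‖ₑ ^ p ∂μ := by
  refine (lintegral_mul_setLIntegral_swap hf.norm.aemeasurable (by fun_prop) (hf.enorm.pow_const r)
    (measurableSet_lt measurable_snd measurable_fst)).trans ?_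
  rw [← lintegral_const_mul'' _ (hf.enorm.pow_const p)]
  refine lintegral_congr fun x => ?_
  change _ * ∫⁻ t in Ioi ‖f x‖, _ ∂_ = _
  rw [← enorm_rpow_mul_lintegral_Ioi hp hpr, Measure.restrict_restrict measurableSet_Ioi,
    inter_eq_left.2 (Ioi_subset_Ioi (norm_nonneg (f x)))]

lemma lintegral_mul_setLIntegral_le_norm {f : X → E} (hf : AEStronglyMeasurable f μ) (hq : 0 ≤ q)
    (hqp : q < p) :
    ∫⁻ t in Ioi 0, ENNReal.ofReal (t ^ (p - 1 - q)) * ∫⁻ x in {x | t ≤ ‖f x‖}, ‖f x‖ₑ ^ q ∂μ =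
      ENNReal.ofReal (p - q)⁻¹ * ∫⁻ x, ‖f x‖ₑ ^ p ∂μ := by
  refine (lintegral_mul_setLIntegral_swap hf.norm.aemeasurable (by fun_prop) (hf.enorm.pow_const q)
    (measurableSet_le measurable_fst measurable_snd)).trans ?_
  rw [← lintegral_const_mul'' _ (hf.enorm.pow_const p)]
  refine lintegral_congr fun x => ?_
  change _ * ∫⁻ t in Iic ‖f x‖, _ ∂_ = _
  rw [← enorm_rpow_mul_lintegral_Ioc hq hqp, Measure.restrict_restrict measurableSet_Iic,
    inter_comm, Ioi_inter_Iic]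

theorem lintegral_rpow_le_of_meas_lt_le {f : X → E} (hf : AEStronglyMeasurable f μ) {g : Y → ℝ}
    (hg : AEMeasurable g ν) (hg0 : 0 ≤ᵐ[ν] g) (hq : 0 ≤ q) (hqp : q < p) (hpr : p < r)
    {A B : ℝ≥0∞}
    (hfg : ∀ t : ℝ, 0 < t → ν {y | t < g y} ≤
      A * ENNReal.ofReal (t ^ (-r)) * (∫⁻ x in {x | ‖f x‖ < t}, ‖f x‖ₑ ^ r ∂μ) +
      B * ENNReal.ofReal (t ^ (-q)) * ∫⁻ x in {x | t ≤ ‖f x‖}, ‖f x‖ₑ ^ q ∂μ) :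
    ∫⁻ y, ENNReal.ofReal (g y ^ p) ∂ν ≤
      ENNReal.ofReal p * (A * ENNReal.ofReal (r - p)⁻¹ + B * ENNReal.ofReal (p - q)⁻¹) *
        ∫⁻ x, ‖f x‖ₑ ^ p ∂μ := by
  have hp : 0 < p := hq.trans_lt hqp
  let L : ℝ → ℝ≥0∞ := fun t => ∫⁻ x in {x | ‖f x‖ < t}, ‖f x‖ₑ ^ r ∂μ
  let H : ℝ → ℝ≥0∞ := fun t => ∫⁻ x in {x | t ≤ ‖f x‖}, ‖f x‖ₑ ^ q ∂μ
  have hL : Measurable L :=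
    Monotone.measurable fun a b hab => lintegral_mono_set fun x (hx : _ < a) => hx.trans_le hab
  have hH : Measurable H :=
    Antitone.measurable fun a b hab => lintegral_mono_set fun x (hx : b ≤ _) => hab.trans hx
  have rpow_mul {t : ℝ} (ht : 0 < t) (s : ℝ) :
      ENNReal.ofReal (t ^ (-s)) * ENNReal.ofReal (t ^ (p - 1)) =
        ENNReal.ofReal (t ^ (p - 1 - s)) := by
    rw [← ENNReal.ofReal_mul (by positivity), ← Real.rpow_add ht, neg_add_eq_sub]
  rw [lintegral_rpow_eq_lintegral_meas_lt_mul ν hg0 hg hp, mul_assoc]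
  gcongr
  calc ∫⁻ t in Ioi 0, ν {y | t < g y} * ENNReal.ofReal (t ^ (p - 1))
      ≤ ∫⁻ t in Ioi 0, (A * (ENNReal.ofReal (t ^ (p - 1 - r)) * L t) +
          B * (ENNReal.ofReal (t ^ (p - 1 - q)) * H t)) := by
        refine setLIntegral_mono' measurableSet_Ioi fun t ht => ?_
        refine (mul_le_mul_left (hfg t ht) _).trans_eq ?_
        rw [← rpow_mul ht r, ← rpow_mul ht q]
        ring
    _ = A * (∫⁻ t in Ioi 0, ENNReal.ofReal (t ^ (p - 1 - r)) * L t) +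
          B * ∫⁻ t in Ioi 0, ENNReal.ofReal (t ^ (p - 1 - q)) * H t := by
        rw [lintegral_add_left (by fun_prop), lintegral_const_mul _ (by fun_prop),
          lintegral_const_mul _ (by fun_prop)]
    _ = _ := by
        rw [lintegral_mul_setLIntegral_norm_lt hf hp hpr,
          lintegral_mul_setLIntegral_le_norm hf hq hqp]
        ring

end Interpolation
section WeakLOne

/-- `WeakL1Bound u A ν` says that the weak-`L¹` quasinorm `sup_{α > 0} α · ν {u > α}` of `u` is at
most `A`. -/
def WeakL1Bound {Y : Type*} [MeasurableSpace Y] (u : Y → ℝ) (A : ℝ≥0∞) (ν : Measure Y) : Prop :=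
  ∀ α : ℝ, 0 < α → ENNReal.ofReal α * ν {y | α < u y} ≤ A

/-- The measure `u² dν`, with respect to which `f ↦ T f / u` is of weak type `(1, 1)` and `(2, 2)`
in the proof of Paley's inequality. -/
noncomputable def paleyMeasure {Y : Type*} [MeasurableSpace Y] (u : Y → ℝ) (ν : Measure Y) :
    Measure Y :=
  ν.withDensity fun y => ENNReal.ofReal (u y ^ 2)

variable {Y F : Type*} [MeasurableSpace Y] {ν : Measure Y} [NormedAddCommGroup F] {u : Y → ℝ}
  {A : ℝ≥0∞} {G : Y → F} {t : ℝ}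

lemma WeakL1Bound.restrict_mul_le (hA : WeakL1Bound u A ν) (hu : AEMeasurable u ν) {q s : ℝ}
    (hq : 1 < q) (ht : 0 < t) :
    ν.restrict {y | u y ≤ s} {y | t < u y} * ENNReal.ofReal (t ^ (q - 1)) ≤
      (Iic s).indicator (fun t => A * ENNReal.ofReal (t ^ (q - 2))) t := by
  rcases le_or_gt t s with hts | hst
  · have hpow : t ^ (q - 1) = t * t ^ (q - 2) := by
      rw [← Real.rpow_one_add' ht.le (by linarith)]
      ring_nf
    rw [indicator_of_mem (mem_Iic.2 hts), hpow, ENNReal.ofReal_mul ht.le, ← mul_assoc,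
      mul_comm (Measure.restrict _ _ _)]
    gcongr
    exact (mul_le_mul_right (Measure.restrict_apply_le _ _) _).trans (hA t ht)
  · have hempty : {y | t < u y} ∩ {y | u y ≤ s} = ∅ :=
      eq_empty_of_forall_notMem fun y hy => (hst.trans hy.1).not_ge hy.2
    simp [Measure.restrict_apply₀' (nullMeasurableSet_le hu aemeasurable_const), hempty]

lemma WeakL1Bound.setLIntegral_rpow_le (hA : WeakL1Bound u A ν) (hu : AEMeasurable u ν)
    (hu0 : 0 ≤ᵐ[ν] u) {q s : ℝ} (hq : 1 < q) (hs : 0 ≤ s) :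
    ∫⁻ y in {y | u y ≤ s}, ENNReal.ofReal (u y ^ q) ∂ν ≤
      ENNReal.ofReal (q / (q - 1) * s ^ (q - 1)) * A := by
  have hq0 : 0 < q := zero_lt_one.trans hq
  calc ∫⁻ y in {y | u y ≤ s}, ENNReal.ofReal (u y ^ q) ∂ν
      = ENNReal.ofReal q * ∫⁻ t in Ioi 0, ν.restrict {y | u y ≤ s} {y | t < u y} *
          ENNReal.ofReal (t ^ (q - 1)) :=
        lintegral_rpow_eq_lintegral_meas_lt_mul _ (ae_restrict_of_ae hu0) hu.restrict hq0
    _ ≤ ENNReal.ofReal q * ∫⁻ t in Ioc 0 s, A * ENNReal.ofReal (t ^ (q - 2)) := by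
        rw [← Ioi_inter_Iic, inter_comm, ← setLIntegral_indicator measurableSet_Iic]
        refine mul_le_mul_right (setLIntegral_mono' measurableSet_Ioi fun t ht => ?_) _
        exact hA.restrict_mul_le hu hq ht
    _ = ENNReal.ofReal (q / (q - 1) * s ^ (q - 1)) * A := by
        rw [lintegral_const_mul _ (by fun_prop), lintegral_Ioc_zero_rpow (by linarith) hs,
          mul_left_comm, ← ENNReal.ofReal_mul hq0.le, mul_comm A]
        ring_nf

lemma pos_and_mul_lt_of_lt_norm_div {v : F} {c : ℝ} (ht : 0 < t) (h : t < ‖v‖ / c) :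
    0 < c ∧ t * c < ‖v‖ := by
  have hc : 0 < c :=
    lt_of_not_ge fun hc => (ht.trans h).not_ge (div_nonpos_of_nonneg_of_nonpos (norm_nonneg v) hc)
  exact ⟨hc, (lt_div_iff₀ hc).1 h⟩

lemma half_lt_norm_div_or {v v₁ v₂ : F} {c : ℝ} (hv : ‖v‖ ≤ ‖v₁‖ + ‖v₂‖) (ht : 0 < t)
    (h : t < ‖v‖ / c) : t / 2 < ‖v₁‖ / c ∨ t / 2 < ‖v₂‖ / c := by
  have hc : 0 < c := (pos_and_mul_lt_of_lt_norm_div ht h).1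
  have hlt : t / 2 + t / 2 < ‖v₁‖ / c + ‖v₂‖ / c := by
    rw [add_halves, ← add_div]
    exact h.trans_le (by gcongr)
  exact lt_or_lt_of_add_lt_add hlt

lemma nullMeasurableSet_lt_norm_div (hu : AEMeasurable u ν) (hG : AEStronglyMeasurable G ν) :
    NullMeasurableSet {y | t < ‖G y‖ / u y} ν :=
  nullMeasurableSet_lt aemeasurable_const (hG.norm.aemeasurable.div hu)

lemma paleyMeasure_lt_norm_div_le_sq (hu : AEMeasurable u ν) (hG : AEStronglyMeasurable G ν)
    (ht : 0 < t) :
    paleyMeasure u ν {y | t < ‖G y‖ / u y} ≤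
      ENNReal.ofReal (t ^ (-2 : ℝ)) * ∫⁻ y, ‖G y‖ₑ ^ (2 : ℝ) ∂ν := by
  have hS := nullMeasurableSet_lt_norm_div (t := t) hu hG
  rw [paleyMeasure, withDensity_apply₀ _ hS, ← lintegral_const_mul'' _ (hG.enorm.pow_const 2)]
  refine (lintegral_mono_ae ((ae_restrict_mem₀ hS).mono fun y hy => ?_)).trans
    (setLIntegral_le_lintegral _ _)
  obtain ⟨hpos, hlt⟩ := pos_and_mul_lt_of_lt_norm_div ht hy
  rw [enorm_rpow_eq_ofReal zero_le_two, ← ENNReal.ofReal_mul (by positivity), Real.rpow_two,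
    Real.rpow_neg ht.le, Real.rpow_two, inv_mul_eq_div]
  gcongr
  rw [le_div_iff₀ (by positivity), ← mul_pow, mul_comm]
  gcongr

lemma WeakL1Bound.paleyMeasure_lt_norm_div_le (hA : WeakL1Bound u A ν) (hu : AEMeasurable u ν)
    (hu0 : 0 ≤ᵐ[ν] u) (hG : AEStronglyMeasurable G ν) {L : ℝ} (hGL : ∀ y, ‖G y‖ ≤ L)
    (hL : 0 ≤ L) (ht : 0 < t) :
    paleyMeasure u ν {y | t < ‖G y‖ / u y} ≤ 2 * A * ENNReal.ofReal t⁻¹ * ENNReal.ofReal L := by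
  have hsub : {y | t < ‖G y‖ / u y} ⊆ {y | u y ≤ L / t} := fun y hy => by
    have hlt := (pos_and_mul_lt_of_lt_norm_div ht hy).2
    exact (le_div_iff₀' ht).2 (hlt.le.trans (hGL y))
  calc paleyMeasure u ν {y | t < ‖G y‖ / u y}
      = ∫⁻ y in {y | t < ‖G y‖ / u y}, ENNReal.ofReal (u y ^ 2) ∂ν :=
        withDensity_apply₀ _ (nullMeasurableSet_lt_norm_div hu hG)
    _ ≤ ∫⁻ y in {y | u y ≤ L / t}, ENNReal.ofReal (u y ^ (2 : ℝ)) ∂ν := by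
        simp_rw [Real.rpow_two]
        exact lintegral_mono_set hsub
    _ ≤ ENNReal.ofReal (2 / (2 - 1) * (L / t) ^ ((2 : ℝ) - 1)) * A :=
        hA.setLIntegral_rpow_le hu hu0 one_lt_two (by positivity)
    _ = 2 * A * ENNReal.ofReal t⁻¹ * ENNReal.ofReal L := by
        have hreal : 2 / (2 - 1) * (L / t) ^ ((2 : ℝ) - 1) = 2 * (t⁻¹ * L) := by
          norm_num [div_eq_inv_mul]
        rw [hreal, ENNReal.ofReal_mul zero_le_two, ENNReal.ofReal_mul (by positivity),
          ENNReal.ofReal_ofNat]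
        ring

lemma lintegral_norm_div_rpow_paleyMeasure (hu : AEMeasurable u ν) (hu0 : 0 ≤ᵐ[ν] u)
    (hG : AEStronglyMeasurable G ν) {p : ℝ} (hp : 0 < p) (hp2 : p < 2) :
    ∫⁻ y, ENNReal.ofReal ((‖G y‖ / u y) ^ p) ∂paleyMeasure u ν =
      ∫⁻ y, ‖G y‖ₑ ^ p * ENNReal.ofReal (u y) ^ (2 - p) ∂ν := by
  rw [paleyMeasure, lintegral_withDensity_eq_lintegral_mul₀ (hu.pow_const 2).ennreal_ofReal
    (g := fun y => ENNReal.ofReal ((‖G y‖ / u y) ^ p))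
    ((hG.norm.aemeasurable.div hu).pow_const p).ennreal_ofReal]
  refine lintegral_congr_ae (hu0.mono fun y (hy : 0 ≤ u y) => ?_)
  simp only [Pi.mul_apply]
  rcases hy.eq_or_lt with hy0 | hpos
  · simp [← hy0, sub_pos.2 hp2]
  · rw [enorm_rpow_eq_ofReal hp.le, ENNReal.ofReal_rpow_of_pos hpos,
      ← ENNReal.ofReal_mul (by positivity), ← ENNReal.ofReal_mul (by positivity),
      Real.div_rpow (norm_nonneg _) hy, Real.rpow_sub hpos, Real.rpow_two, mul_div_left_comm]

end WeakLOne

section HormanderPaley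

/-- A sublinear operator, given by its values on integrable functions, that is bounded from `L¹` to
`L^∞` with constant `1` and from `L²` to `L²` with squared norm at most `B`. -/
structure OneTwoBounded {X Y E F : Type*} [MeasurableSpace X] [MeasurableSpace Y]
    [NormedAddCommGroup E] [NormedAddCommGroup F] (T : (X → E) → Y → F) (B : ℝ≥0∞) (μ : Measure X)
    (ν : Measure Y) : Prop where
  aestronglyMeasurable {f : X → E} : Integrable f μ → AEStronglyMeasurable (T f) ν
  norm_add_le {f g : X → E} (y : Y) : Integrable f μ → Integrable g μ →
    ‖T (f + g) y‖ ≤ ‖T f y‖ + ‖T g y‖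
  norm_le {f : X → E} (y : Y) : Integrable f μ → ‖T f y‖ ≤ ∫ x, ‖f x‖ ∂μ
  lintegral_enorm_sq_le {f : X → E} : Integrable f μ →
    ∫⁻ y, ‖T f y‖ₑ ^ (2 : ℝ) ∂ν ≤ B * ∫⁻ x, ‖f x‖ₑ ^ (2 : ℝ) ∂μ

variable {X Y E F : Type*} [MeasurableSpace X] [MeasurableSpace Y] [NormedAddCommGroup E]
  [NormedAddCommGroup F] {μ : Measure X} {ν : Measure Y} {T : (X → E) → Y → F} {A B : ℝ≥0∞}
  {u : Y → ℝ} {f : X → E} {p : ℝ}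

lemma lintegral_enorm_indicator_rpow {s : Set X} (hs : NullMeasurableSet s μ) (f : X → E)
    (hp : 0 < p) : ∫⁻ x, ‖s.indicator f x‖ₑ ^ p ∂μ = ∫⁻ x in s, ‖f x‖ₑ ^ p ∂μ := by
  rw [← lintegral_indicator₀ hs]
  refine lintegral_congr fun x => ?_
  by_cases hx : x ∈ s <;> simp [hx, hp]

lemma ofReal_half_rpow_neg {t : ℝ} (ht : 0 ≤ t) (s : ℝ) :
    ENNReal.ofReal ((t / 2) ^ (-s)) = ENNReal.ofReal (2 ^ s) * ENNReal.ofReal (t ^ (-s)) := by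
  rw [← ENNReal.ofReal_mul (by positivity), Real.div_rpow ht zero_le_two,
    Real.rpow_neg zero_le_two, div_inv_eq_mul, mul_comm]

lemma OneTwoBounded.paleyMeasure_lt_le_two (hT : OneTwoBounded T B μ ν) (hu : AEMeasurable u ν)
    (hf : Integrable f μ) {t : ℝ} (ht : 0 < t) :
    paleyMeasure u ν {y | t < ‖T f y‖ / u y} ≤
      B * ENNReal.ofReal (t ^ (-2 : ℝ)) * ∫⁻ x, ‖f x‖ₑ ^ (2 : ℝ) ∂μ := by
  rw [mul_comm B, mul_assoc]
  exact (paleyMeasure_lt_norm_div_le_sq hu (hT.aestronglyMeasurable hf) ht).trans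
    (mul_le_mul_right (hT.lintegral_enorm_sq_le hf) _)

lemma OneTwoBounded.paleyMeasure_lt_le_one (hT : OneTwoBounded T B μ ν)
    (hA : WeakL1Bound u A ν) (hu : AEMeasurable u ν) (hu0 : 0 ≤ᵐ[ν] u) (hf : Integrable f μ)
    {t : ℝ} (ht : 0 < t) :
    paleyMeasure u ν {y | t < ‖T f y‖ / u y} ≤
      2 * A * ENNReal.ofReal (t ^ (-1 : ℝ)) * ∫⁻ x, ‖f x‖ₑ ^ (1 : ℝ) ∂μ := by
  simp only [ENNReal.rpow_one, Real.rpow_neg_one, ← ofReal_integral_norm_eq_lintegral_enorm hf]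
  exact hA.paleyMeasure_lt_norm_div_le hu hu0 (hT.aestronglyMeasurable hf)
    (fun y => hT.norm_le y hf) (by positivity) ht

lemma OneTwoBounded.paleyMeasure_lt_le (hT : OneTwoBounded T B μ ν) (hA : WeakL1Bound u A ν)
    (hu : AEMeasurable u ν) (hu0 : 0 ≤ᵐ[ν] u) (hf : Integrable f μ) {t : ℝ} (ht : 0 < t) :
    paleyMeasure u ν {y | t < ‖T f y‖ / u y} ≤
      4 * B * ENNReal.ofReal (t ^ (-2 : ℝ)) * (∫⁻ x in {x | ‖f x‖ < t}, ‖f x‖ₑ ^ (2 : ℝ) ∂μ) +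
      4 * A * ENNReal.ofReal (t ^ (-1 : ℝ)) * ∫⁻ x in {x | t ≤ ‖f x‖}, ‖f x‖ₑ ^ (1 : ℝ) ∂μ := by
  have hlow : NullMeasurableSet {x | ‖f x‖ < t} μ :=
    nullMeasurableSet_lt hf.1.norm.aemeasurable aemeasurable_const
  have hhigh : NullMeasurableSet {x | t ≤ ‖f x‖} μ :=
    nullMeasurableSet_le aemeasurable_const hf.1.norm.aemeasurable
  let f₂ : X → E := {x | ‖f x‖ < t}.indicator f
  let f₁ : X → E := {x | t ≤ ‖f x‖}.indicator f
  have hf₂ : Integrable f₂ μ := hf.indicator₀ hlow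
  have hf₁ : Integrable f₁ μ := hf.indicator₀ hhigh
  have hsplit : f = f₂ + f₁ := by
    ext x
    rcases lt_or_ge ‖f x‖ t with hx | hx <;> simp [f₂, f₁, hx, not_le.2, not_lt.2]
  have hTf (y : Y) : ‖T f y‖ ≤ ‖T f₂ y‖ + ‖T f₁ y‖ :=
    (congrArg (‖T · y‖) hsplit).trans_le (hT.norm_add_le y hf₂ hf₁)
  have hscale₂ : ENNReal.ofReal ((t / 2) ^ (-2 : ℝ)) = 4 * ENNReal.ofReal (t ^ (-2 : ℝ)) := by
    rw [ofReal_half_rpow_neg ht.le]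
    norm_num
  have hscale₁ : ENNReal.ofReal ((t / 2) ^ (-1 : ℝ)) = 2 * ENNReal.ofReal (t ^ (-1 : ℝ)) := by
    simp only [ofReal_half_rpow_neg ht.le, Real.rpow_one, ENNReal.ofReal_ofNat]
  calc paleyMeasure u ν {y | t < ‖T f y‖ / u y}
      ≤ paleyMeasure u ν ({y | t / 2 < ‖T f₂ y‖ / u y} ∪ {y | t / 2 < ‖T f₁ y‖ / u y}) :=
        measure_mono fun y hy => half_lt_norm_div_or (hTf y) ht hy
    _ ≤ _ := measure_union_le _ _
    _ ≤ _ := add_le_add (hT.paleyMeasure_lt_le_two hu hf₂ (half_pos ht))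
        (hT.paleyMeasure_lt_le_one hA hu hu0 hf₁ (half_pos ht))
    _ = _ := by
        rw [hscale₂, hscale₁, lintegral_enorm_indicator_rpow hlow f zero_lt_two,
          lintegral_enorm_indicator_rpow hhigh f zero_lt_one]
        ring

theorem OneTwoBounded.lintegral_enorm_rpow_mul_le [SFinite μ] (hT : OneTwoBounded T B μ ν)
    (hA : WeakL1Bound u A ν) (hu : AEMeasurable u ν) (hu0 : 0 ≤ᵐ[ν] u) (hp1 : 1 < p) (hp2 : p < 2)
    (hf : Integrable f μ) :
    ∫⁻ y, ‖T f y‖ₑ ^ p * ENNReal.ofReal (u y) ^ (2 - p) ∂ν ≤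
      ENNReal.ofReal p * (4 * B * ENNReal.ofReal (2 - p)⁻¹ + 4 * A * ENNReal.ofReal (p - 1)⁻¹) *
        ∫⁻ x, ‖f x‖ₑ ^ p ∂μ := by
  have hTf := hT.aestronglyMeasurable hf
  have hac : paleyMeasure u ν ≪ ν := withDensity_absolutelyContinuous _ _
  have hnonneg : 0 ≤ᵐ[ν] fun y => ‖T f y‖ / u y :=
    hu0.mono fun y hy => div_nonneg (norm_nonneg _) hy
  rw [← lintegral_norm_div_rpow_paleyMeasure hu hu0 hTf (by linarith) hp2]
  exact lintegral_rpow_le_of_meas_lt_le hf.1 ((hTf.norm.aemeasurable.div hu).mono_ac hac)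
    (hac.ae_le hnonneg) zero_le_one hp1 hp2 fun t ht => hT.paleyMeasure_lt_le hA hu hu0 hf ht

theorem OneTwoBounded.exists_lintegral_enorm_rpow_mul_le [SFinite μ] (hT : OneTwoBounded T B μ ν)
    (hB : B ≠ ∞) (hA : WeakL1Bound u A ν) (hA' : A ≠ ∞) (hu : AEMeasurable u ν)
    (hu0 : 0 ≤ᵐ[ν] u) (hp1 : 1 < p) (hp2 : p ≤ 2) :
    ∃ K : ℝ≥0, ∀ f : X → E, Integrable f μ →
      ∫⁻ y, ‖T f y‖ₑ ^ p * ENNReal.ofReal (u y) ^ (2 - p) ∂ν ≤ K * ∫⁻ x, ‖f x‖ₑ ^ p ∂μ := by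
  rcases hp2.eq_or_lt with rfl | hp2
  · lift B to ℝ≥0 using hB
    exact ⟨B, fun f hf => by simpa using hT.lintegral_enorm_sq_le hf⟩
  · let K := ENNReal.ofReal p *
      (4 * B * ENNReal.ofReal (2 - p)⁻¹ + 4 * A * ENNReal.ofReal (p - 1)⁻¹)
    have hK : K ≠ ∞ := by finiteness
    refine ⟨K.toNNReal, fun f hf => ?_⟩
    rw [ENNReal.coe_toNNReal hK]
    exact hT.lintegral_enorm_rpow_mul_le hA hu hu0 hp1 hp2 hf

end HormanderPaley

section Plancherel

lemma lintegral_comp_smul {V : Type*} [NormedAddCommGroup V] [NormedSpace ℝ V]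
    [FiniteDimensional ℝ V] [MeasurableSpace V] [BorelSpace V] (μ : Measure V) [μ.IsAddHaarMeasure]
    {g : V → ℝ≥0∞} (hg : Measurable g) {c : ℝ} (hc : c ≠ 0) :
    ∫⁻ x, g (c • x) ∂μ = ENNReal.ofReal |(c ^ Module.finrank ℝ V)⁻¹| * ∫⁻ x, g x ∂μ := by
  rw [← lintegral_map hg (measurable_const_smul c), Measure.map_addHaar_smul μ hc,
    lintegral_smul_measure, smul_eq_mul]

variable {V F : Type*} [NormedAddCommGroup V] [InnerProductSpace ℝ V] [FiniteDimensional ℝ V]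
  [MeasurableSpace V] [BorelSpace V] [NormedAddCommGroup F] [InnerProductSpace ℂ F]

lemma continuous_fourier_of_integrable {f : V → F} (hf : Integrable f) : Continuous (𝓕 f) :=
  VectorFourier.fourierIntegral_continuous Real.continuous_fourierChar
    (innerSL ℝ).continuous₂ hf

variable [CompleteSpace F]

lemma fourier_toLp_two_ae_eq {f : V → F} (hf : Integrable f) (hf2 : MemLp f 2) :
    (𝓕 (hf2.toLp f) : Lp F 2 (volume : Measure V)) =ᵐ[volume] 𝓕 f := by
  -- Against a test function `g`, both sides integrate to `∫ 𝓕 g • f`: for the `L²` transform by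
  -- duality with Schwartz functions, for the integral by Fubini.
  refine ae_eq_of_integral_contDiff_smul_eq
    ((Lp.memLp _).locallyIntegrable one_le_two)
    (continuous_fourier_of_integrable hf).locallyIntegrable fun g hg hgc => ?_
  have hgc' : HasCompactSupport (Complex.ofRealCLM ∘ g) := hgc.comp_left rfl
  let φ : 𝓢(V, ℂ) := hgc'.toSchwartzMap (Complex.ofRealCLM.contDiff.comp hg)
  calc ∫ ξ, g ξ • (𝓕 (hf2.toLp f) : Lp F 2 (volume : Measure V)) ξ
      = Lp.toTemperedDistribution (𝓕 (hf2.toLp f) : Lp F 2 (volume : Measure V)) φ := by simp [φ]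
    _ = Lp.toTemperedDistribution (hf2.toLp f) (𝓕 φ) := by
        rw [← Lp.fourier_toTemperedDistribution_eq, TemperedDistribution.fourier_apply]
    _ = ∫ x, 𝓕 (φ : V → ℂ) x • f x := by
        rw [Lp.toTemperedDistribution_apply, ← SchwartzMap.fourier_coe]
        exact integral_congr_ae (hf2.coeFn_toLp.mono fun x hx => by simp only [hx])
    _ = ∫ ξ, φ ξ • 𝓕 f ξ := by
        have h := VectorFourier.integral_fourierIntegral_smul_eq_flip (L := innerₗ V)
          Real.continuous_fourierChar continuous_inner (φ.integrable (μ := volume)) hf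
        rw [flip_innerₗ] at h
        exact h
    _ = ∫ ξ, g ξ • 𝓕 f ξ := by simp [φ]

theorem eLpNorm_fourier_eq {f : V → F} (hf : Integrable f) (hf2 : MemLp f 2) :
    eLpNorm (𝓕 f) 2 volume = eLpNorm f 2 volume := by
  rw [← eLpNorm_congr_ae (fourier_toLp_two_ae_eq hf hf2), ← Lp.enorm_def, ← ofReal_norm,
    Lp.norm_fourier_eq, ofReal_norm, Lp.enorm_toLp]

theorem lintegral_enorm_fourier_sq_le {f : V → F} (hf : Integrable f) :
    ∫⁻ ξ, ‖𝓕 f ξ‖ₑ ^ (2 : ℝ) ≤ ∫⁻ x, ‖f x‖ₑ ^ (2 : ℝ) := by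
  have sq_eLpNorm (h : V → F) : ∫⁻ x, ‖h x‖ₑ ^ (2 : ℝ) = eLpNorm h 2 volume ^ (2 : ℝ) :=
    (eLpNorm_nnreal_pow_eq_lintegral (p := 2) two_ne_zero).symm
  rw [sq_eLpNorm, sq_eLpNorm]
  by_cases hf2 : eLpNorm f 2 volume = ∞
  · simp [hf2]
  · rw [eLpNorm_fourier_eq hf ⟨hf.1, lt_top_iff_ne_top.2 hf2⟩]

end Plancherel

section FT

variable {N : ℕ} {f g : EuclideanSpace ℝ (Fin N) → ℂ}

lemma FT_eq_fourier (f : EuclideanSpace ℝ (Fin N) → ℂ) (ξ : EuclideanSpace ℝ (Fin N)) :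
    FT f ξ = 𝓕 f ((2 * Real.pi)⁻¹ • ξ) := by
  rw [FT, Real.fourier_eq']
  congr! 2 with x
  rw [smul_eq_mul, mul_comm, inner_smul_right, real_inner_comm]
  push_cast
  field_simp

lemma continuous_FT (hf : Integrable f) : Continuous (FT f) := by
  rw [funext (FT_eq_fourier f)]
  exact (continuous_fourier_of_integrable hf).comp (continuous_const_smul _)

lemma FT_add (hf : Integrable f) (hg : Integrable g) (ξ : EuclideanSpace ℝ (Fin N)) :
    FT (f + g) ξ = FT f ξ + FT g ξ := by
  have h := congrFun (VectorFourier.fourierIntegral_add (L := innerₗ (EuclideanSpace ℝ (Fin N)))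
    Real.continuous_fourierChar continuous_inner hf hg) ((2 * Real.pi)⁻¹ • ξ)
  simp only [FT_eq_fourier]
  exact h

lemma norm_FT_le (f : EuclideanSpace ℝ (Fin N) → ℂ) (ξ : EuclideanSpace ℝ (Fin N)) :
    ‖FT f ξ‖ ≤ ∫ x, ‖f x‖ :=
  (norm_integral_le_integral_norm _).trans_eq <| by simp [Complex.norm_exp]

theorem lintegral_enorm_FT_sq_le (hf : Integrable f) :
    ∫⁻ ξ, ‖FT f ξ‖ₑ ^ (2 : ℝ) ≤ ENNReal.ofReal ((2 * Real.pi) ^ N) * ∫⁻ x, ‖f x‖ₑ ^ (2 : ℝ) := by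
  have hmeas : Measurable fun ξ => ‖𝓕 f ξ‖ₑ ^ (2 : ℝ) :=
    (continuous_fourier_of_integrable hf).measurable.enorm.pow_const 2
  calc ∫⁻ ξ, ‖FT f ξ‖ₑ ^ (2 : ℝ)
      = ENNReal.ofReal ((2 * Real.pi) ^ N) * ∫⁻ ξ, ‖𝓕 f ξ‖ₑ ^ (2 : ℝ) := by
        simp_rw [FT_eq_fourier]
        rw [lintegral_comp_smul volume hmeas (by positivity), finrank_euclideanSpace_fin, inv_pow,
          inv_inv, abs_of_pos (by positivity)]
    _ ≤ _ := mul_le_mul_right (lintegral_enorm_fourier_sq_le hf) _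

theorem oneTwoBounded_FT (N : ℕ) :
    OneTwoBounded (FT (N := N)) (ENNReal.ofReal ((2 * Real.pi) ^ N)) volume volume where
  aestronglyMeasurable hf := (continuous_FT hf).aestronglyMeasurable
  norm_add_le ξ hf hg := (congrArg norm (FT_add hf hg ξ)).trans_le (norm_add_le _ _)
  norm_le ξ _ := norm_FT_le _ ξ
  lintegral_enorm_sq_le := lintegral_enorm_FT_sq_le

end FT

end Paley

theorem stmt18_general {N : ℕ} {u : EuclideanSpace ℝ (Fin N) → ℝ} (hu : AEMeasurable u)
    (hu0 : 0 ≤ᵐ[volume] u)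
    (huw : ∃ A : ℝ, ∀ α : ℝ, 0 < α →
      ENNReal.ofReal α * volume {ξ : EuclideanSpace ℝ (Fin N) | α < u ξ} ≤ ENNReal.ofReal A)
    {p : ℝ} (hp1 : 1 < p) (hp2 : p ≤ 2) :
    ∃ C : ℝ, 0 < C ∧ ∀ f : EuclideanSpace ℝ (Fin N) → ℂ, Integrable f →
      (∫⁻ ξ, (‖FT f ξ‖₊ : ℝ≥0∞) ^ p * ENNReal.ofReal (u ξ) ^ (2 - p)) ^ (1/p)
        ≤ ENNReal.ofReal C * (∫⁻ x, (‖f x‖₊ : ℝ≥0∞) ^ p) ^ (1/p) := by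
  obtain ⟨A, hA⟩ := huw
  obtain ⟨K, hK⟩ := (Paley.oneTwoBounded_FT N).exists_lintegral_enorm_rpow_mul_le
    ENNReal.ofReal_ne_top hA ENNReal.ofReal_ne_top hu hu0 hp1 hp2
  have hp : 0 ≤ 1 / p := by positivity
  have hK_le : (K : ℝ≥0∞) ≤ ENNReal.ofReal (K + 1) := by
    rw [← ENNReal.ofReal_coe_nnreal]
    exact ENNReal.ofReal_le_ofReal (by linarith)
  refine ⟨(K + 1 : ℝ) ^ (1 / p), by positivity, fun f hf => ?_⟩
  rw [← ENNReal.ofReal_rpow_of_nonneg (by positivity) hp, ← ENNReal.mul_rpow_of_nonneg _ _ hp]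
  gcongr
  exact (hK f hf).trans (mul_le_mul_left hK_le _)

/-- Hörmander's version of Paley's inequality on `ℝ^N`: if `u > 0` is
in weak-`L¹`, then for `1 < p ≤ 2`,
`(∫ |𝓕f|^p u^{2−p})^{1/p} ≤ C_p ‖f‖_{L^p}`. -/
theorem stmt18 (N : ℕ) (hN : 1 ≤ N)
    (u : EuclideanSpace ℝ (Fin N) → ℝ) (hu : Measurable u) (hu0 : ∀ ξ, 0 < u ξ)
    (huw : ∃ A : ℝ, ∀ α : ℝ, 0 < α →
      ENNReal.ofReal α * volume {ξ : EuclideanSpace ℝ (Fin N) | α < u ξ} ≤ ENNReal.ofReal A) :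
    ∀ p : ℝ, 1 < p → p ≤ 2 →
      ∃ C : ℝ, 0 < C ∧ ∀ f : EuclideanSpace ℝ (Fin N) → ℂ,
        ContDiff ℝ (⊤ : ℕ∞) f → HasCompactSupport f →
        (∫⁻ ξ, (‖FT f ξ‖₊ : ℝ≥0∞) ^ p * ENNReal.ofReal (u ξ) ^ (2 - p)) ^ (1/p)
          ≤ ENNReal.ofReal C * (∫⁻ x, (‖f x‖₊ : ℝ≥0∞) ^ p) ^ (1/p) := by
  intro p hp1 hp2
  obtain ⟨C, hC, hFT⟩ :=
    stmt18_general hu.aemeasurable (ae_of_all _ fun ξ => (hu0 ξ).le) huw hp1 hp2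
  exact ⟨C, hC, fun f hf hc => hFT f (hf.continuous.integrable_of_hasCompactSupport hc)⟩
end
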